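/- arXiv:1404.4786 — 5 statements merged into one kernel-verified Lean document; each statement's English description precedes it below -/
import Mathlib

section
/- Let F be an infinite field, let n ≥ 3 be an integer, and let w₁, w₂, w₃ be nontrivial words. Then every element of SL_n(F) that is not in the center Z(SL_n(F)) is a product g₁g₂g₃ with g₁ ∈ w₁(SL_n(F)), g₂ ∈ w₂(SL_n(F)), and g₃ ∈ w₃(SL_n(F)). -/
/-- The set of `w`-values in the group `G`: the image of the word map `w : G^d → G`. -/
def wordValues {d : ℕ} (w : FreeGroup (Fin d)) (G : Type*) [Group G] : Set G :=
  Set.range fun g : Fin d → G => FreeGroup.lift g w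

section PartA
open Polynomial Matrix

theorem wordValues_map {d : ℕ} {w : FreeGroup (Fin d)} {G H : Type*} [Group G] [Group H]
    (φ : G →* H) {g : G} (hg : g ∈ wordValues w G) : φ g ∈ wordValues w H := by
  obtain ⟨x, rfl⟩ := hg
  refine ⟨fun i => φ (x i), ?_⟩
  have : FreeGroup.lift (fun i => φ (x i)) = φ.comp (FreeGroup.lift x) := by
    ext i; simp
  simp [this]

theorem wordValues_conj {d : ℕ} {w : FreeGroup (Fin d)} {G : Type*} [Group G] (c : FreeGroup (Fin d))
    {g : G} (hg : g ∈ wordValues (c * w * c⁻¹) G) : g ∈ wordValues w G := by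
  obtain ⟨x, rfl⟩ := hg
  have := wordValues_map (MulAut.conj (FreeGroup.lift x c)).toMonoidHom
    (g := FreeGroup.lift x w) (w := w) ⟨x, rfl⟩
  simpa using this

theorem wordValues_conj' {d : ℕ} {w : FreeGroup (Fin d)} {G : Type*} [Group G]
    (c : FreeGroup (Fin d))
    {g : G} (hg : g ∈ wordValues w G) : g ∈ wordValues (c * w * c⁻¹) G :=
  wordValues_conj c⁻¹ (by simpa [mul_assoc] using hg)

variable {F : Type*} [Field F]

/-- flip a letter -/
def flipL {d : ℕ} (l : Fin d × Bool) : Fin d × Bool := (l.1, !l.2)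

/-- column vector -/
def colX {d : ℕ} (z : Fin d × Bool → F) (l : Fin d × Bool) : Fin 2 → F := ![1, z l]

/-- row vector -/
def rowY {d : ℕ} (z : Fin d × Bool → F) (l : Fin d × Bool) : Fin 2 → F :=
  ![- z (flipL l) / (z l - z (flipL l)), 1 / (z l - z (flipL l))]

/-- rank one idempotent -/
def idE {d : ℕ} (z : Fin d × Bool → F) (l : Fin d × Bool) : Matrix (Fin 2) (Fin 2) F :=
  vecMulVec (colX z l) (rowY z l)

theorem flipL_flipL {d : ℕ} (l : Fin d × Bool) : flipL (flipL l) = l := by simp [flipL]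
theorem flipL_ne {d : ℕ} (l : Fin d × Bool) : l ≠ flipL l := by
  intro h
  have := congrArg Prod.snd h
  simp [flipL] at this

variable {d : ℕ} {z : Fin d × Bool → F} (hz : Function.Injective z)
include hz

theorem zsub_ne (l : Fin d × Bool) : z l - z (flipL l) ≠ 0 :=
  sub_ne_zero.2 fun h => flipL_ne l (hz h)

theorem rowY_colX_ne {l l' : Fin d × Bool} (h : l.1 = l'.1 → l.2 = l'.2) :
    rowY z l ⬝ᵥ colX z l' ≠ 0 := by
  have h1 := zsub_ne hz l
  have : rowY z l ⬝ᵥ colX z l' = (z l' - z (flipL l)) / (z l - z (flipL l)) := by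
    simp [rowY, colX, dotProduct, Fin.sum_univ_two]; field_simp; ring
  rw [this]
  refine div_ne_zero (sub_ne_zero.2 fun e => ?_) h1
  have e := hz e
  subst e
  simp [flipL] at h

theorem idE_add (l : Fin d × Bool) : idE z l + idE z (flipL l) = 1 := by
  have h1 := zsub_ne hz l
  have h2 : z (flipL l) - z l ≠ 0 := by rw [← neg_sub]; exact neg_ne_zero.2 h1
  ext i j
  fin_cases i <;> fin_cases j <;>
    simp [idE, vecMulVec, colX, rowY, flipL_flipL] <;> grind

theorem det_lin (l : Fin d × Bool) (a b : F) :
    (a • idE z l + b • idE z (flipL l)).det = a * b := by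
  have h1 := zsub_ne hz l
  have h2 : z (flipL l) - z l ≠ 0 := by rw [← neg_sub]; exact neg_ne_zero.2 h1
  simp [det_fin_two, idE, vecMulVec, colX, rowY, flipL_flipL]
  grind

theorem idE_mul_flip (l : Fin d × Bool) : idE z l * idE z (flipL l) = 0 := by
  have h1 := zsub_ne hz l
  have : rowY z l ⬝ᵥ colX z (flipL l) = 0 := by
    simp [rowY, colX, dotProduct, Fin.sum_univ_two]; field_simp; ring
  simp [idE, vecMulVec_mul_vecMulVec, this]

theorem idE_mul_self (l : Fin d × Bool) : idE z l * idE z l = idE z l := by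
  have := congrArg (idE z l * ·) (idE_add hz l)
  simpa [mul_add, idE_mul_flip hz] using this

theorem prod_idE (l : Fin d × Bool) (L : List (Fin d × Bool)) (h : FreeGroup.IsReduced (l :: L)) :
    ∃ c : F, c ≠ 0 ∧ ((l :: L).map (idE z)).prod =
      c • vecMulVec (colX z l) (rowY z ((l :: L).getLast (by simp))) := by
  induction L generalizing l with
  | nil => exact ⟨1, one_ne_zero, by simp [idE]⟩
  | cons l' L ih =>
    rw [FreeGroup.isReduced_cons_cons] at h
    obtain ⟨c, hc, e⟩ := ih l' h.2
    refine ⟨c * (rowY z l ⬝ᵥ colX z l'), mul_ne_zero hc (rowY_colX_ne hz h.1), ?_⟩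
    rw [List.map_cons, List.prod_cons, e]
    simp [idE, vecMulVec_mul_vecMulVec, smul_smul]

theorem trace_prod_idE (L : List (Fin d × Bool)) (h : FreeGroup.IsCyclicallyReduced L)
    (hL : L ≠ []) : ((L.map (idE z)).prod).trace ≠ 0 := by
  obtain ⟨l, L, rfl⟩ := List.exists_cons_of_ne_nil hL
  obtain ⟨c, hc, e⟩ := prod_idE hz l L h.1
  rw [e, trace_smul, trace_vecMulVec, smul_eq_mul, dotProduct_comm]
  refine mul_ne_zero hc (rowY_colX_ne hz ?_)
  exact h.2 _ (List.getLast_mem_getLast? _) _ (by simp)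

omit hz in
theorem prod_poly (L : List (Fin d × Bool)) : ∃ B : Matrix (Fin 2) (Fin 2) F[X],
    (∀ a : F, B.map (eval a) = (L.map fun l => a • idE z l + idE z (flipL l)).prod) ∧
    (∀ i j, (B i j).natDegree ≤ L.length) ∧
    (∀ i j, (B i j).coeff L.length = (L.map (idE z)).prod i j) := by
  induction L with
  | nil => 
    refine ⟨1, ?_, ?_, ?_⟩
    · intro a; ext i j; fin_cases i <;> fin_cases j <;> simp
    · intro i j; fin_cases i <;> fin_cases j <;> simp
    · intro i j; fin_cases i <;> fin_cases j <;> simp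
  | cons l L ih =>
    obtain ⟨B, h1, h2, h3⟩ := ih
    have key : ∀ i j, ((((X : F[X]) • (idE z l).map C + (idE z (flipL l)).map C) * B) i j) =
      ∑ k, (X * (C (idE z l i k) * B k j) + C (idE z (flipL l) i k) * B k j) := by
      intro i j
      simp [mul_apply, add_mul, mul_assoc]
      ring
    refine ⟨((X : F[X]) • (idE z l).map C + (idE z (flipL l)).map C) * B, ?_, ?_, ?_⟩
    · intro a
      rw [List.map_cons, List.prod_cons, ← h1 a]
      ext i j
      rw [map_apply, key]
      simp [mul_apply, add_mul, mul_assoc]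
    · intro i j
      rw [key]
      refine natDegree_sum_le_of_forall_le _ _ fun k _ => ?_
      refine natDegree_add_le_of_degree_le ?_ ?_
      · refine natDegree_mul_le.trans ?_
        have := natDegree_C_mul_le (idE z l i k) (B k j)
        have := h2 k j
        have := natDegree_X_le (R := F)
        simp only [List.length_cons]
        lia
      · refine (natDegree_C_mul_le _ _).trans ((h2 k j).trans (by simp))
    · intro i j
      rw [key]
      rw [finsetSum_coeff, List.map_cons, List.prod_cons, mul_apply]
      refine Finset.sum_congr rfl fun k _ => ?_
      have : (B k j).coeff (L.length + 1) = 0 :=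
        coeff_eq_zero_of_natDegree_lt (Nat.lt_succ_of_le (h2 k j))
      simp [coeff_X_mul, this, h3]


/-- the generator attached to a letter -/
noncomputable def genG (hz : Function.Injective z) {a : F} (ha : a ≠ 0) (l : Fin d × Bool) :
    SpecialLinearGroup (Fin 2) F :=
  ⟨a • idE z l + a⁻¹ • idE z (flipL l), by rw [det_lin hz, mul_inv_cancel₀ ha]⟩

theorem genG_flip {a : F} (ha : a ≠ 0) (l : Fin d × Bool) :
    genG hz ha (flipL l) = (genG hz ha l)⁻¹ := by
  rw [eq_inv_iff_mul_eq_one]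
  apply Subtype.ext
  have h2 := idE_mul_flip hz (flipL l)
  rw [flipL_flipL] at h2
  have h3 := idE_add hz l

  change (a • idE z (flipL l) + a⁻¹ • idE z (flipL (flipL l))) *
    (a • idE z l + a⁻¹ • idE z (flipL l)) = 1
  simp [flipL_flipL, mul_add, add_mul, idE_mul_self hz, idE_mul_flip hz, h2, smul_smul, ha, h3]

theorem lift_genG {a : F} (ha : a ≠ 0) (L : List (Fin d × Bool)) :
    a ^ L.length • (FreeGroup.lift (fun i => genG hz ha (i, true)) (FreeGroup.mk L)).1 =
      (L.map fun l => a ^ 2 • idE z l + idE z (flipL l)).prod := by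
  rw [FreeGroup.lift_mk]
  have : (fun x : Fin d × Bool => cond x.2 (genG hz ha (x.1, true)) (genG hz ha (x.1, true))⁻¹) =
      genG hz ha := by
    funext ⟨i, b⟩
    cases b
    · simp [← genG_flip, flipL]
    · simp
  rw [this]
  induction L with
  | nil => simp
  | cons l L ih =>
    rw [List.map_cons, List.prod_cons, List.map_cons, List.prod_cons, ← ih,
      List.length_cons, pow_succ']
    have e : a ^ 2 • idE z l + idE z (flipL l) = a • (genG hz ha l).1 := by
      simp [genG, smul_smul, pow_two, ha]
    rw [e]
    simp [smul_smul, mul_comm]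

omit hz in
theorem sl2_trace [Infinite F] {w : FreeGroup (Fin d)} (hw : w ≠ 1) (S : Finset F) :
    ∃ W ∈ wordValues w (SpecialLinearGroup (Fin 2) F), W.1.trace ∉ S := by
  classical
  obtain ⟨z, hz⟩ : ∃ z : Fin d × Bool → F, Function.Injective z := by
    obtain ⟨s, hs⟩ := Infinite.exists_subset_card_eq F (Fintype.card (Fin d × Bool))
    obtain ⟨f⟩ := (Function.Embedding.nonempty_of_card_le (α := Fin d × Bool)
      (β := s) (by rw [Fintype.card_coe, hs]))
    exact ⟨fun l => (f l).1, fun x y h => f.injective (Subtype.ext h)⟩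
  set L := FreeGroup.reduceCyclically w.toWord with hL
  set c := FreeGroup.mk (FreeGroup.reduceCyclically.conjugator w.toWord) with hc
  have hw' : w = c * FreeGroup.mk L * c⁻¹ := by
    rw [hc, FreeGroup.inv_mk, FreeGroup.mul_mk, FreeGroup.mul_mk,
      FreeGroup.reduceCyclically.conj_conjugator_reduceCyclically, FreeGroup.mk_toWord]
  have hLne : L ≠ [] := by
    intro h
    apply hw
    rw [hw', h, ← FreeGroup.one_eq_mk]
    simp
  have hred : FreeGroup.IsCyclicallyReduced L :=
    FreeGroup.reduceCyclically.isCyclicallyReduced FreeGroup.isReduced_toWord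
  obtain ⟨B, h1, h2, h3⟩ := prod_poly (z := z) L
  set N := L.length with hN
  have hNpos : 0 < N := List.length_pos_of_ne_nil hLne
  have hp : (B.trace).coeff N ≠ 0 := by
    have := trace_prod_idE hz L hred hLne
    simpa [trace, h3] using this
  let q : F → F[X] := fun s => expand F 2 B.trace - C s * X ^ N
  have hq : ∀ s, q s ≠ 0 := by
    intro s h
    have := congrArg (fun r => coeff r (N * 2)) h
    simp only [q, coeff_sub, coeff_expand_mul (p := 2) (by norm_num), coeff_C_mul, coeff_X_pow,
      coeff_zero] at this
    rw [if_neg (by lia)] at this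
    simp at this
    exact hp (by simpa [trace] using this)
  have hQ : X * ∏ s ∈ S, q s ≠ 0 := mul_ne_zero X_ne_zero (Finset.prod_ne_zero_iff.2 fun s _ => hq s)
  obtain ⟨a, ha⟩ := Infinite.exists_notMem_finset (X * ∏ s ∈ S, q s).roots.toFinset
  have ha' : ¬ (X * ∏ s ∈ S, q s).eval a = 0 := by
    intro h; apply ha; simp only [Multiset.mem_toFinset, mem_roots hQ]; exact h
  rw [eval_mul, eval_X, eval_prod, mul_eq_zero, not_or, Finset.prod_eq_zero_iff] at ha'
  obtain ⟨ha0, haS⟩ := ha'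
  refine ⟨FreeGroup.lift (fun i => genG hz ha0 (i, true)) (FreeGroup.mk L), ?_, ?_⟩
  · rw [hw']; exact wordValues_conj' c ⟨_, rfl⟩
  · intro hS
    apply haS
    refine ⟨_, hS, ?_⟩
    have e := congrArg trace (lift_genG hz ha0 L)
    rw [← h1, trace_smul] at e
    simp only [q, eval_sub, expand_eval, eval_mul, eval_C, eval_pow, eval_X]
    rw [sub_eq_zero, mul_comm]
    simp only [smul_eq_mul] at e
    rw [hN, e]
    simp [trace]

end PartA

section PartB
open Polynomial Matrix

theorem wordValues_prod {d : ℕ} {w : FreeGroup (Fin d)} {G H : Type*} [Group G] [Group H]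
    {g : G} {h : H} (hg : g ∈ wordValues w G) (hh : h ∈ wordValues w H) :
    (g, h) ∈ wordValues w (G × H) := by
  obtain ⟨x, rfl⟩ := hg
  obtain ⟨y, rfl⟩ := hh
  refine ⟨fun i => (x i, y i), ?_⟩
  have : FreeGroup.lift (fun i => (x i, y i)) = (FreeGroup.lift x).prod (FreeGroup.lift y) := by
    ext i <;> simp
  simp [this]

variable {F : Type*} [Field F]

/-- cyclic matrices -/
def CycM {ι : Type*} [Fintype ι] [DecidableEq ι] (A : Matrix ι ι F) : Prop :=
  ∃ v : ι → F, ∀ x, ∃ p : F[X], (aeval A p) *ᵥ v = x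

theorem aeval_fromBlocks {m n : Type*} [Fintype m] [DecidableEq m] [Fintype n] [DecidableEq n]
    (A : Matrix m m F) (B : Matrix n n F) (p : F[X]) :
    aeval (fromBlocks A 0 0 B) p = fromBlocks (aeval A p) 0 0 (aeval B p) := by
  induction p using Polynomial.induction_on' with
  | add p q hp hq => simp [hp, hq, fromBlocks_add]
  | monomial k a =>
    have : (fromBlocks A 0 0 B) ^ k = fromBlocks (A ^ k) 0 0 (B ^ k) := by
      induction k with
      | zero => simp
      | succ k ih => simp [pow_succ, ih, fromBlocks_multiply]
    simp [aeval_monomial, this, Algebra.algebraMap_eq_smul_one, fromBlocks_smul]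

theorem CycM.blocks {m n : Type*} [Fintype m] [DecidableEq m] [Fintype n] [DecidableEq n]
    {A : Matrix m m F} {B : Matrix n n F} (hA : CycM A) (hB : CycM B)
    (h : IsCoprime A.charpoly B.charpoly) : CycM (fromBlocks A 0 0 B) := by
  obtain ⟨v, hv⟩ := hA
  obtain ⟨u, hu⟩ := hB
  obtain ⟨a, b, hab⟩ := h
  refine ⟨Sum.elim v u, fun x => ?_⟩
  obtain ⟨p, hp⟩ := hv (x ∘ Sum.inl)
  obtain ⟨q, hq⟩ := hu (x ∘ Sum.inr)
  refine ⟨p * (b * B.charpoly) + q * (a * A.charpoly), ?_⟩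
  have h1 : aeval A (b * B.charpoly) = 1 := by
    have := congrArg (aeval A) hab
    simpa [aeval_self_charpoly] using this
  have h2 : aeval B (a * A.charpoly) = 1 := by
    have := congrArg (aeval B) hab
    simpa [aeval_self_charpoly] using this
  rw [aeval_fromBlocks, fromBlocks_mulVec]
  rw [map_add, map_add, map_mul (aeval A) p, h1, map_mul (aeval B) q (a * A.charpoly), h2]
  simp only [map_mul, aeval_self_charpoly, mul_zero, add_zero, zero_add, mul_one]
  rw [← Sum.elim_comp_inl_inr x]
  congr 1
  · simp [hp]
  · simp [hq]

theorem CycM.reindex {m n : Type*} [Fintype m] [DecidableEq m] [Fintype n] [DecidableEq n]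
    (e : m ≃ n) {A : Matrix m m F} (hA : CycM A) : CycM (Matrix.reindex e e A) := by
  obtain ⟨v, hv⟩ := hA
  refine ⟨v ∘ e.symm, fun x => ?_⟩
  obtain ⟨p, hp⟩ := hv (x ∘ e)
  refine ⟨p, ?_⟩
  have : aeval (Matrix.reindex e e A) p = Matrix.reindex e e (aeval A p) := by
    have := aeval_algHom_apply (Matrix.reindexAlgEquiv F F e).toAlgHom A p
    simpa using this
  rw [this]
  ext i
  have := congrFun hp (e.symm i)
  simp only [Function.comp, Equiv.apply_symm_apply] at this
  rw [← this]
  simp only [mulVec, dotProduct, reindex_apply, submatrix_apply, Function.comp]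
  exact Equiv.sum_comp e.symm (fun j => aeval A p (e.symm i) j * v j)

/-- block sum -/
noncomputable def blockHom (n : ℕ) : SpecialLinearGroup (Fin n) F × SpecialLinearGroup (Fin 2) F →*
    SpecialLinearGroup (Fin (n + 2)) F where
  toFun x := ⟨Matrix.reindex finSumFinEquiv finSumFinEquiv (fromBlocks x.1.1 0 0 x.2.1), by
    rw [det_reindex_self, det_fromBlocks_zero₂₁, x.1.2, x.2.2, one_mul]⟩
  map_one' := by
    apply Subtype.ext
    simp
  map_mul' x y := by
    apply Subtype.ext
    change Matrix.reindex _ _ (fromBlocks (x.1.1 * y.1.1) 0 0 (x.2.1 * y.2.1)) =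
      Matrix.reindex _ _ (fromBlocks x.1.1 0 0 x.2.1) *
      Matrix.reindex _ _ (fromBlocks y.1.1 0 0 y.2.1)
    simp only [reindex_apply, submatrix_mul_equiv]
    simp [fromBlocks_multiply]

theorem CycM_two {A : Matrix (Fin 2) (Fin 2) F} (h : A.trace ^ 2 ≠ 4 * A.det) : CycM A := by
  have key : ∃ v : Fin 2 → F, v 0 * (A *ᵥ v) 1 - v 1 * (A *ᵥ v) 0 ≠ 0 := by
    by_contra! hc
    have h1 := hc ![1, 0]
    have h2 := hc ![0, 1]
    have h3 := hc ![1, 1]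
    simp [mulVec, dotProduct, Fin.sum_univ_two] at h1 h2 h3
    apply h
    rw [det_fin_two, trace_fin_two, h1, h2]
    rw [h1, h2] at h3
    have : A 0 0 = A 1 1 := by linear_combination -h3
    rw [this]; ring
  obtain ⟨v, hv⟩ := key
  refine ⟨v, fun x => ?_⟩
  set D := v 0 * (A *ᵥ v) 1 - v 1 * (A *ᵥ v) 0
  refine ⟨C ((x 0 * (A *ᵥ v) 1 - x 1 * (A *ᵥ v) 0) / D) + C ((v 0 * x 1 - v 1 * x 0) / D) * X, ?_⟩
  simp only [map_add, map_mul, aeval_C, aeval_X, Algebra.algebraMap_eq_smul_one, add_mulVec,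
    smul_mulVec, one_mulVec, smul_mul_assoc, one_mul]
  ext i
  fin_cases i
  · simp only [Fin.zero_eta, Pi.add_apply, Pi.smul_apply, smul_eq_mul]
    field_simp
    simp only [D]; ring
  · simp only [Fin.mk_one, Pi.add_apply, Pi.smul_apply, smul_eq_mul]
    field_simp
    simp only [D]; ring

theorem sl2_value [Infinite F] {d : ℕ} {w : FreeGroup (Fin d)} (hw : w ≠ 1) (p : F[X]) (hp : p ≠ 0) :
    ∃ W ∈ wordValues w (SpecialLinearGroup (Fin 2) F), CycM W.1 ∧ W.1.charpoly.eval 1 ≠ 0 ∧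
      IsCoprime W.1.charpoly p := by
  classical
  let K := AlgebraicClosure F
  let R : Finset K := ((p.map (algebraMap F K)).roots.toFinset).image fun r => r + r⁻¹
  have hinj := (algebraMap F K).injective
  obtain ⟨W, hW, hS⟩ := sl2_trace hw ({2, -2} ∪ R.preimage (algebraMap F K) hinj.injOn)
  simp only [Finset.mem_union, Finset.mem_insert, Finset.mem_singleton, Finset.mem_preimage,
    not_or] at hS
  have hch : W.1.charpoly = X ^ 2 - C W.1.trace * X + C 1 := by
    rw [charpoly_fin_two, W.2]
  refine ⟨W, hW, CycM_two ?_, ?_, ?_⟩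
  · rw [W.2]
    intro h
    have : (W.1.trace - 2) * (W.1.trace + 2) = 0 := by linear_combination h
    rcases mul_eq_zero.1 this with h | h
    · exact hS.1.1 (sub_eq_zero.1 h)
    · exact hS.1.2 (eq_neg_of_add_eq_zero_left h)
  · rw [hch]
    intro h
    simp at h
    apply hS.1.1
    linear_combination -h
  · rw [isCoprime_iff_aeval_ne_zero_of_isAlgClosed F K]
    intro r
    by_contra! hr
    obtain ⟨h1, h2⟩ := hr
    apply hS.2
    simp only [R, Finset.mem_image, Multiset.mem_toFinset]
    refine ⟨r, ?_, ?_⟩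
    · rw [mem_roots (by simpa [Polynomial.map_eq_zero] using hp)]
      simpa [IsRoot, eval_map_algebraMap] using h2
    · rw [hch] at h1
      simp at h1
      have hr0 : r ≠ 0 := by rintro rfl; simp at h1
      apply mul_left_cancel₀ hr0
      rw [mul_add, mul_inv_cancel₀ hr0]
      linear_combination h1

theorem cyc_value [Infinite F] {d : ℕ} {w : FreeGroup (Fin d)} (hw : w ≠ 1) (n : ℕ) :
    ∀ p : F[X], p.eval 1 ≠ 0 → ∃ W ∈ wordValues w (SpecialLinearGroup (Fin n) F), CycM W.1 ∧
      IsCoprime W.1.charpoly p := by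
  induction n using Nat.twoStepInduction with
  | zero =>
    intro p _
    refine ⟨1, ⟨1, Subsingleton.elim _ _⟩, ⟨0, fun x => ⟨0, Subsingleton.elim _ _⟩⟩, ?_⟩
    simp [charpoly, isCoprime_one_left]
  | one =>
    intro p hp
    refine ⟨1, ⟨1, Subsingleton.elim _ _⟩, ⟨1, fun x => ⟨C (x 0), ?_⟩⟩, ?_⟩
    · ext i
      fin_cases i
      simp [Algebra.algebraMap_eq_smul_one, smul_mulVec]
    · change IsCoprime (1 : Matrix (Fin 1) (Fin 1) F).charpoly p
      rw [charpoly_one]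
      simp only [Fintype.card_fin, pow_one]
      rw [← C_1, (irreducible_X_sub_C (1 : F)).coprime_iff_not_dvd, dvd_iff_isRoot]
      exact hp
  | more n ih _ =>
    intro p hp
    have hp0 : p ≠ 0 := by rintro rfl; simp at hp
    obtain ⟨B, hB, cB, eB, pB⟩ := sl2_value hw p hp0
    obtain ⟨A, hA, cA, pA⟩ := ih (p * B.1.charpoly) (by rw [eval_mul]; exact mul_ne_zero hp eB)
    refine ⟨blockHom n (A, B), wordValues_map _ (wordValues_prod hA hB), ?_, ?_⟩
    · exact CycM.reindex _ (CycM.blocks cA cB pA.of_mul_right_right)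
    · have : (blockHom n (A, B)).1.charpoly = A.1.charpoly * B.1.charpoly := by
        change (Matrix.reindex _ _ (fromBlocks A.1 0 0 B.1)).charpoly = _
        rw [charpoly_reindex, charpoly_fromBlocks_zero₁₂]
      rw [this]
      exact pA.of_mul_right_left.mul_left pB

end PartB

section PartC
open Polynomial Module

variable {F : Type*} [Field F]

theorem exists_noneig [Infinite F] {V : Type*} [AddCommGroup V] [Module F V]
    (A : V →ₗ[F] V) (β : V →ₗ[F] F) (hβ : β ≠ 0) (hA : ¬ ∃ c : F, ∀ x, A x = c • x) :
    ∃ v, β v ≠ 0 ∧ ∀ c : F, A v ≠ c • v := by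
  classical
  by_contra! hc
  apply hA
  obtain ⟨v0, hv0⟩ : ∃ v, β v ≠ 0 := by
    by_contra! h
    exact hβ (LinearMap.ext h)
  obtain ⟨l, hl⟩ := hc v0 hv0
  refine ⟨l, ?_⟩
  obtain ⟨k, hk⟩ := Infinite.exists_notMem_finset ({0, 1} : Finset F)
  simp only [Finset.mem_insert, Finset.mem_singleton, not_or] at hk
  have hker : ∀ u, β u = 0 → A u = l • u := by
    intro u hu
    obtain ⟨μ, hμ⟩ := hc (v0 + u) (by simpa [hu] using hv0)
    obtain ⟨ν, hν⟩ := hc (v0 + k • u) (by simpa [hu] using hv0)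
    simp only [map_add, map_smul, hl] at hμ hν
    have e1 : A u = (μ - l) • v0 + μ • u := by
      have : A u = μ • (v0 + u) - l • v0 := by rw [← hμ]; abel
      rw [this]; module
    rw [e1] at hν
    have e2 : (l + k * (μ - l) - ν) • v0 + (k * (μ - ν)) • u = 0 := by
      have := sub_eq_zero.2 hν
      rw [← this]; module
    have e3 := congrArg β e2
    simp only [map_add, map_smul, hu, smul_eq_mul, mul_zero, add_zero, map_zero] at e3
    have e4 : l + k * (μ - l) - ν = 0 := (mul_eq_zero.1 e3).resolve_right hv0
    rw [e4, zero_smul, zero_add] at e2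
    rcases smul_eq_zero.1 e2 with h | h
    · have h5 : μ - ν = 0 := (mul_eq_zero.1 h).resolve_left hk.1
      have h6 : (k - 1) * (μ - l) = 0 := by linear_combination e4 - h5
      have h7 : μ - l = 0 := (mul_eq_zero.1 h6).resolve_left (sub_ne_zero.2 hk.2)
      rw [e1, h7, sub_eq_zero.1 h7]; simp
    · simp [h]
  intro x
  have := hker (x - (β x / β v0) • v0) (by simp [hv0])
  simp only [map_sub, map_smul, hl] at this
  have e : A x = l • (x - (β x / β v0) • v0) + (β x / β v0) • l • v0 := by rw [← this]; abel
  rw [e]; module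

theorem pair_coeff {V : Type*} [AddCommGroup V] [Module F V] {v w : V} (hv : v ≠ 0)
    (h : ∀ c : F, w ≠ c • v) {a b : F} (hab : a • v + b • w = 0) : a = 0 ∧ b = 0 := by
  have : b = 0 := by
    by_contra hb
    apply h (-(a / b))
    have h1 : b • w = - (a • v) := by rw [eq_neg_iff_add_eq_zero, add_comm]; exact hab
    have h2 : w = b⁻¹ • b • w := by rw [smul_smul, inv_mul_cancel₀ hb, one_smul]
    rw [h2, h1]; rw [div_eq_inv_mul]; module
  subst this
  simpa [hv] using hab

theorem dual_pair {V : Type*} [AddCommGroup V] [Module F V] {v w : V} (hv : v ≠ 0)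
    (h : ∀ c : F, w ≠ c • v) (a b : F) : ∃ α : V →ₗ[F] F, α v = a ∧ α w = b := by
  have hli : LinearIndependent F ![v, w] :=
    (LinearIndependent.pair_iff' hv).2 fun c => (h c).symm
  obtain ⟨g, hg⟩ := LinearMap.exists_extend ((Basis.span hli).constr F ![a, b])
  refine ⟨g, ?_, ?_⟩
  · have := LinearMap.congr_fun hg (Basis.span hli 0)
    rw [Basis.constr_basis] at this
    simpa [Basis.span_apply] using this
  · have := LinearMap.congr_fun hg (Basis.span hli 1)
    rw [Basis.constr_basis] at this
    simpa [Basis.span_apply] using this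

theorem pick_alpha {V : Type*} [AddCommGroup V] [Module F V] [FiniteDimensional F V]
    (A : V →ₗ[F] V) (hA : Function.Injective A) {v : V} (hv : v ≠ 0) (h : ∀ c : F, A v ≠ c • v)
    {m : F} (hm : m ≠ 0) (hd : 3 ≤ finrank F V) :
    ∃ α : V →ₗ[F] F, α v = 1 ∧ α (A v) = m ∧
      ¬ ∃ c : F, ∀ x, α x = 0 → A (x - (α (A x) / m) • v) = c • x := by
  by_contra! hc
  obtain ⟨α, h1, h2⟩ := dual_pair hv h 1 m
  have hlt : Submodule.span F (Set.range ![v, A v]) < ⊤ := by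
    rw [lt_top_iff_ne_top]
    intro e
    have := finrank_range_le_card (R := F) ![v, A v]
    rw [Set.finrank, e, finrank_top] at this
    simp at this
    lia
  obtain ⟨γ, hγ, hle⟩ := Submodule.exists_le_ker_of_lt_top _ hlt
  have g1 : γ v = 0 := hle (Submodule.subset_span ⟨0, rfl⟩)
  have g2 : γ (A v) = 0 := hle (Submodule.subset_span ⟨1, rfl⟩)
  obtain ⟨c, hc1⟩ := hc α h1 h2
  obtain ⟨c', hc2⟩ := hc (α + γ) (by simp [h1, g1]) (by simp [h2, g2])
  have w1 := hc1 (A v - m • v) (by simp [h1, h2])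
  have w2 := hc2 (A v - m • v) (by simp [h1, h2, g1, g2])
  have hc0 : c ≠ 0 := by
    rintro rfl
    rw [zero_smul] at w1
    have := hA (w1.trans (map_zero A).symm)
    rw [sub_eq_zero, sub_eq_iff_eq_add, ← add_smul] at this
    exact h _ this
  generalize α (A (A v - m • v)) / m = k at w1
  generalize (α + γ) (A (A v - m • v)) / m = k' at w2
  have hcc : c = c' := by
    rw [map_sub, map_smul] at w1 w2
    have : ((c - c') * m) • v + (k' - k - c + c') • A v = 0 := by
      have e := congrArg₂ (· - ·) w1 w2
      rw [← sub_eq_zero] at e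
      rw [← e]; module
    have := (pair_coeff hv h this).1
    exact sub_eq_zero.1 ((mul_eq_zero.1 this).resolve_right hm)
  subst hcc
  obtain ⟨x, hx⟩ : ∃ x, γ x ≠ 0 := by
    by_contra! h
    exact hγ (LinearMap.ext h)
  have x1 := hc1 (x - α x • v) (by simp [h1])
  have x2 := hc2 (x - (α x + γ x) • v) (by simp [h1, g1])
  generalize α (A (x - α x • v)) / m = k at x1
  generalize (α + γ) (A (x - (α x + γ x) • v)) / m = k' at x2
  simp only [map_sub, map_smul] at x1 x2
  have : (- c * γ x) • v + (γ x - k + k') • A v = 0 := by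
    have e := congrArg₂ (· - ·) x1 x2
    rw [← sub_eq_zero] at e
    rw [← e]; module
  have := (pair_coeff hv h this).1
  simp [hc0, hx] at this

theorem two_dim {V : Type*} [AddCommGroup V] [Module F V] [FiniteDimensional F V]
    (A : V →ₗ[F] V) (hA : Function.Injective A) {v : V} (hv : v ≠ 0) (h : ∀ c : F, A v ≠ c • v) :
    ∃ q : F, q ≠ 0 ∧ (finrank F V = 2 → ∀ (α : V →ₗ[F] F) (m : F), m ≠ 0 → α v = 1 → α (A v) = m →
      ∀ x, α x = 0 → A (x - (α (A x) / m) • v) = (q / m) • x) := by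
  by_cases hd : finrank F V = 2
  swap
  · exact ⟨1, one_ne_zero, fun h => absurd h hd⟩
  have hli : LinearIndependent F ![v, A v] :=
    (LinearIndependent.pair_iff' hv).2 fun c => (h c).symm
  have htop : ∀ y : V, ∃ a b : F, y = a • v + b • A v := by
    intro y
    have := hli.span_eq_top_of_card_eq_finrank (by simp [hd])
    have hy : y ∈ Submodule.span F (Set.range ![v, A v]) := by rw [this]; trivial
    simp only [Matrix.range_cons, Matrix.range_empty, Set.union_empty, Set.singleton_union,
      Submodule.mem_span_pair] at hy
    obtain ⟨a, b, e⟩ := hy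
    exact ⟨a, b, e.symm⟩
  obtain ⟨q, p, e⟩ := htop (A (A v))
  have hq : q ≠ 0 := by
    rintro rfl
    rw [zero_smul, zero_add, ← map_smul] at e
    exact h _ (hA e)
  refine ⟨-q, neg_ne_zero.2 hq, fun _ α m hm h1 h2 x hx => ?_⟩
  obtain ⟨a, b, rfl⟩ := htop x
  have ha : a = - (b * m) := by
    simp only [map_add, map_smul, h1, h2, smul_eq_mul, mul_one] at hx
    linear_combination hx
  subst ha
  simp only [map_add, map_smul, map_sub, e, h1, h2, smul_eq_mul]
  match_scalars <;> field_simp <;> ring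

theorem eig_of_left {V : Type*} [AddCommGroup V] [Module F V] [FiniteDimensional F V]
    (L : V →ₗ[F] V) (α : V →ₗ[F] F) (hα : α ≠ 0) (m : F) (h : ∀ x, α (L x) = m * α x) :
    ∃ x, x ≠ 0 ∧ L x = m • x := by
  by_contra! hc
  have hinj : Function.Injective (L - m • LinearMap.id : V →ₗ[F] V) := by
    rw [← LinearMap.ker_eq_bot, LinearMap.ker_eq_bot']
    intro x hx
    by_contra hx0
    exact hc x hx0 (by simpa [sub_eq_zero] using hx)
  have hs := LinearMap.surjective_of_injective hinj
  apply hα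
  ext y
  obtain ⟨x, rfl⟩ := hs y
  simp [h]

theorem sour [Infinite F] (n : ℕ) : ∀ (V : Type*) [AddCommGroup V] [Module F V]
    [FiniteDimensional F V], finrank F V = n + 1 → ∀ (A : V →ₗ[F] V), Function.Injective A →
    ∀ (β : V →ₗ[F] F), β ≠ 0 → ∀ (E : Finset F),
    ((n = 0 ∧ ∃ s, s ∉ E ∧ ∀ x, A x = s • x) ∨ (¬ ∃ c : F, ∀ x, A x = c • x)) →
    ∃ (L U : V →ₗ[F] V) (v : V) (α : V →ₗ[F] F) (m : F) (M : Finset F),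
      (∀ x, A x = L (U x)) ∧ U v = v ∧ β v ≠ 0 ∧ α v = 1 ∧
      (∀ C : Submodule F V, (∀ x ∈ C, U x ∈ C) → C ≠ ⊥ → v ∈ C) ∧
      IsNilpotent (U - 1 : Module.End F V) ∧ (∀ x, α (L x) = m * α x) ∧ M.card = n ∧ m ∉ M ∧ m ∉ E ∧
      (∀ k ∈ M, k ∉ E) ∧ (∀ k ∈ M, ∃ x, x ≠ 0 ∧ α x = 0 ∧ L x = k • x) := by
  classical
  induction n with
  | zero =>
    intro V _ _ _ hd A hA β hβ E hE
    have hone := (finrank_eq_one_iff' (K := F) (V := V)).1 (by simpa using hd)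
    obtain ⟨u, hu0, hu⟩ := hone
    obtain ⟨s, hs, hsA⟩ : ∃ s, s ∉ E ∧ ∀ x, A x = s • x := by
      rcases hE with ⟨_, h⟩ | h
      · exact h
      · exfalso
        apply h
        obtain ⟨c, hc⟩ := hu (A u)
        refine ⟨c, fun x => ?_⟩
        obtain ⟨r, rfl⟩ := hu x
        rw [map_smul, ← hc, smul_comm]
    have hβu : β u ≠ 0 := by
      intro h
      apply hβ
      ext x
      obtain ⟨r, rfl⟩ := hu x
      simp [h]
    refine ⟨A, LinearMap.id, u, (β u)⁻¹ • β, s, ∅, fun x => rfl, rfl, hβu, by simp [hβu], ?_, ?_,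
      ?_, rfl, by simp, hs, by simp, by simp⟩
    · intro C _ hC
      obtain ⟨x, hx, hx0⟩ := Submodule.exists_mem_ne_zero_of_ne_bot hC
      obtain ⟨r, rfl⟩ := hu x
      have hr : r ≠ 0 := by rintro rfl; simp at hx0
      simpa [smul_smul, hr] using C.smul_mem r⁻¹ hx
    · exact ⟨1, by ext; simp⟩
    · intro x
      rw [hsA]; simp
  | succ n ih =>
    intro V _ _ _ hd A hA β hβ E hE
    have hns : ¬ ∃ c : F, ∀ x, A x = c • x := by
      rcases hE with ⟨h, _⟩ | h
      · lia
      · exact h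
    obtain ⟨v, hβv, hvA⟩ := exists_noneig A β hβ hns
    have hv0 : v ≠ 0 := by rintro rfl; simp at hβv
    obtain ⟨q, hq0, hq⟩ := two_dim A hA hv0 hvA
    have hX : (X ^ 2 - C q : F[X]) ≠ 0 := (monic_X_pow_sub_C q (by norm_num)).ne_zero
    obtain ⟨m, hm⟩ := Infinite.exists_notMem_finset (E ∪ {0} ∪ A.charpoly.roots.toFinset ∪
      E.image (fun e => q / e) ∪ (X ^ 2 - C q : F[X]).roots.toFinset)
    simp only [Finset.mem_union, not_or, Finset.mem_singleton, Multiset.mem_toFinset,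
      mem_roots hX, mem_roots A.charpoly_monic.ne_zero] at hm
    obtain ⟨⟨⟨⟨hmE, hm0⟩, hmA⟩, hmE'⟩, hmq⟩ := hm
    rw [← End.hasEigenvalue_iff_isRoot_charpoly] at hmA
    have hqm : q / m ∉ insert m E := by
      rw [Finset.mem_insert, not_or]
      constructor
      · intro h
        apply hmq
        rw [div_eq_iff hm0] at h
        simp [h, pow_two]
      · intro h
        apply hmE'
        rw [Finset.mem_image]
        exact ⟨_, h, by field_simp⟩
    obtain ⟨α, h1, h2, h3⟩ : ∃ α : V →ₗ[F] F, α v = 1 ∧ α (A v) = m ∧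
        ((n = 0 ∧ ∃ s, s ∉ insert m E ∧ ∀ x, α x = 0 → A (x - (α (A x) / m) • v) = s • x) ∨
        (¬ ∃ c : F, ∀ x, α x = 0 → A (x - (α (A x) / m) • v) = c • x)) := by
      by_cases hn : n = 0
      · obtain ⟨α, h1, h2⟩ := dual_pair hv0 hvA 1 m
        refine ⟨α, h1, h2, Or.inl ⟨hn, q / m, hqm, hq (by simp [hd, hn]) α m hm0 h1 h2⟩⟩
      · obtain ⟨α, h1, h2, h3⟩ := pick_alpha A hA hv0 hvA hm0 (by lia)
        exact ⟨α, h1, h2, Or.inr h3⟩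
    let W : Submodule F V := LinearMap.ker α
    have hα0 : α ≠ 0 := by rintro rfl; simp at h1
    have hW : finrank F W = n + 1 := by
      have := Module.Dual.finrank_ker_add_one_of_ne_zero (f := α) hα0
      change finrank F W + 1 = _ at this
      lia
    let S0 : V →ₗ[F] V := A ∘ₗ (LinearMap.id - (m⁻¹ • (α ∘ₗ A)).smulRight v)
    have hS0 : ∀ x, S0 x = A (x - (α (A x) / m) • v) := by
      intro x; simp [S0, div_eq_inv_mul]
    have hS0W : ∀ x, α (S0 x) = 0 := by
      intro x
      rw [hS0]
      simp only [map_sub, map_smul, h2, smul_eq_mul]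
      field_simp
      ring
    let S : W →ₗ[F] W := LinearMap.codRestrict W (S0 ∘ₗ W.subtype) (fun x => hS0W x)
    have hS : ∀ x : W, ((S x : W) : V) = A (x.1 - (α (A x.1) / m) • v) := fun x => hS0 x
    have hSinj : Function.Injective S := by
      rw [← LinearMap.ker_eq_bot, LinearMap.ker_eq_bot']
      intro x hx
      have := congrArg Subtype.val hx
      rw [hS, ZeroMemClass.coe_zero] at this
      have := hA (this.trans (map_zero A).symm)
      have e := congrArg α this
      have hx' : α x.1 = 0 := x.2
      simp only [map_sub, map_smul, h1, hx', map_zero, smul_eq_mul, mul_one, zero_sub,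
        neg_eq_zero] at e
      rw [e] at this
      simpa using this
    let b : W →ₗ[F] F := α ∘ₗ A ∘ₗ W.subtype
    have hb : b ≠ 0 := by
      intro hb0
      apply hmA
      obtain ⟨x, hx0, hx⟩ := eig_of_left A α hα0 m (by
        intro x
        have e1 := LinearMap.congr_fun hb0 ⟨x - α x • v, by simp [W, h1]⟩
        simp only [b, LinearMap.comp_apply, Submodule.subtype_apply, map_sub, map_smul, h2,
          LinearMap.zero_apply, smul_eq_mul] at e1
        linear_combination e1)
      exact End.hasEigenvalue_of_hasEigenvector ⟨End.mem_eigenspace_iff.2 hx, hx0⟩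
    obtain ⟨L', U', v', α', m', M', i1, i2, i3, i4, i5, i6, i7, i8, i9, i10, i11, i12⟩ :=
      ih W hW S hSinj b hb (insert m E) (by
        rcases h3 with ⟨hn, s, hs, hh⟩ | h
        · left
          refine ⟨hn, s, hs, fun x => Subtype.ext ?_⟩
          rw [hS, hh _ x.2]; rfl
        · right
          rintro ⟨c, hc⟩
          apply h
          refine ⟨c, fun x hx => ?_⟩
          have := congrArg Subtype.val (hc ⟨x, hx⟩)
          rw [hS] at this
          exact this)
    let π : V →ₗ[F] W := LinearMap.codRestrict W (LinearMap.id - α.smulRight v)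
      (fun x => by simp [W, h1])
    have hπ : ∀ x, ((π x : W) : V) = x - α x • v := fun x => rfl
    have hπW : ∀ x : W, π x.1 = x := fun x => Subtype.ext (by
      have hx' : α x.1 = 0 := x.2
      rw [hπ, hx']; simp)
    have hπv : π v = 0 := Subtype.ext (by rw [hπ, h1]; simp)
    let U : V →ₗ[F] V := α.smulRight v + W.subtype ∘ₗ U' ∘ₗ π + (m⁻¹ • (b ∘ₗ π)).smulRight v
    let L : V →ₗ[F] V := α.smulRight (A v) + W.subtype ∘ₗ L' ∘ₗ π
    have hU : ∀ x, U x = α x • v + (U' (π x) : V) + (b (π x) / m) • v := fun x => by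
      simp [U, div_eq_inv_mul]
    have hL : ∀ x, L x = α x • A v + (L' (π x) : V) := fun x => by simp [L]
    have hαW : ∀ x : W, α x.1 = 0 := fun x => x.2
    have hπU : ∀ x, π (U x) = U' (π x) := by
      intro x
      rw [hU, map_add, map_add, map_smul, map_smul, hπv, hπW]; simp
    have hUv : U v = v := by rw [hU, hπv, h1]; simp
    refine ⟨L, U, v, α, m, insert m' M', ?_, hUv, hβv, h1, ?_, ?_, ?_, ?_, ?_, hmE, ?_, ?_⟩
    · intro x
      rw [hL, hπU, ← i1, hS, hU]
      simp only [map_add, map_smul, hαW, h1, hπ, map_sub, b, LinearMap.comp_apply,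
        Submodule.subtype_apply, smul_eq_mul, h2]
      module
    · intro C hC hC0
      by_cases hc : C.map π = ⊥
      · obtain ⟨x, hx, hx0⟩ := Submodule.exists_mem_ne_zero_of_ne_bot hC0
        have : π x = 0 := by
          have : π x ∈ C.map π := Submodule.mem_map_of_mem hx
          rwa [hc, Submodule.mem_bot] at this
        have e := congrArg Subtype.val this
        rw [hπ, ZeroMemClass.coe_zero, sub_eq_zero] at e
        have hr : α x ≠ 0 := by intro h; rw [h, zero_smul] at e; exact hx0 e
        have := C.smul_mem (α x)⁻¹ hx
        rw [e] at this
        simpa [smul_smul, hr, h1] using this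
      · have hv' := i5 (C.map π) (by
          rintro _ ⟨x, hx, rfl⟩
          exact ⟨U x, hC x hx, hπU x⟩) hc
        obtain ⟨x, hx, hxv⟩ := hv'
        have e : U x - x = (b v' / m) • v := by
          have e1 := hπ x
          rw [hxv] at e1
          rw [hU, hxv, i2, e1]; abel
        have h4 : (b v' / m) • v ∈ C := by rw [← e]; exact C.sub_mem (hC x hx) hx
        have hr : b v' / m ≠ 0 := div_ne_zero i3 hm0
        have := C.smul_mem (b v' / m)⁻¹ h4
        rwa [smul_smul, inv_mul_cancel₀ hr, one_smul] at this
    · obtain ⟨k, hk⟩ := i6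
      have hcomm : ∀ j x, π (((U - 1 : Module.End F V) ^ j) x) = ((U' - 1 : Module.End F W) ^ j) (π x) := by
        intro j
        induction j with
        | zero => intro x; simp
        | succ j ihj =>
          intro x
          rw [pow_succ, pow_succ]
          simp only [Module.End.mul_apply]
          rw [ihj]
          congr 1
          simp [hπU]
      refine ⟨k + 1, ?_⟩
      ext x
      rw [pow_succ', Module.End.mul_apply]
      have e := hcomm k x
      rw [hk, LinearMap.zero_apply] at e
      have e := congrArg Subtype.val e
      rw [hπ, ZeroMemClass.coe_zero, sub_eq_zero] at e
      rw [e]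
      simp [hUv]
    · intro x
      rw [hL]; simp [hαW, h2, mul_comm]
    · rw [Finset.card_insert_of_notMem i9, i8]
    · rw [Finset.mem_insert, not_or]
      refine ⟨?_, ?_⟩
      · rintro rfl; exact i10 (Finset.mem_insert_self _ _)
      · intro h; exact i11 _ h (Finset.mem_insert_self _ _)
    · intro k hk
      rcases Finset.mem_insert.1 hk with rfl | hk
      · exact fun h => i10 (Finset.mem_insert_of_mem h)
      · exact fun h => i11 _ hk (Finset.mem_insert_of_mem h)
    · intro k hk
      have : ∃ x, x ≠ 0 ∧ L' x = k • x := by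
        rcases Finset.mem_insert.1 hk with rfl | hk
        · exact eig_of_left L' α' (by rintro rfl; simp at i4) _ i7
        · obtain ⟨x, hx, _, hx'⟩ := i12 k hk
          exact ⟨x, hx, hx'⟩
      obtain ⟨x, hx0, hx⟩ := this
      refine ⟨x, by simpa using hx0, x.2, ?_⟩
      rw [hL, hπW, hαW, hx]; simp

end PartC

section PartD
open Polynomial Module

variable {F : Type*} [Field F] {V : Type*} [AddCommGroup V] [Module F V]

def CycL (f : V →ₗ[F] V) : Prop := ∃ v, ∀ x, ∃ p : F[X], (aeval f p) v = x

theorem aeval_red [FiniteDimensional F V] {k : ℕ} (hd : finrank F V = k + 1) (f : V →ₗ[F] V)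
    (p : F[X]) (x : V) :
    (aeval f p) x = ∑ i ∈ Finset.range (k + 1), (p %ₘ f.charpoly).coeff i • ((f ^ i) x) := by
  have h1 : aeval f p = aeval f (p %ₘ f.charpoly) := by
    conv_lhs => rw [← modByMonic_add_div p f.charpoly]
    simp [LinearMap.aeval_self_charpoly]
  have hdeg : (p %ₘ f.charpoly).natDegree < k + 1 := by
    rw [← hd, ← f.charpoly_natDegree]
    apply natDegree_modByMonic_lt _ f.charpoly_monic
    intro h
    have := f.charpoly_natDegree
    rw [h, hd] at this
    simp at this
  rw [h1, aeval_eq_sum_range' hdeg]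
  simp [LinearMap.sum_apply]

theorem cyc_basis [FiniteDimensional F V] {k : ℕ} (hd : finrank F V = k + 1) {f : V →ₗ[F] V}
    (hf : CycL f) : ∃ (v : V) (b : Basis (Fin (k + 1)) F V), ∀ i, b i = (f ^ (i : ℕ)) v := by
  obtain ⟨v, hv⟩ := hf
  refine ⟨v, basisOfTopLeSpanOfCardEqFinrank (fun i : Fin (k + 1) => (f ^ (i : ℕ)) v) ?_
    (by simp [hd]), fun i => by rw [coe_basisOfTopLeSpanOfCardEqFinrank]⟩
  intro x _
  obtain ⟨p, rfl⟩ := hv x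
  rw [aeval_red hd]
  apply Submodule.sum_mem
  intro i hi
  apply Submodule.smul_mem
  exact Submodule.subset_span ⟨⟨i, Finset.mem_range.1 hi⟩, rfl⟩

theorem pole [FiniteDimensional F V] {k : ℕ} (hd : finrank F V = k + 1) {U Y : V →ₗ[F] V}
    (hY : CycL Y) {α : V →ₗ[F] F} {v : V} (hv : α v = 1)
    (hobs : ∀ C : Submodule F V, (∀ x ∈ C, U x ∈ C) → C ≠ ⊥ → v ∈ C) :
    ∃ (P : V ≃ₗ[F] V) (c : V), ∀ z, P (Y z) = U (P z) + α (P z) • c := by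
  classical
  let Φ : V →ₗ[F] (Fin (k + 1) → F) := LinearMap.pi (fun i => α ∘ₗ (U ^ (i : ℕ)))
  have hΦ : ∀ x i, Φ x i = α ((U ^ (i : ℕ)) x) := fun x i => rfl
  have hinj : Function.Injective Φ := by
    rw [← LinearMap.ker_eq_bot, LinearMap.ker_eq_bot']
    intro x hx
    let C : Submodule F V := ⨅ p : F[X], LinearMap.ker (α ∘ₗ (aeval U p))
    have hCm : ∀ y, y ∈ C ↔ ∀ p : F[X], α ((aeval U p) y) = 0 := by
      intro y; simp [C, Submodule.mem_iInf]
    by_contra hx0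
    have hxC : x ∈ C := by
      rw [hCm]
      intro p
      rw [aeval_red hd, map_sum]
      apply Finset.sum_eq_zero
      intro i hi
      have := congrFun hx ⟨i, Finset.mem_range.1 hi⟩
      rw [hΦ] at this
      rw [map_smul, this]; simp
    have := hobs C (by
      intro y hy
      rw [hCm] at hy ⊢
      intro p
      have := hy (p * X)
      rw [map_mul, aeval_X] at this
      exact this) (by
      intro h
      rw [h, Submodule.mem_bot] at hxC
      exact hx0 hxC)
    rw [hCm] at this
    have := this 1
    simp [hv] at this
  have hsurj : Function.Surjective Φ :=
    (LinearMap.injective_iff_surjective_of_finrank_eq_finrank (by simp [hd])).1 hinj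
  obtain ⟨x, hx⟩ := hsurj (Pi.single (Fin.last k) 1)
  have hx1 : α ((U ^ k) x) = 1 := by
    have := congrFun hx (Fin.last k)
    rw [hΦ] at this
    simpa using this
  have hx0 : ∀ i, i < k → α ((U ^ i) x) = 0 := by
    intro i hi
    have := congrFun hx ⟨i, by lia⟩
    rw [hΦ, Pi.single_eq_of_ne (by intro h; simp [Fin.ext_iff] at h; lia)] at this
    simpa using this
  have hli : LinearIndependent F (fun i : Fin (k + 1) => (U ^ (i : ℕ)) x) := by
    rw [Fintype.linearIndependent_iff]
    intro g hg
    let p : F[X] := ∑ i : Fin (k + 1), monomial (i : ℕ) (g i)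
    have hp : (aeval U p) x = 0 := by
      rw [← hg]
      simp [p, aeval_monomial, LinearMap.sum_apply]
    have hpc : ∀ i : Fin (k + 1), p.coeff i = g i := by
      intro i
      simp only [p, finsetSum_coeff, coeff_monomial, Fin.val_inj]
      simp
    have hpd : p.natDegree ≤ k := by
      apply natDegree_sum_le_of_forall_le
      intro i _
      exact (natDegree_monomial_le _).trans (by lia)
    have hp0 : p = 0 := by
      by_contra hp0
      have hq : (aeval U (X ^ (k - p.natDegree) * p)) x = 0 := by
        rw [map_mul, Module.End.mul_apply, hp, map_zero]
      have hqd : (X ^ (k - p.natDegree) * p).natDegree < k + 1 := by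
        rw [natDegree_X_pow_mul _ hp0]; lia
      rw [aeval_eq_sum_range' hqd] at hq
      have e := congrArg α hq
      rw [LinearMap.sum_apply, map_sum, Finset.sum_range_succ, Finset.sum_eq_zero] at e
      · simp only [LinearMap.smul_apply, map_smul, hx1, map_zero, zero_add, smul_eq_mul,
          mul_one] at e
        rw [coeff_X_pow_mul', if_pos (by lia), Nat.sub_sub_self hpd] at e
        exact hp0 (leadingCoeff_eq_zero.1 e)
      · intro i hi
        simp [hx0 i (Finset.mem_range.1 hi)]
    intro i
    rw [← hpc, hp0, coeff_zero]
  obtain ⟨y, bY, hbY⟩ := cyc_basis hd hY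
  let bU : Basis (Fin (k + 1)) F V := basisOfLinearIndependentOfCardEqFinrank hli (by simp [hd])
  have hbU : ∀ i, bU i = (U ^ (i : ℕ)) x := fun i => by simp [bU]
  let P : V ≃ₗ[F] V := bY.equiv bU (Equiv.refl _)
  have hP : ∀ i, i < k + 1 → P ((Y ^ i) y) = (U ^ i) x := by
    intro i hi
    have : P (bY ⟨i, hi⟩) = bU ⟨i, hi⟩ := by simp [P]
    rwa [hbY, hbU] at this
  let c : V := P ((Y ^ (k + 1)) y) - (U ^ (k + 1)) x
  refine ⟨P, c, ?_⟩
  have : (P : V →ₗ[F] V) ∘ₗ Y = U ∘ₗ (P : V →ₗ[F] V) + (α ∘ₗ (P : V →ₗ[F] V)).smulRight c := by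
    apply bY.ext
    intro i
    simp only [LinearMap.comp_apply, LinearMap.add_apply, LinearMap.smulRight_apply,
      LinearEquiv.coe_coe]
    rw [hbY, hP i i.2, ← Module.End.mul_apply, ← pow_succ', ← Module.End.mul_apply U, ← pow_succ']
    rcases Nat.lt_succ_iff_lt_or_eq.1 i.2 with h | h
    · rw [hP _ (by lia), hx0 _ h]; simp
    · rw [h, hx1]; simp [c]
  intro z
  exact LinearMap.congr_fun this z

theorem eigBasis [FiniteDimensional F V] (f : V →ₗ[F] V) (M : Finset F)
    (hM : M.card = finrank F V) (h : ∀ j ∈ M, ∃ x, x ≠ 0 ∧ f x = j • x) :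
    ∃ b : Basis M F V, ∀ i, f (b i) = i.1 • b i := by
  choose! e he0 he using h
  have hli : LinearIndependent F (fun i : M => e i.1) :=
    Module.End.eigenvectors_linearIndependent' f (fun i : M => i.1) Subtype.val_injective _
      (fun i => ⟨End.mem_eigenspace_iff.2 (he _ i.2), he0 _ i.2⟩)
  by_cases hne : Nonempty M
  · refine ⟨basisOfLinearIndependentOfCardEqFinrank hli (by simp [hM]), fun i => ?_⟩
    simp [he _ i.2]
  · have hc : M.card = 0 := by
      rw [Finset.card_eq_zero, ← Finset.not_nonempty_iff_eq_empty]
      rintro ⟨x, hx⟩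
      exact hne ⟨⟨x, hx⟩⟩
    have : Subsingleton V := by
      apply (finrank_zero_iff (R := F)).1; rw [← hM, hc]
    have : IsEmpty M := not_nonempty_iff.1 hne
    exact ⟨Basis.empty V, fun i => isEmptyElim i⟩

theorem det_eig [FiniteDimensional F V] (f : V →ₗ[F] V) (M : Finset F)
    (hM : M.card = finrank F V) (h : ∀ j ∈ M, ∃ x, x ≠ 0 ∧ f x = j • x) :
    LinearMap.det f = ∏ i ∈ M, i := by
  classical
  obtain ⟨b, hb⟩ := eigBasis f M hM h
  rw [← LinearMap.det_toMatrix b]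
  have : LinearMap.toMatrix b b f = Matrix.diagonal (fun i : M => i.1) := by
    ext i j
    rw [LinearMap.toMatrix_apply, hb, map_smul, Matrix.diagonal_apply]
    simp only [Basis.repr_self, Finsupp.smul_apply, Finsupp.single_apply, smul_eq_mul]
    by_cases h : i = j
    · simp [h]
    · simp [h, Ne.symm h]
  rw [this, Matrix.det_diagonal]
  exact Finset.prod_coe_sort M (fun i => i)

theorem last_eig [FiniteDimensional F V] {k : ℕ} (hd : finrank F V = k + 1) (f : V →ₗ[F] V)
    (M : Finset F) (hM : M.card = k) (h : ∀ j ∈ M, ∃ x, x ≠ 0 ∧ f x = j • x)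
    (hdet : LinearMap.det f = 1) : ∃ x, x ≠ 0 ∧ f x = (∏ i ∈ M, i)⁻¹ • x := by
  classical
  have hdvd : (∏ i ∈ M, (X - C i)) ∣ f.charpoly := by
    apply Finset.prod_dvd_of_coprime
    · intro i _ j _ hij
      exact isCoprime_X_sub_C_of_isUnit_sub (sub_ne_zero.2 hij).isUnit
    · intro i hi
      rw [dvd_iff_isRoot, ← End.hasEigenvalue_iff_isRoot_charpoly]
      obtain ⟨x, hx0, hx⟩ := h i hi
      exact End.hasEigenvalue_of_hasEigenvector ⟨End.mem_eigenspace_iff.2 hx, hx0⟩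
  obtain ⟨q, hq⟩ := hdvd
  have hmon : (∏ i ∈ M, (X - C i)).Monic := monic_prod_of_monic _ _ fun i _ => monic_X_sub_C i
  have hqm : q.Monic := hmon.of_mul_monic_left (hq ▸ f.charpoly_monic)
  have hqd : q.natDegree = 1 := by
    have := f.charpoly_natDegree
    rw [hq, hmon.natDegree_mul hqm, natDegree_prod_of_monic _ _ fun i _ => monic_X_sub_C i] at this
    simp [hM, hd] at this
    lia
  have hq1 := hqm.eq_X_add_C hqd
  set r := q.coeff 0
  have hc := LinearMap.det_eq_sign_charpoly_coeff f
  rw [hdet, hq, coeff_zero_eq_eval_zero, eval_mul, eval_prod, hq1, hd] at hc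
  simp only [eval_sub, eval_X, eval_C, zero_sub, eval_add, zero_add] at hc
  have hpn : ∏ i ∈ M, (-i) = (-1) ^ k * ∏ i ∈ M, i := by rw [Finset.prod_neg, hM]
  rw [hpn] at hc
  have hr : (∏ i ∈ M, i) * (-r) = 1 := by
    have e : ((-1 : F) ^ k) * (-1) ^ k = 1 := by rw [← mul_pow]; simp
    rw [pow_succ] at hc
    linear_combination (-1 : F) * hc + (∏ i ∈ M, i) * r * e
  have hr' : (∏ i ∈ M, i)⁻¹ = -r := inv_eq_of_mul_eq_one_right hr
  have : End.HasEigenvalue f (-r) := by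
    rw [End.hasEigenvalue_iff_isRoot_charpoly, hq, IsRoot, eval_mul, hq1]
    simp
  obtain ⟨x, hx⟩ := this.exists_hasEigenvector
  exact ⟨x, hx.2, by rw [hr']; exact hx.apply_eq_smul⟩

theorem sim_eig [FiniteDimensional F V] {k : ℕ} (hd : finrank F V = k + 1) (f g : V →ₗ[F] V)
    (M : Finset F) (hM : M.card = k) (hf : ∀ j ∈ M, ∃ x, x ≠ 0 ∧ f x = j • x)
    (hg : ∀ j ∈ M, ∃ x, x ≠ 0 ∧ g x = j • x)
    (hdf : LinearMap.det f = 1) (hdg : LinearMap.det g = 1) (hn : (∏ i ∈ M, i)⁻¹ ∉ M) :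
    ∃ P : V ≃ₗ[F] V, ∀ x, P (f x) = g (P x) := by
  classical
  have hcard : (insert (∏ i ∈ M, i)⁻¹ M).card = finrank F V := by
    rw [Finset.card_insert_of_notMem hn, hM, hd]
  have key : ∀ t : V →ₗ[F] V, (∀ j ∈ M, ∃ x, x ≠ 0 ∧ t x = j • x) → LinearMap.det t = 1 →
      ∀ j ∈ insert (∏ i ∈ M, i)⁻¹ M, ∃ x, x ≠ 0 ∧ t x = j • x := by
    intro t ht hdt j hj
    rcases Finset.mem_insert.1 hj with rfl | hj
    · exact last_eig hd t M hM ht hdt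
    · exact ht j hj
  obtain ⟨b1, h1⟩ := eigBasis f _ hcard (key f hf hdf)
  obtain ⟨b2, h2⟩ := eigBasis g _ hcard (key g hg hdg)
  refine ⟨b1.equiv b2 (Equiv.refl _), ?_⟩
  have : ((b1.equiv b2 (Equiv.refl _) : V ≃ₗ[F] V) : V →ₗ[F] V) ∘ₗ f =
      g ∘ₗ ((b1.equiv b2 (Equiv.refl _) : V ≃ₗ[F] V) : V →ₗ[F] V) := by
    apply b1.ext
    intro i
    simp [h1, h2]
  intro x
  exact LinearMap.congr_fun this x

theorem det_unip [FiniteDimensional F V] (U : V →ₗ[F] V)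
    (h : IsNilpotent (U - 1 : Module.End F V)) : LinearMap.det U = 1 := by
  have h1 := (LinearMap.charpoly_eq_X_pow_iff (U - 1 : Module.End F V)).2 (by
    obtain ⟨k, hk⟩ := h
    exact fun x => ⟨k, by rw [hk]; rfl⟩)
  have h2 := LinearMap.eval_charpoly (U - 1 : Module.End F V) (-1)
  rw [h1] at h2
  have h3 : (algebraMap F (Module.End F V) (-1) - (U - 1)) = (-1 : F) • U := by
    ext x
    simp only [map_neg, map_one, LinearMap.sub_apply, LinearMap.neg_apply, Module.End.one_apply, LinearMap.smul_apply]
    module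
  rw [h3, LinearMap.det_smul] at h2
  simp only [eval_pow, eval_X] at h2
  have : ((-1 : F) ^ finrank F V) ≠ 0 := pow_ne_zero _ (by simp)
  exact mul_left_cancel₀ this (by rw [← h2, mul_one])

theorem thm3 [Infinite F] [FiniteDimensional F V] {k : ℕ} (hd : finrank F V = k + 1)
    (g : V →ₗ[F] V) (hg : LinearMap.det g = 1) (hns : ¬ ∃ c : F, ∀ x, g x = c • x)
    (Y : V →ₗ[F] V) (hY : CycL Y) (hYd : LinearMap.det Y = 1) :
    ∃ (T X : V →ₗ[F] V) (M : Finset F), (∀ x, g x = T (X x)) ∧ LinearMap.det T = 1 ∧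
      (∃ Q : V ≃ₗ[F] V, ∀ x, Q (Y x) = X (Q x)) ∧ M.card = k ∧ (∏ i ∈ M, i)⁻¹ ∉ M ∧ 0 ∉ M ∧
      ∀ j ∈ M, ∃ x, x ≠ 0 ∧ T x = j • x := by
  classical
  have hginj : Function.Injective g :=
    (LinearEquiv.ofIsUnitDet (f := g) (v := finBasis F V) (v' := finBasis F V) (by
      rw [LinearMap.det_toMatrix, hg]; exact isUnit_one)).injective
  have hntriv : Nontrivial V := nontrivial_of_finrank_pos (R := F) (by lia)
  obtain ⟨x0, hx0⟩ := exists_ne (0 : V)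
  obtain ⟨β, hβ⟩ : ∃ β : V →ₗ[F] F, β ≠ 0 := by
    by_contra! h
    apply hx0
    rw [← Module.forall_dual_apply_eq_zero_iff F]
    intro φ
    rw [h φ]; rfl
  obtain ⟨L, U, v, α, m, M, h1, h2, h3, h4, h5, h6, h7, h8, h9, h10, h11, h12⟩ :=
    sour k V hd g hginj β hβ {0} (Or.inr hns)
  obtain ⟨P, c, hP⟩ := pole hd hY h4 h5
  have hUinj : Function.Injective U := by
    intro x y h
    apply hginj
    rw [h1, h1, h]
  let eU : V ≃ₗ[F] V := LinearEquiv.ofInjectiveEndo U hUinj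
  have heU : ∀ x, eU x = U x := fun x => rfl
  have hYinj : Function.Injective Y :=
    (LinearEquiv.ofIsUnitDet (f := Y) (v := finBasis F V) (v' := finBasis F V) (by
      rw [LinearMap.det_toMatrix, hYd]; exact isUnit_one)).injective
  let eY : V ≃ₗ[F] V := LinearEquiv.ofInjectiveEndo Y hYinj
  have heY : ∀ x, eY x = Y x := fun x => rfl
  let Q : V ≃ₗ[F] V := P.trans eU.symm
  let X : V ≃ₗ[F] V := (Q.symm.trans eY).trans Q
  have hX : ∀ x, X x = Q (Y (Q.symm x)) := fun x => rfl
  have hQ : ∀ x, Q x = eU.symm (P x) := fun x => rfl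
  have hXd : LinearMap.det (X : V →ₗ[F] V) = 1 := by
    have : (X : V →ₗ[F] V) = (Q : V →ₗ[F] V) ∘ₗ Y ∘ₗ (Q.symm : V →ₗ[F] V) := rfl
    rw [this, LinearMap.det_conj, hYd]
  have hgT : g = (g ∘ₗ (X.symm : V →ₗ[F] V)) ∘ₗ (X : V →ₗ[F] V) := by
    ext x; simp
  refine ⟨g ∘ₗ (X.symm : V →ₗ[F] V), X, M, fun x => by simp, ?_, ⟨Q, fun x => by simp [hX]⟩, h8,
    ?_, ?_, ?_⟩
  · have := congrArg LinearMap.det hgT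
    rw [LinearMap.det_comp, hXd, hg, mul_one] at this
    exact this.symm
  · have hgLU : g = L ∘ₗ U := LinearMap.ext h1
    have e := congrArg LinearMap.det hgLU
    rw [hg, LinearMap.det_comp, det_unip U h6, mul_one, det_eig L (insert m M)
      (by rw [Finset.card_insert_of_notMem h9, h8, hd]) (by
        intro j hj
        rcases Finset.mem_insert.1 hj with rfl | hj
        · exact eig_of_left L α (by rintro rfl; simp at h4) _ h7
        · obtain ⟨x, hx, _, hx'⟩ := h12 j hj
          exact ⟨x, hx, hx'⟩), Finset.prod_insert h9] at e
    rwa [inv_eq_of_mul_eq_one_left e.symm]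
  · intro h
    exact h11 0 h (by simp)
  · intro j hj
    obtain ⟨x, hx0, hαx, hx⟩ := h12 j hj
    refine ⟨x, hx0, ?_⟩
    have e1 : X (eU.symm x) = x := by
      rw [hX, hQ, hP]
      have : P (Q.symm (eU.symm x)) = x := by
        apply eU.symm.injective
        rw [← hQ, LinearEquiv.apply_symm_apply]
      rw [this, hαx, zero_smul, add_zero, ← heU, LinearEquiv.symm_apply_apply]
    have e2 : X.symm x = eU.symm x := by
      rw [LinearEquiv.symm_apply_eq, e1]
    rw [LinearMap.comp_apply, LinearEquiv.coe_coe, e2, h1, ← heU, LinearEquiv.apply_symm_apply, hx]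

theorem thm2 [FiniteDimensional F V] {k : ℕ} (hd : finrank F V = k + 1)
    (A B : V →ₗ[F] V) (hA : CycL A) (hB : CycL B) (M : Finset F) (hM : M.card = k) (h0 : 0 ∉ M) :
    ∃ (P : V ≃ₗ[F] V) (Y : V →ₗ[F] V), (∀ x, P (B x) = Y (P x)) ∧
      ∀ j ∈ M, ∃ x, x ≠ 0 ∧ A (Y x) = j • x := by
  classical
  obtain ⟨v, bA, hbA⟩ := cyc_basis hd hA
  obtain ⟨u, bB, hbB⟩ := cyc_basis hd hB
  let m : ℕ → F := fun i => if h : i < k then (M.equivFinOfCardEq hM).symm ⟨i, h⟩ else 1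
  have hm0 : ∀ i, m i ≠ 0 := by
    intro i
    by_cases h : i < k
    · simp only [m, dif_pos h]
      intro e
      apply h0
      rw [← e]
      exact Subtype.coe_prop _
    · simp [m, h]
  let μ : ℕ → F := fun i => ∏ j ∈ Finset.range i, m j
  have hμ0 : ∀ i, μ i ≠ 0 := fun i => Finset.prod_ne_zero_iff.2 fun j _ => hm0 j
  let e : Basis (Fin (k + 1)) F V :=
    (bA.reindex Fin.revPerm).unitsSMul (fun i => Units.mk0 (μ i) (hμ0 i))
  have he : ∀ i : Fin (k + 1), e i = μ i • (A ^ (k - (i : ℕ))) v := by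
    intro i
    simp only [e, Basis.unitsSMul_apply, Basis.reindex_apply, hbA]
    simp [Units.smul_def, Fin.val_rev]
  let P : V ≃ₗ[F] V := bB.equiv e (Equiv.refl _)
  have hP : ∀ i, P (bB i) = e i := by intro i; simp [P]
  refine ⟨P, (P : V →ₗ[F] V) ∘ₗ B ∘ₗ (P.symm : V →ₗ[F] V), fun x => by simp, ?_⟩
  intro j hj
  set i := (M.equivFinOfCardEq hM) ⟨j, hj⟩ with hi
  have hmi : m i = j := by
    simp only [m, dif_pos i.2]
    simp [hi]
  refine ⟨e i.castSucc, e.ne_zero _, ?_⟩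
  simp only [LinearMap.comp_apply, LinearEquiv.coe_coe]
  rw [← hP, LinearEquiv.symm_apply_apply, hbB]
  have e1 : B ((B ^ (i.castSucc : ℕ)) u) = bB i.succ := by
    rw [hbB, ← Module.End.mul_apply, ← pow_succ']; simp
  rw [← hbB, hP, hbB, e1, hP, he, he, map_smul, ← Module.End.mul_apply, ← pow_succ', smul_smul]
  have e2 : μ i.succ = j * μ i.castSucc := by
    simp only [μ, Fin.val_succ, Fin.val_castSucc, Finset.prod_range_succ, hmi, mul_comm]
  rw [e2]
  congr 3
  simp only [Fin.val_succ, Fin.val_castSucc]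
  have := i.2
  lia

end PartD

section PartE
open Polynomial Module Matrix

theorem conj_val {F : Type*} [Field F] {n d : ℕ} {w : FreeGroup (Fin d)}
    {W : SpecialLinearGroup (Fin n) F} (hW : W ∈ wordValues w (SpecialLinearGroup (Fin n) F))
    (P : (Fin n → F) ≃ₗ[F] (Fin n → F)) (Z : (Fin n → F) →ₗ[F] (Fin n → F))
    (h : ∀ x, P (Matrix.toLin' W.1 x) = Z (P x)) :
    ∃ W' ∈ wordValues w (SpecialLinearGroup (Fin n) F), Matrix.toLin' W'.1 = Z := by
  let A : Matrix (Fin n) (Fin n) F := LinearMap.toMatrix' (P : (Fin n → F) →ₗ[F] (Fin n → F))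
  let B : Matrix (Fin n) (Fin n) F := LinearMap.toMatrix' (P.symm : (Fin n → F) →ₗ[F] (Fin n → F))
  have hAB : A * B = 1 := by
    rw [← LinearMap.toMatrix'_comp, LinearEquiv.comp_symm, LinearMap.toMatrix'_id]
  have hBA : B * A = 1 := by
    rw [← LinearMap.toMatrix'_comp, LinearEquiv.symm_comp, LinearMap.toMatrix'_id]
  let φ : SpecialLinearGroup (Fin n) F →* SpecialLinearGroup (Fin n) F :=
    MonoidHom.mk' (fun g => ⟨A * g.1 * B, by
      rw [det_mul_right_comm, hAB, one_mul, g.2]⟩) (by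
      intro a b
      apply Subtype.ext
      change A * (a.1 * b.1) * B = (A * a.1 * B) * (A * b.1 * B)
      calc A * (a.1 * b.1) * B = A * a.1 * 1 * b.1 * B := by simp only [mul_one, mul_assoc]
        _ = A * a.1 * (B * A) * b.1 * B := by rw [hBA]
        _ = _ := by simp only [mul_assoc])
  refine ⟨φ W, wordValues_map φ hW, ?_⟩
  change Matrix.toLin' (A * W.1 * B) = Z
  rw [Matrix.toLin'_mul, Matrix.toLin'_mul, Matrix.toLin'_toMatrix', Matrix.toLin'_toMatrix']
  ext1 x
  apply LinearMap.ext
  intro y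
  simp only [LinearMap.comp_apply, LinearEquiv.coe_coe]
  rw [h, LinearEquiv.apply_symm_apply]

theorem cycL_of_cycM {F : Type*} [Field F] {n : ℕ} {A : Matrix (Fin n) (Fin n) F} (h : CycM A) :
    CycL (Matrix.toLin' A) := by
  obtain ⟨v, hv⟩ := h
  refine ⟨v, fun x => ?_⟩
  obtain ⟨p, hp⟩ := hv x
  refine ⟨p, ?_⟩
  have : aeval (Matrix.toLin' A) p = Matrix.toLin' (aeval A p) :=
    aeval_algHom_apply (Matrix.toLinAlgEquiv' : Matrix (Fin n) (Fin n) F ≃ₐ[F] _).toAlgHom A p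
  rw [this, Matrix.toLin'_apply, hp]

end PartE

/-- If `F` is an infinite field, `n ≥ 3`, and `w₁, w₂, w₃` are nontrivial words, then every
noncentral element of `SL_n(F)` is in `w₁(SL_n(F)) · w₂(SL_n(F)) · w₃(SL_n(F))`. -/
theorem sl_waring_three_noncentral {F : Type*} [Field F] [Infinite F]
    (n : ℕ) (hn : 3 ≤ n) {d₁ d₂ d₃ : ℕ}
    (w₁ : FreeGroup (Fin d₁)) (w₂ : FreeGroup (Fin d₂)) (w₃ : FreeGroup (Fin d₃))
    (hw₁ : w₁ ≠ 1) (hw₂ : w₂ ≠ 1) (hw₃ : w₃ ≠ 1) :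
    ∀ g : Matrix.SpecialLinearGroup (Fin n) F,
      g ∉ Subgroup.center (Matrix.SpecialLinearGroup (Fin n) F) →
      ∃ g₁ ∈ wordValues w₁ (Matrix.SpecialLinearGroup (Fin n) F),
        ∃ g₂ ∈ wordValues w₂ (Matrix.SpecialLinearGroup (Fin n) F),
          ∃ g₃ ∈ wordValues w₃ (Matrix.SpecialLinearGroup (Fin n) F), g = g₁ * g₂ * g₃ := by
  intro g hg
  obtain ⟨k, rfl⟩ : ∃ k, n = k + 1 := ⟨n - 1, by lia⟩
  have hd : Module.finrank F (Fin (k + 1) → F) = k + 1 := by simp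
  obtain ⟨W1, v1, c1, -⟩ := cyc_value (F := F) hw₁ (k + 1) 1 (by simp)
  obtain ⟨W2, v2, c2, -⟩ := cyc_value (F := F) hw₂ (k + 1) 1 (by simp)
  obtain ⟨W3, v3, c3, -⟩ := cyc_value (F := F) hw₃ (k + 1) 1 (by simp)
  have hdet : ∀ A : Matrix.SpecialLinearGroup (Fin (k + 1)) F,
      LinearMap.det (Matrix.toLin' A.1) = 1 := fun A => by
    rw [LinearMap.det_toLin']; exact A.2
  have hns : ¬ ∃ c : F, ∀ x, Matrix.toLin' g.1 x = c • x := by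
    rintro ⟨c, hc⟩
    apply hg
    have e : g.1 = Matrix.scalar _ c := by
      apply Matrix.toLin'.injective
      apply LinearMap.ext
      intro x
      rw [hc, Matrix.toLin'_apply]
      simp [Matrix.scalar_apply]
    rw [Matrix.SpecialLinearGroup.mem_center_iff]
    refine ⟨c, ?_, e.symm⟩
    have := g.2
    rw [e] at this
    simpa [Matrix.scalar_apply] using this
  obtain ⟨T, X, M, h1, hT, ⟨Q, hQ⟩, hM, hMn, hM0, hMe⟩ :=
    thm3 hd (Matrix.toLin' g.1) (hdet g) hns (Matrix.toLin' W3.1) (cycL_of_cycM c3) (hdet W3)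
  obtain ⟨P, Y, hP, hYe⟩ := thm2 hd (Matrix.toLin' W1.1) (Matrix.toLin' W2.1) (cycL_of_cycM c1)
    (cycL_of_cycM c2) M hM hM0
  obtain ⟨W2', v2', rfl⟩ := conj_val v2 P Y hP
  obtain ⟨R, hR⟩ := sim_eig hd (Matrix.toLin' W1.1 ∘ₗ Matrix.toLin' W2'.1) T M hM hYe hMe
    (by rw [LinearMap.det_comp, hdet, hdet, one_mul]) hT hMn
  obtain ⟨g1, hg1, e1⟩ := conj_val v1 R
    ((R : (Fin (k + 1) → F) →ₗ[F] (Fin (k + 1) → F)) ∘ₗ Matrix.toLin' W1.1 ∘ₗ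
      (R.symm : (Fin (k + 1) → F) →ₗ[F] (Fin (k + 1) → F))) (fun x => by simp)
  obtain ⟨g2, hg2, e2⟩ := conj_val v2' R
    ((R : (Fin (k + 1) → F) →ₗ[F] (Fin (k + 1) → F)) ∘ₗ Matrix.toLin' W2'.1 ∘ₗ
      (R.symm : (Fin (k + 1) → F) →ₗ[F] (Fin (k + 1) → F))) (fun x => by simp)
  obtain ⟨g3, hg3, e3⟩ := conj_val v3 Q X hQ
  refine ⟨g1, hg1, g2, hg2, g3, hg3, Subtype.ext ?_⟩
  change g.1 = g1.1 * g2.1 * g3.1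
  apply Matrix.toLin'.injective
  rw [Matrix.toLin'_mul, Matrix.toLin'_mul, e1, e2, e3]
  apply LinearMap.ext
  intro x
  rw [h1]
  simp only [LinearMap.comp_apply, LinearEquiv.coe_coe, LinearEquiv.symm_apply_apply]
  have := hR (R.symm (X x))
  rw [LinearEquiv.apply_symm_apply] at this
  rw [← this]; rfl
end

section
/- Let F be an infinite field, let n ≥ 3 be an integer, and let w₁, w₂, w₃ be nontrivial words. Then every element of the quotient group PSL_n(F) := SL_n(F)/Z(SL_n(F)) is a product g₁g₂g₃ with g₁ ∈ w₁(PSL_n(F)), g₂ ∈ w₂(PSL_n(F)), and g₃ ∈ w₃(PSL_n(F)). -/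
/-- `PSL_n(F) = SL_n(F) / Z(SL_n(F))`. -/
abbrev PSL (n : ℕ) (F : Type*) [Field F] :=
  Matrix.SpecialLinearGroup (Fin n) F ⧸ Subgroup.center (Matrix.SpecialLinearGroup (Fin n) F)

open Matrix

/-- coercion hom -/
def slc {ι F : Type*} [Fintype ι] [DecidableEq ι] [Field F] :
    SpecialLinearGroup ι F →* Matrix ι ι F where
  toFun A := A.1
  map_one' := rfl
  map_mul' _ _ := rfl

section wordtrace
variable {F : Type*} [Field F] {d : ℕ}

def wrE (p : Fin d × Bool → F) (s : Fin d × Bool) : Matrix (Fin 2) (Fin 2) F :=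
  (p s - p (s.1, !s.2))⁻¹ • vecMulVec ![1, p s] ![-p (s.1, !s.2), 1]

lemma wrE_add (p : Fin d × Bool → F) (hp : Function.Injective p) (i : Fin d) :
    wrE p (i, true) + wrE p (i, false) = 1 := by
  have h : p (i, true) - p (i, false) ≠ 0 := sub_ne_zero.2 (fun h => by simpa using hp h)
  have h' : p (i, false) - p (i, true) ≠ 0 := sub_ne_zero.2 (fun h => by simpa using hp h)
  have h2 : (p (i, false) - p (i, true))⁻¹ = - (p (i, true) - p (i, false))⁻¹ := by
    rw [← inv_neg, neg_sub]
  ext a b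
  fin_cases a <;> fin_cases b <;> simp [wrE, vecMulVec, h2] <;> field_simp <;> ring

lemma wrE_mul (p : Fin d × Bool → F) (s r : Fin d × Bool) :
    wrE p s * wrE p r = ((p s - p (s.1, !s.2))⁻¹ * (p r - p (r.1, !r.2))⁻¹ * (p r - p (s.1, !s.2))) •
      vecMulVec ![1, p s] ![-p (r.1, !r.2), 1] := by
  ext a b
  fin_cases a <;> fin_cases b <;> simp [wrE, vecMulVec, Matrix.mul_apply, Fin.sum_univ_two] <;> ring

lemma wrE_idem (p : Fin d × Bool → F) (hp : Function.Injective p) (s : Fin d × Bool) :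
    wrE p s * wrE p s = wrE p s := by
  have h : p s - p (s.1, !s.2) ≠ 0 := sub_ne_zero.2 (fun h => by
    have := congrArg Prod.snd (hp h); simp at this)
  rw [wrE_mul, wrE]
  congr 1
  field_simp

lemma wrE_orth (p : Fin d × Bool → F) (i : Fin d) (b : Bool) :
    wrE p (i, b) * wrE p (i, !b) = 0 := by
  rw [wrE_mul]
  simp

/-- letter matrices -/
def wrM (p : Fin d × Bool → F) (t : F) (s : Fin d × Bool) : Matrix (Fin 2) (Fin 2) F :=
  t • wrE p s + t⁻¹ • wrE p (s.1, !s.2)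

lemma wrM_mul (p : Fin d × Bool → F) (hp : Function.Injective p) (t : F) (ht : t ≠ 0)
    (i : Fin d) (b : Bool) : wrM p t (i, b) * wrM p t (i, !b) = 1 := by
  have h1 := wrE_orth p i b
  have h2 := wrE_orth p i (!b)
  have h3 := wrE_idem p hp (i, b)
  have h4 := wrE_idem p hp (i, !b)
  have h5 : wrE p (i, b) + wrE p (i, !b) = 1 := by
    cases b
    · rw [add_comm]; exact wrE_add p hp i
    · exact wrE_add p hp i
  simp only [Bool.not_not] at h2
  simp [wrM, add_mul, mul_add, h1, h2, h3, h4, ht]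
  rw [add_comm]; exact h5

lemma wrM_det (p : Fin d × Bool → F) (hp : Function.Injective p) (t : F) (ht : t ≠ 0)
    (i : Fin d) : (wrM p t (i, true)).det = 1 := by
  have h : p (i, true) - p (i, false) ≠ 0 := sub_ne_zero.2 (fun h => by simpa using hp h)
  have h' : p (i, false) - p (i, true) ≠ 0 := sub_ne_zero.2 (fun h => by simpa using hp h)
  have h2 : (p (i, false) - p (i, true))⁻¹ = - (p (i, true) - p (i, false))⁻¹ := by
    rw [← inv_neg, neg_sub]
  simp [wrM, wrE, det_fin_two, vecMulVec, h2]
  field_simp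
  ring

def wrA (p : Fin d × Bool → F) (hp : Function.Injective p) (t : F) (ht : t ≠ 0) (i : Fin d) :
    SpecialLinearGroup (Fin 2) F := ⟨wrM p t (i, true), wrM_det p hp t ht i⟩

lemma wrA_cond (p : Fin d × Bool → F) (hp : Function.Injective p) (t : F) (ht : t ≠ 0)
    (s : Fin d × Bool) :
    slc (cond s.2 (wrA p hp t ht s.1) (wrA p hp t ht s.1)⁻¹) = wrM p t s := by
  obtain ⟨i, b⟩ := s
  cases b
  · have h1 : wrM p t (i, false) * wrM p t (i, true) = 1 := wrM_mul p hp t ht i false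
    have h2 : wrM p t (i, true) * slc (wrA p hp t ht i)⁻¹ = 1 := by
      have : wrA p hp t ht i * (wrA p hp t ht i)⁻¹ = 1 := mul_inv_cancel _
      have := congrArg Subtype.val this
      exact this
    exact (left_inv_eq_right_inv h1 h2).symm
  · rfl

open Polynomial in
/-- polynomial letter -/
noncomputable def wrN (p : Fin d × Bool → F) (s : Fin d × Bool) : Matrix (Fin 2) (Fin 2) F[X] :=
  fun i j => C (wrE p s i j) * X ^ 2 + C (wrE p (s.1, !s.2) i j)

open Polynomial in
lemma wrN_prod (p : Fin d × Bool → F) (L : List (Fin d × Bool)) : ∀ i j,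
    ((L.map (wrN p)).prod i j).natDegree ≤ 2 * L.length ∧
    ((L.map (wrN p)).prod i j).coeff (2 * L.length) = (L.map (wrE p)).prod i j := by
  induction L with
  | nil =>
    intro i j
    fin_cases i <;> fin_cases j <;> simp
  | cons s L ih =>
    intro i j
    have hd : ∀ a b, (wrN p s a b).natDegree ≤ 2 := by
      intro a b
      unfold wrN
      compute_degree
    have hc : ∀ a b, (wrN p s a b).coeff 2 = wrE p s a b := by
      intro a b
      simp [wrN]
    have hl : 2 * (s :: L).length = 2 + 2 * L.length := by simp; ring
    simp only [List.map_cons, List.prod_cons, Matrix.mul_apply, hl]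
    constructor
    · refine natDegree_sum_le_of_forall_le _ _ (fun k _ => ?_)
      exact (natDegree_mul_le).trans (add_le_add (hd _ _) (ih k j).1)
    · rw [finsetSum_coeff]
      refine Finset.sum_congr rfl (fun k _ => ?_)
      rw [coeff_mul_add_eq_of_natDegree_le (hd _ _) (ih k j).1, hc, (ih k j).2]

open Polynomial in
lemma wrN_eval (p : Fin d × Bool → F) (t : F) (ht : t ≠ 0) (L : List (Fin d × Bool)) :
    (evalRingHom t).mapMatrix (L.map (wrN p)).prod = t ^ L.length • (L.map (wrM p t)).prod := by
  induction L with
  | nil => simp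
  | cons s L ih =>
    have h : (evalRingHom t).mapMatrix (wrN p s) = t • wrM p t s := by
      ext a b
      simp [wrN, wrM]
      field_simp
    rw [List.map_cons, List.prod_cons, map_mul, ih, h, List.map_cons, List.prod_cons,
      smul_mul_smul_comm, List.length_cons, pow_succ']

lemma wrE_prod (p : Fin d × Bool → F) (hp : Function.Injective p) (L : List (Fin d × Bool)) :
    ∀ s, FreeGroup.IsReduced (s :: L) → ∃ c : F, c ≠ 0 ∧ ((s :: L).map (wrE p)).prod =
      c • vecMulVec ![1, p s] ![-p (((s :: L).getLast (by simp)).1, !((s :: L).getLast (by simp)).2), 1] := by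
  have h0 : ∀ s, p s - p (s.1, !s.2) ≠ 0 := fun s => sub_ne_zero.2 (fun h => by
    have := congrArg Prod.snd (hp h); simp at this)
  induction L with
  | nil =>
    intro s _
    exact ⟨_, inv_ne_zero (h0 s), by simp [wrE]⟩
  | cons r L ih =>
    intro s hs
    rw [FreeGroup.IsReduced, List.isChain_cons_cons] at hs
    obtain ⟨c, hc, h⟩ := ih r hs.2
    have h1 : p r - p (s.1, !s.2) ≠ 0 := sub_ne_zero.2 (fun h => by
      have h := hp h
      have h2 := hs.1 (by rw [h])
      rw [h] at h2
      simp at h2)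
    refine ⟨(p s - p (s.1, !s.2))⁻¹ * (p r - p (s.1, !s.2)) * c,
      mul_ne_zero (mul_ne_zero (inv_ne_zero (h0 s)) h1) hc, ?_⟩
    rw [List.map_cons, List.prod_cons, h]
    simp only [List.getLast_cons_cons]
    ext a b
    fin_cases a <;> fin_cases b <;> simp [wrE, vecMulVec, Matrix.mul_apply, Fin.sum_univ_two] <;> ring

open Polynomial in
/-- the traces of `w`-values on `SL_2(F)` avoid any finite set. -/
theorem wr_trace [Infinite F] (w : FreeGroup (Fin d)) (hw : w ≠ 1) (S : Finset F) :
    ∃ f : Fin d → SpecialLinearGroup (Fin 2) F,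
      (slc (FreeGroup.lift f w)).trace ∉ S := by
  obtain ⟨q⟩ : Nonempty ((Fin d × Bool) ↪ F) :=
    ⟨(Fintype.equivFin (Fin d × Bool)).toEmbedding.trans
      (Fin.valEmbedding.trans (Infinite.natEmbedding F))⟩
  obtain ⟨p, hp⟩ : ∃ p : Fin d × Bool → F, Function.Injective p := ⟨_, q.injective⟩
  set L := FreeGroup.reduceCyclically w.toWord with hL
  have hcyc : FreeGroup.IsCyclicallyReduced L :=
    FreeGroup.reduceCyclically.isCyclicallyReduced FreeGroup.isReduced_toWord
  have hconj := FreeGroup.reduceCyclically.conj_conjugator_reduceCyclically w.toWord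
  have hw2 : ∃ u : FreeGroup (Fin d), w = u * FreeGroup.mk L * u⁻¹ := by
    refine ⟨FreeGroup.mk (FreeGroup.reduceCyclically.conjugator w.toWord), ?_⟩
    rw [FreeGroup.inv_mk, FreeGroup.mul_mk, FreeGroup.mul_mk, hconj, FreeGroup.mk_toWord]
  obtain ⟨u, hu⟩ := hw2
  have hne : L ≠ [] := by
    intro h
    rw [h] at hu
    apply hw
    rw [hu, ← FreeGroup.one_eq_mk]; simp
  have htr : ((L.map (wrE p)).prod).trace ≠ 0 := by
    rcases hLL : L with _ | ⟨s, L'⟩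
    · exact absurd hLL hne
    · obtain ⟨c, hc, h⟩ := wrE_prod p hp L' s (hLL ▸ hcyc.isReduced)
      rw [h]
      have h2 := hcyc.2
      rw [hLL] at h2
      set r := (s :: L').getLast (by simp) with hr
      have h3 := h2 r (by rw [hr]; exact List.getLast?_eq_getLast_of_ne_nil (by simp)) s (by simp)
      have h1 : p s - p (r.1, !r.2) ≠ 0 := sub_ne_zero.2 (fun h => by
        have h := hp h
        have h4 := h3 (by rw [h])
        rw [h] at h4
        simp at h4)
      have : (c • vecMulVec ![1, p s] ![-p (r.1, !r.2), 1]).trace = c * (p s - p (r.1, !r.2)) := by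
        simp [trace_fin_two, vecMulVec]; ring
      rw [this]
      exact mul_ne_zero hc h1
  set k := L.length with hk
  have hk0 : 0 < k := List.length_pos_iff.2 hne
  set Q : F[X] := (L.map (wrN p)).prod.trace with hQ
  have hQc : Q.coeff (2 * k) ≠ 0 := by
    have : Q.coeff (2 * k) = ((L.map (wrE p)).prod).trace := by
      rw [hQ, Matrix.trace, Matrix.trace, finsetSum_coeff]
      exact Finset.sum_congr rfl (fun i _ => (wrN_prod p L i i).2)
    rwa [this]
  have hnz : ∀ c : F, Q - C c * X ^ k ≠ 0 := by
    intro c h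
    apply hQc
    have := congrArg (fun q : F[X] => q.coeff (2 * k)) h
    simpa [coeff_X_pow, show 2 * k ≠ k by omega] using this
  have hprod : X * ∏ c ∈ S, (Q - C c * X ^ k) ≠ 0 :=
    mul_ne_zero X_ne_zero (Finset.prod_ne_zero_iff.2 (fun c _ => hnz c))
  obtain ⟨t, ht⟩ : ∃ t, (X * ∏ c ∈ S, (Q - C c * X ^ k)).eval t ≠ 0 := by
    by_contra! h
    exact hprod (Polynomial.funext (by simpa using h))
  rw [eval_mul, eval_X, eval_prod] at ht
  have ht0 : t ≠ 0 := left_ne_zero_of_mul ht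
  have ht1 := Finset.prod_ne_zero_iff.1 (right_ne_zero_of_mul ht)
  refine ⟨wrA p hp t ht0, fun hmem => ht1 _ hmem ?_⟩
  have hval : (slc (FreeGroup.lift (wrA p hp t ht0) w)).trace = ((L.map (wrM p t)).prod).trace := by
    rw [hu, map_mul, map_mul, map_inv]
    set G := FreeGroup.lift (wrA p hp t ht0) u
    rw [map_mul, Matrix.trace_mul_comm, ← map_mul, ← mul_assoc,
      inv_mul_cancel, one_mul, FreeGroup.lift_mk]
    congr 1
    clear_value L
    clear * -
    induction L with
    | nil => simp
    | cons s L ih =>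
      rw [List.map_cons, List.prod_cons, map_mul, ih, wrA_cond, List.map_cons,
        List.prod_cons]
  rw [hval]
  have hev : Q.eval t = t ^ k * ((L.map (wrM p t)).prod).trace := by
    have h := congrArg Matrix.trace (wrN_eval p t ht0 L)
    rw [Matrix.trace_smul, smul_eq_mul] at h
    rw [← h, hQ]
    simp [Matrix.trace]
  rw [eval_sub, hev, eval_mul, eval_C, eval_pow, eval_X, mul_comm, sub_self]
end wordtrace


section wv
variable {F : Type*} [Field F] {d : ℕ}

/-- being a `w`-value -/
def WV {ι : Type*} [Fintype ι] [DecidableEq ι] (w : FreeGroup (Fin d)) (M : Matrix ι ι F) : Prop :=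
  ∃ f : Fin d → SpecialLinearGroup ι F, slc (FreeGroup.lift f w) = M

/-- nonscalar -/
def NS {ι : Type*} [DecidableEq ι] (M : Matrix ι ι F) : Prop := ∀ c : F, M ≠ c • 1

variable {ι κ : Type*} [Fintype ι] [DecidableEq ι] [Fintype κ] [DecidableEq κ]

lemma lift_hom {G H : Type*} [Group G] [Group H] (φ : G →* H) (w : FreeGroup (Fin d))
    (f : Fin d → G) : φ (FreeGroup.lift f w) = FreeGroup.lift (fun i => φ (f i)) w := by
  have : φ.comp (FreeGroup.lift f) = FreeGroup.lift (fun i => φ (f i)) := by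
    ext i; simp
  rw [← this]; rfl

lemma WV.one (w : FreeGroup (Fin d)) : WV w (1 : Matrix ι ι F) := by
  refine ⟨fun _ => 1, ?_⟩
  have : FreeGroup.lift (fun _ : Fin d => (1 : SpecialLinearGroup ι F)) = 1 := by
    ext i; simp
  rw [this]; rfl

lemma WV.det {w : FreeGroup (Fin d)} {M : Matrix ι ι F} (h : WV w M) : M.det = 1 := by
  obtain ⟨f, rfl⟩ := h
  exact (FreeGroup.lift f w).2

/-- conjugation hom -/
def conjHom (P Q : Matrix ι ι F) (h : P * Q = 1) :
    SpecialLinearGroup ι F →* SpecialLinearGroup ι F where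
  toFun A := ⟨P * A.1 * Q, by
    rw [det_mul, det_mul, A.2, mul_one, ← det_mul, h, det_one]⟩
  map_one' := Subtype.ext (by
    change P * 1 * Q = 1
    rw [mul_one, h])
  map_mul' A B := Subtype.ext (by
    have h' : Q * P = 1 := mul_eq_one_comm.1 h
    change P * (A.1 * B.1) * Q = (P * A.1 * Q) * (P * B.1 * Q)
    rw [show (P * A.1 * Q) * (P * B.1 * Q) = P * A.1 * (Q * P) * B.1 * Q by simp only [mul_assoc],
      h', mul_one]
    simp only [mul_assoc])

lemma WV.conj {w : FreeGroup (Fin d)} {M : Matrix ι ι F} (hM : WV w M) (P Q : Matrix ι ι F)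
    (h : P * Q = 1) : WV w (P * M * Q) := by
  obtain ⟨f, rfl⟩ := hM
  exact ⟨_, congrArg slc (lift_hom (conjHom P Q h) w f).symm⟩

/-- reindexing hom -/
def reHom (e : κ ≃ ι) : SpecialLinearGroup ι F →* SpecialLinearGroup κ F where
  toFun A := ⟨A.1.submatrix e e, by rw [det_submatrix_equiv_self, A.2]⟩
  map_one' := Subtype.ext (by
    change (1 : Matrix ι ι F).submatrix e e = 1
    simp)
  map_mul' A B := Subtype.ext (by
    change (A.1 * B.1).submatrix e e = A.1.submatrix e e * B.1.submatrix e e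
    simp [submatrix_mul_equiv])

lemma WV.reindex {w : FreeGroup (Fin d)} {M : Matrix ι ι F} (hM : WV w M) (e : κ ≃ ι) :
    WV w (M.submatrix e e) := by
  obtain ⟨f, rfl⟩ := hM
  exact ⟨_, congrArg slc (lift_hom (reHom e) w f).symm⟩

/-- block hom -/
def blHom : SpecialLinearGroup ι F × SpecialLinearGroup κ F →* SpecialLinearGroup (ι ⊕ κ) F where
  toFun A := ⟨fromBlocks A.1.1 0 0 A.2.1, by rw [det_fromBlocks_zero₁₂, A.1.2, A.2.2, mul_one]⟩
  map_one' := Subtype.ext (fromBlocks_one)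
  map_mul' A B := Subtype.ext (by
    change fromBlocks (A.1.1 * B.1.1) 0 0 (A.2.1 * B.2.1) =
      fromBlocks A.1.1 0 0 A.2.1 * fromBlocks B.1.1 0 0 B.2.1
    simp [fromBlocks_multiply])

lemma WV.block {w : FreeGroup (Fin d)} {M : Matrix ι ι F} {N : Matrix κ κ F}
    (hM : WV w M) (hN : WV w N) : WV w (fromBlocks M 0 0 N) := by
  obtain ⟨f, rfl⟩ := hM
  obtain ⟨g, rfl⟩ := hN
  refine ⟨_, (congrArg slc (lift_hom blHom w (fun i => (f i, g i)))).symm.trans ?_⟩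
  have h1 := lift_hom (MonoidHom.fst _ _) w (fun i => (f i, g i))
  have h2 := lift_hom (MonoidHom.snd _ _) w (fun i => (f i, g i))
  change (FreeGroup.lift (fun i => (f i, g i)) w).1 = FreeGroup.lift f w at h1
  change (FreeGroup.lift (fun i => (f i, g i)) w).2 = FreeGroup.lift g w at h2
  rw [← h1, ← h2]
  rfl

lemma companion2 (M : Matrix (Fin 2) (Fin 2) F) (hd : M.det = 1) (hM : NS M) :
    ∃ P Q : Matrix (Fin 2) (Fin 2) F, P * Q = 1 ∧ M = P * !![0, -1; 1, M.trace] * Q := by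
  have key : ∃ x y : F, x * (M 1 0 * x + M 1 1 * y) - y * (M 0 0 * x + M 0 1 * y) ≠ 0 := by
    by_contra! h
    have h1 := h 1 0
    have h2 := h 0 1
    have h3 := h 1 1
    apply hM (M 0 0)
    have e1 : M 1 0 = 0 := by linear_combination h1
    have e2 : M 0 1 = 0 := by linear_combination -h2
    have e3 : M 1 1 = M 0 0 := by linear_combination h3 - e1 + e2
    ext i j
    fin_cases i <;> fin_cases j <;> simp [e1, e2, e3]
  obtain ⟨x, y, hxy⟩ := key
  rw [det_fin_two] at hd
  set P : Matrix (Fin 2) (Fin 2) F := !![x, M 0 0 * x + M 0 1 * y; y, M 1 0 * x + M 1 1 * y] with hP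
  have hdet : P.det ≠ 0 := by
    rw [hP, det_fin_two_of]
    intro h; apply hxy; linear_combination h
  have hu : P * P⁻¹ = 1 := mul_nonsing_inv P (isUnit_iff_ne_zero.2 hdet)
  refine ⟨P, P⁻¹, hu, ?_⟩
  have : M * P = P * !![0, -1; 1, M.trace] := by
    ext i j
    fin_cases i <;> fin_cases j <;>
      simp [hP, Matrix.mul_apply, Fin.sum_univ_two, trace_fin_two]
    · linear_combination (-x) * hd
    · linear_combination (-y) * hd
  rw [← this, mul_assoc, hu, mul_one]

lemma ns_of_trace (M : Matrix (Fin 2) (Fin 2) F) (hd : M.det = 1) (h1 : M.trace ≠ 2)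
    (h2 : M.trace ≠ -2) : NS M := by
  intro c hc
  rw [hc] at hd h1 h2
  simp at hd h1 h2
  rcases hd with h | h
  · apply h1; linear_combination 2 * h
  · apply h2; linear_combination 2 * h

lemma WV.of_trace {w : FreeGroup (Fin d)} {M N : Matrix (Fin 2) (Fin 2) F} (hM : WV w M)
    (hN : N.det = 1) (ht : N.trace = M.trace) (h1 : M.trace ≠ 2) (h2 : M.trace ≠ -2) : WV w N := by
  obtain ⟨P, Q, hPQ, h⟩ := companion2 M hM.det (ns_of_trace M hM.det h1 h2)
  obtain ⟨P', Q', hPQ', h'⟩ := companion2 N hN (ns_of_trace N hN (ht ▸ h1) (ht ▸ h2))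
  have hQP : Q * P = 1 := mul_eq_one_comm.1 hPQ
  have e : !![0, -1; 1, N.trace] = Q * M * P := by
    rw [h, ht, show ∀ C, Q * (P * C * Q) * P = (Q * P) * C * (Q * P) by
      intro C; simp only [mul_assoc], hQP, one_mul, mul_one]
  rw [h', e]
  exact (hM.conj Q P hQP).conj P' Q' hPQ'

/-- product of two classes containing a triangular matrix -/
lemma lowtri_conj (s p q : F) (hs : s ≠ 0) (hs1 : s * s ≠ 1) :
    ∃ P Q : Matrix (Fin 2) (Fin 2) F, P * Q = 1 ∧
      !![s, 0; p, s⁻¹] = P * !![s, 0; q, s⁻¹] * Q := by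
  have h : s - s⁻¹ ≠ 0 := by
    intro h; apply hs1; field_simp at h; linear_combination h
  set k := (p - q) / (s - s⁻¹) with hk
  have hk' : k * (s - s⁻¹) = p - q := by rw [hk, div_mul_cancel₀ _ h]
  refine ⟨!![1, 0; k, 1], !![1, 0; -k, 1], ?_, ?_⟩
  · ext i j
    fin_cases i <;> fin_cases j <;> simp [Matrix.mul_apply, Fin.sum_univ_two]
  · ext i j
    fin_cases i <;> fin_cases j <;> simp [Matrix.mul_apply, Fin.sum_univ_two]
    linear_combination -hk'

lemma sl2_three [Infinite F] (a : Matrix (Fin 2) (Fin 2) F) (ha : a.det = 1) (hns : NS a) (x y z : F) :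
    ∃ X Y Z : Matrix (Fin 2) (Fin 2) F, X.det = 1 ∧ Y.det = 1 ∧ Z.det = 1 ∧ X.trace = x ∧
      Y.trace = y ∧ Z.trace = z ∧ a = X * Y * Z := by
  obtain ⟨s, hs0, hs1⟩ : ∃ s : F, s ≠ 0 ∧ s * s ≠ 1 := by
    classical
    obtain ⟨s, hs⟩ := Infinite.exists_notMem_finset ({0, 1, -1} : Finset F)
    simp at hs
    refine ⟨s, hs.1, fun h => ?_⟩
    have : (s - 1) * (s + 1) = 0 := by linear_combination h
    rcases mul_eq_zero.1 this with h | h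
    · exact hs.2.1 (by linear_combination h)
    · exact hs.2.2 (by linear_combination h)
  obtain ⟨P, Q, hPQ, h⟩ := companion2 a ha hns
  have hQP : Q * P = 1 := mul_eq_one_comm.1 hPQ
  set α := a.trace
  obtain ⟨K, K', hK, hKK⟩ := lowtri_conj s (z - α * s) (y - x * s) hs0 hs1
  have hK' : K' * K = 1 := mul_eq_one_comm.1 hK
  set A : Matrix (Fin 2) (Fin 2) F := !![0, -1; 1, α] with hA
  set X0 : Matrix (Fin 2) (Fin 2) F := !![0, -1; 1, x] with hX0
  set Y0 : Matrix (Fin 2) (Fin 2) F := !![y, s⁻¹; -s, 0] with hY0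
  set Z1 : Matrix (Fin 2) (Fin 2) F := !![z, s⁻¹; -s, 0] with hZ1
  set Z0 : Matrix (Fin 2) (Fin 2) F := !![0, -s⁻¹; s, z] with hZ0
  have e1 : A * Z1 = !![s, 0; z - α * s, s⁻¹] := by
    ext i j
    fin_cases i <;> fin_cases j <;> simp [hA, hZ1, Matrix.mul_apply, Fin.sum_univ_two]
    ring
  have e2 : X0 * Y0 = !![s, 0; y - x * s, s⁻¹] := by
    ext i j
    fin_cases i <;> fin_cases j <;> simp [hX0, hY0, Matrix.mul_apply, Fin.sum_univ_two]
    ring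
  have e3 : Z1 * Z0 = 1 := by
    ext i j
    fin_cases i <;> fin_cases j <;> simp [hZ0, hZ1, Matrix.mul_apply, Fin.sum_univ_two, hs0]
    ring
  have e4 : A = K * (X0 * Y0) * K' * Z0 := by
    rw [e2, ← hKK, ← e1, mul_assoc, e3, mul_one]
  have dc : ∀ (P Q M : Matrix (Fin 2) (Fin 2) F), P * Q = 1 → (P * M * Q).det = M.det := by
    intro P Q M h
    rw [det_mul, det_mul, mul_right_comm, ← det_mul, h, det_one, one_mul]
  have tc : ∀ (P Q M : Matrix (Fin 2) (Fin 2) F), P * Q = 1 → (P * M * Q).trace = M.trace := by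
    intro P Q M h
    rw [trace_mul_comm, ← mul_assoc, mul_eq_one_comm.1 h, one_mul]
  refine ⟨P * (K * X0 * K') * Q, P * (K * Y0 * K') * Q, P * Z0 * Q, ?_, ?_, ?_, ?_, ?_, ?_, ?_⟩
  · rw [dc _ _ _ hPQ, dc _ _ _ hK]; simp [hX0, det_fin_two]
  · rw [dc _ _ _ hPQ, dc _ _ _ hK]; simp [hY0, det_fin_two, hs0]
  · rw [dc _ _ _ hPQ]; simp [hZ0, det_fin_two, hs0]
  · rw [tc _ _ _ hPQ, tc _ _ _ hK]; simp [hX0, trace_fin_two]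
  · rw [tc _ _ _ hPQ, tc _ _ _ hK]; simp [hY0, trace_fin_two]
  · rw [tc _ _ _ hPQ]; simp [hZ0, trace_fin_two]
  · rw [h, e4, show P * (K * X0 * K') * Q * (P * (K * Y0 * K') * Q) * (P * Z0 * Q) =
      P * (K * X0 * K') * (Q * P) * (K * Y0 * K') * (Q * P) * Z0 * Q by simp only [mul_assoc], hQP,
      mul_one, mul_one,
      show P * (K * X0 * K') * (K * Y0 * K') * Z0 * Q = P * (K * X0 * (K' * K) * Y0 * K') * Z0 * Q
        by simp only [mul_assoc], hK', mul_one]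
    simp only [mul_assoc]

end wv


section gauss
variable {F : Type*} [Field F]

lemma mulunit_ne {m : Type*} [Fintype m] (v : Matrix m Unit F) (b : Matrix Unit m F)
    (h : v * b = 0) (hb : b ≠ 0) : v = 0 := by
  by_contra hv
  obtain ⟨i, hi⟩ : ∃ i, v i () ≠ 0 := by
    by_contra! h'; exact hv (by ext i j; exact h' i)
  obtain ⟨j, hj⟩ : ∃ j, b () j ≠ 0 := by
    by_contra! h'; exact hb (by ext i j; exact h' j)
  have := congrFun (congrFun h i) j
  simp [Matrix.mul_apply] at this
  tauto

variable {m : Type*} [Fintype m] [DecidableEq m]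

/-- the LDU shape with pivot `1` -/
def ldu {l m : Type*} [Fintype m] [DecidableEq m] [Fintype l] [DecidableEq l] (a : Matrix l l F)
    (c : Matrix m l F) (b : Matrix l m F)
    (e : Matrix m m F) : Matrix (l ⊕ m) (l ⊕ m) F :=
  fromBlocks 1 0 c 1 * fromBlocks a 0 0 e * fromBlocks 1 b 0 1

lemma ldu_eq {l m : Type*} [Fintype m] [DecidableEq m] [Fintype l] [DecidableEq l]
    (a : Matrix l l F) (c : Matrix m l F) (b : Matrix l m F)
    (e : Matrix m m F) : ldu a c b e = fromBlocks a (a * b) (c * a) (c * a * b + e) := by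
  simp [ldu, fromBlocks_multiply]

lemma ldu_det {l m : Type*} [Fintype m] [DecidableEq m] [Fintype l] [DecidableEq l]
    (a : Matrix l l F) (c : Matrix m l F) (b : Matrix l m F)
    (e : Matrix m m F) : (ldu a c b e).det = a.det * e.det := by
  simp [ldu, det_fromBlocks_zero₂₁]

lemma row_step (hm : 2 ≤ Fintype.card m) (a : Matrix Unit Unit F) (b : Matrix Unit m F)
    (c : Matrix m Unit F) (dd : Matrix m m F) (hb : b ≠ 0)
    (hdet : (fromBlocks a b c dd).det ≠ 0) :
    ∃ (ψ c' : Matrix m Unit F) (e : Matrix m m F), NS e ∧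
      fromBlocks 1 0 ψ 1 * fromBlocks a b c dd * fromBlocks 1 0 (-ψ) 1 = ldu 1 c' b e := by
  obtain ⟨j, hj⟩ : ∃ j, b () j ≠ 0 := by
    by_contra! h'; exact hb (by ext i j; exact h' j)
  obtain ⟨i, hij⟩ : ∃ i, i ≠ j := by
    have : Nontrivial m := Fintype.one_lt_card_iff_nontrivial.1 hm
    exact exists_ne j
  have key : ∀ ψ : Matrix m Unit F, b * ψ = a - 1 →
      fromBlocks 1 0 ψ 1 * fromBlocks a b c dd * fromBlocks 1 0 (-ψ) 1 =
      ldu 1 (ψ + c - dd * ψ) b (dd - c * b + dd * ψ * b) := by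
    intro ψ hψ
    rw [ldu_eq]
    have h1 : ψ * b * ψ = ψ * a - ψ := by rw [Matrix.mul_assoc, hψ, Matrix.mul_sub, Matrix.mul_one]
    simp [fromBlocks_multiply, Matrix.add_mul, Matrix.sub_mul, h1, hψ]
    abel
  obtain ⟨ψ₀, hψ₀⟩ : ∃ ψ : Matrix m Unit F, b * ψ = a - 1 := by
    refine ⟨Matrix.single j () ((a () () - 1) / b () j), ?_⟩
    ext x y
    simp [Matrix.mul_apply, Matrix.single_apply]
    field_simp
  obtain ⟨χ, hχ0, hχ⟩ : ∃ χ : Matrix m Unit F, χ ≠ 0 ∧ b * χ = 0 := by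
    refine ⟨Matrix.single i () (b () j) - Matrix.single j () (b () i), ?_, ?_⟩
    · intro h
      have := congrFun (congrFun h i) ()
      simp [Matrix.single_apply, hij.symm] at this
      exact hj this
    · ext x y
      simp [Matrix.mul_apply, Matrix.single_apply, mul_sub, Finset.sum_sub_distrib]
      ring
  by_contra! hcon
  have h1 : ∀ ψ : Matrix m Unit F, b * ψ = a - 1 → ∃ t : F, dd - c * b + dd * ψ * b = t • 1 := by
    intro ψ hψ
    by_contra! h
    exact hcon ψ _ _ h (key ψ hψ)
  obtain ⟨t, ht⟩ := h1 ψ₀ hψ₀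
  obtain ⟨t', ht'⟩ := h1 (ψ₀ + χ) (by rw [Matrix.mul_add, hψ₀, hχ, add_zero])
  have h2 : dd * χ * b = (t' - t) • 1 := by
    rw [sub_smul, ← ht, ← ht', Matrix.mul_add, Matrix.add_mul]; abel
  have h3 : (t' - t) • χ = 0 := by
    have : dd * χ * b * χ = (t' - t) • χ := by rw [h2]; simp
    rw [← this, Matrix.mul_assoc, hχ, Matrix.mul_zero]
  have h4 : t' - t = 0 := (smul_eq_zero.1 h3).resolve_right hχ0
  rw [h4, zero_smul] at h2
  have h5 := mulunit_ne _ _ h2 hb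
  have h6 : t • χ = 0 := by
    have : (dd - c * b + dd * ψ₀ * b) * χ = t • χ := by rw [ht]; simp
    rw [← this, Matrix.add_mul, Matrix.sub_mul, h5, Matrix.mul_assoc, hχ, Matrix.mul_assoc, hχ]
    simp
  have h7 : t = 0 := (smul_eq_zero.1 h6).resolve_right hχ0
  rw [h7, zero_smul] at ht
  have h8 := congrArg Matrix.det (key ψ₀ hψ₀)
  rw [ht, ldu_det, det_mul, det_mul, det_fromBlocks_zero₁₂, det_fromBlocks_zero₁₂] at h8
  have : Nonempty m := ⟨j⟩
  simp at h8
  exact hdet h8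

lemma exists_row_noneig {ι : Type*} [Fintype ι] [DecidableEq ι] (e : Matrix ι ι F) (he : NS e) :
    ∃ φ : ι → F, ∀ μ : F, φ ᵥ* e ≠ μ • φ := by
  by_contra! h
  choose μ hμ using h
  have hd : ∀ i j, i ≠ j → e i j = 0 := by
    intro i j hij
    have := congrFun (hμ (Pi.single i 1)) j
    simpa [hij.symm, Pi.single_apply] using this
  rcases isEmpty_or_nonempty ι with hι | ⟨⟨i0⟩⟩
  · exact he 0 (by ext i; exact hι.elim i)
  · apply he (e i0 i0)
    ext i j
    by_cases hij : i = j
    · subst hij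
      by_cases hi : i = i0
      · subst hi; simp
      · have h1 := congrFun (hμ (Pi.single i 1 + Pi.single i0 1)) i
        have h2 := congrFun (hμ (Pi.single i 1 + Pi.single i0 1)) i0
        simp [Matrix.add_vecMul, hd i i0 hi, hd i0 i (Ne.symm hi), hi, Ne.symm hi, Pi.single_apply] at h1 h2
        simp [h1, h2]
    · simp [hd i j hij, hij]

lemma exists_row {ι : Type*} [Fintype ι] [DecidableEq ι] [Infinite F] (e : Matrix ι ι F) (he : NS e)
    (c : ι → F) (hc : c ≠ 0) :
    ∃ φ : ι → F, φ ⬝ᵥ c ≠ 0 ∧ ∀ μ : F, φ ᵥ* e ≠ μ • φ := by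
  classical
  obtain ⟨φ₁, h₁⟩ := exists_row_noneig e he
  by_contra! hcon
  have hz : φ₁ ⬝ᵥ c = 0 := by
    by_contra h
    obtain ⟨μ, hμ⟩ := hcon φ₁ h
    exact h₁ μ hμ
  obtain ⟨i, hi⟩ : ∃ i, c i ≠ 0 := Function.ne_iff.1 hc
  set φ₀ : ι → F := Pi.single i 1 with hφ₀
  have h0 : φ₀ ⬝ᵥ c ≠ 0 := by simpa [hφ₀] using hi
  obtain ⟨μ, hμ⟩ := hcon φ₀ h0
  have hs : ∀ s : F, s ≠ 0 → ∃ ν, φ₁ ᵥ* e = ν • φ₁ + (s * (ν - μ)) • φ₀ := by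
    intro s hs
    obtain ⟨ν, hν⟩ := hcon (φ₁ + s • φ₀) (by
      rw [add_dotProduct, hz, zero_add, smul_dotProduct, smul_eq_mul]
      exact mul_ne_zero hs h0)
    refine ⟨ν, ?_⟩
    rw [Matrix.add_vecMul, Matrix.smul_vecMul, hμ] at hν
    rw [eq_sub_of_add_eq hν]
    module
  obtain ⟨s, hs'⟩ := Infinite.exists_notMem_finset ({0, 1} : Finset F)
  simp at hs'
  obtain ⟨ν, hν⟩ := hs 1 one_ne_zero
  obtain ⟨ν', hν'⟩ := hs s hs'.1
  have h3 : (1 * (ν - μ)) = s * (ν' - μ) := by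
    have := congrArg (· ⬝ᵥ c) (hν.symm.trans hν')
    simp only [add_dotProduct, smul_dotProduct, hz, mul_zero, zero_add, smul_eq_mul] at this
    exact mul_right_cancel₀ h0 this
  have h4 : (ν - ν') • φ₁ = 0 := by
    have := hν.symm.trans hν'
    rw [h3] at this
    rw [sub_smul, add_right_cancel this, sub_self]
  rcases smul_eq_zero.1 h4 with h | h
  · have h5 : ν' = ν := by linear_combination -h
    rw [h5] at h3
    have : (1 - s) * (ν - μ) = 0 := by linear_combination h3
    rcases mul_eq_zero.1 this with h | h
    · exact hs'.2 (by linear_combination -h)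
    · rw [h] at hν
      exact h₁ ν (by simpa using hν)
  · exact h₁ 0 (by simp [h])

lemma exists_inv_row {ι : Type*} [Fintype ι] [DecidableEq ι] (i₀ : ι) (φ : ι → F) (hφ : φ ≠ 0) :
    ∃ P Q : Matrix ι ι F, P * Q = 1 ∧ P i₀ = φ := by
  obtain ⟨j, hj⟩ : ∃ i, φ i ≠ 0 := Function.ne_iff.1 hφ
  set P : Matrix ι ι F := ((1 : Matrix ι ι F).updateRow j φ).submatrix (Equiv.swap i₀ j) id with hP
  have hdet : P.det ≠ 0 := by
    have h1 : ((1 : Matrix ι ι F).updateRow j φ).det = φ j := by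
      have := Matrix.cramer_transpose_apply (1 : Matrix ι ι F) φ j
      rw [← this]
      simp
    rw [hP, det_permute, h1]
    refine mul_ne_zero ?_ hj
    rcases Int.units_eq_one_or (Equiv.Perm.sign (Equiv.swap i₀ j)) with h | h <;> simp [h]
  refine ⟨P, P⁻¹, mul_nonsing_inv P (isUnit_iff_ne_zero.2 hdet), ?_⟩
  ext k
  simp [hP]

lemma step [Infinite F] (hm : 2 ≤ Fintype.card m) (g : Matrix (Unit ⊕ m) (Unit ⊕ m) F) (hg : NS g)
    (hdet : g.det ≠ 0) (c : Unit ⊕ m → F) (hc : c ≠ 0) :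
    ∃ (P Q : Matrix (Unit ⊕ m) (Unit ⊕ m) F) (c' : Matrix m Unit F) (b : Matrix Unit m F)
      (e : Matrix m m F), P * Q = 1 ∧ (P *ᵥ c) (Sum.inl ()) ≠ 0 ∧ b ≠ 0 ∧ NS e ∧
      P * g * Q = ldu 1 c' b e := by
  obtain ⟨φ, hφc, hφ⟩ := exists_row g hg c hc
  have hφ0 : φ ≠ 0 := by rintro rfl; simp at hφc
  obtain ⟨P, Q, hPQ, hP⟩ := exists_inv_row (Sum.inl ()) φ hφ0
  have hQP : Q * P = 1 := mul_eq_one_comm.1 hPQ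
  set g' := P * g * Q with hg'
  have hb : g'.toBlocks₁₂ ≠ 0 := by
    intro h
    apply hφ (g' (Sum.inl ()) (Sum.inl ()))
    have e1 : φ ᵥ* g = (g' * P) (Sum.inl ()) := by
      rw [hg', Matrix.mul_assoc, hQP, Matrix.mul_one, ← hP]
      rfl
    rw [e1]
    ext k
    rw [Matrix.mul_apply, Fintype.sum_sum_type]
    have : ∀ x, g' (Sum.inl ()) (Sum.inr x) = 0 := fun x => congrFun (congrFun h ()) x
    simp [this, hP]
  have hdet' : g'.det ≠ 0 := by
    rw [hg', det_mul, det_mul, mul_right_comm, ← det_mul, hPQ, det_one, one_mul]; exact hdet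
  rw [← fromBlocks_toBlocks g'] at hdet'
  obtain ⟨ψ, c', e, he, hh⟩ := row_step hm _ _ _ _ hb hdet'
  rw [fromBlocks_toBlocks] at hh
  refine ⟨fromBlocks 1 0 ψ 1 * P, Q * fromBlocks 1 0 (-ψ) 1, c', _, e, ?_, ?_, hb, he, ?_⟩
  · rw [Matrix.mul_assoc, ← Matrix.mul_assoc P, hPQ, Matrix.one_mul]
    simp [fromBlocks_multiply]
  · rw [← Matrix.mulVec_mulVec]
    have : ∀ v : Unit ⊕ m → F, (fromBlocks (1 : Matrix Unit Unit F) 0 ψ 1 *ᵥ v) (Sum.inl ()) = v (Sum.inl ()) := by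
      intro v
      simp [Matrix.mulVec, dotProduct]
    rw [this]
    change P (Sum.inl ()) ⬝ᵥ c ≠ 0
    rwa [hP]
  · rw [← hh, hg']
    simp only [Matrix.mul_assoc]

lemma NS.transpose {ι : Type*} [DecidableEq ι] {M : Matrix ι ι F} (h : NS M) : NS Mᵀ := by
  intro c hc
  apply h c
  rw [← M.transpose_transpose, hc]; simp

lemma stepT [Infinite F] (hm : 2 ≤ Fintype.card m) (g : Matrix (Unit ⊕ m) (Unit ⊕ m) F) (hg : NS g)
    (hdet : g.det ≠ 0) (b : Unit ⊕ m → F) (hb : b ≠ 0) :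
    ∃ (P Q : Matrix (Unit ⊕ m) (Unit ⊕ m) F) (c' : Matrix m Unit F) (b' : Matrix Unit m F)
      (e : Matrix m m F), P * Q = 1 ∧ (b ᵥ* Q) (Sum.inl ()) ≠ 0 ∧ NS e ∧
      P * g * Q = ldu 1 c' b' e := by
  obtain ⟨P, Q, c', b', e, h1, h2, _, h4, h5⟩ := step hm gᵀ hg.transpose (by simpa using hdet) b hb
  refine ⟨Qᵀ, Pᵀ, b'ᵀ, c'ᵀ, eᵀ, ?_, ?_, h4.transpose, ?_⟩
  · rw [← transpose_mul, h1, transpose_one]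
  · rwa [vecMul_transpose]
  · have := congrArg Matrix.transpose h5
    rw [transpose_mul, transpose_mul, transpose_transpose, ← Matrix.mul_assoc] at this
    rw [this, ldu_eq, ldu_eq, fromBlocks_transpose]
    simp

/-- `Fin 2 ⊕ m ≃ Unit ⊕ (Unit ⊕ m)` -/
def sig (m : Type*) : Fin 2 ⊕ m ≃ Unit ⊕ (Unit ⊕ m) where
  toFun := Sum.elim ![Sum.inl (), Sum.inr (Sum.inl ())] (fun x => Sum.inr (Sum.inr x))
  invFun := Sum.elim (fun _ => Sum.inl 0) (Sum.elim (fun _ => Sum.inl 1) Sum.inr)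
  left_inv := by
    rintro (i | x)
    · fin_cases i <;> rfl
    · rfl
  right_inv := by rintro (_ | _ | x) <;> rfl

lemma regroup (c : Matrix (Unit ⊕ m) Unit F) (b : Matrix Unit (Unit ⊕ m) F) (c' : Matrix m Unit F)
    (b' : Matrix Unit m F) (e : Matrix m m F) :
    ∃ (L : Matrix m (Fin 2) F) (U : Matrix (Fin 2) m F),
    (ldu 1 c b (ldu 1 c' b' e)).submatrix (sig m) (sig m) =
      ldu !![1, b () (Sum.inl ()); c (Sum.inl ()) (), 1 + c (Sum.inl ()) () * b () (Sum.inl ())] L U e := by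
  refine ⟨Matrix.of fun i => ![c (Sum.inr i) () - c (Sum.inl ()) () * c' i (), c' i ()],
    Matrix.of ![fun j => b () (Sum.inr j) - b () (Sum.inl ()) * b' () j, fun j => b' () j], ?_⟩
  simp only [ldu_eq]
  ext i j
  rcases i with i | i <;> rcases j with j | j
  · fin_cases i <;> fin_cases j <;> simp [sig, Matrix.mul_apply]
    ring
  · fin_cases i <;> simp [sig, Matrix.mul_apply, Fin.sum_univ_two] <;> ring
  · fin_cases j <;> simp [sig, Matrix.mul_apply, Fin.sum_univ_two] <;> ring
  · simp [sig, Matrix.mul_apply, Fin.sum_univ_two]; ring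

lemma two_step [Infinite F] (hm : 2 ≤ Fintype.card m) (g : Matrix (Fin 2 ⊕ m) (Fin 2 ⊕ m) F)
    (hg : NS g) (hdet : g.det ≠ 0) :
    ∃ (P Q : Matrix (Fin 2 ⊕ m) (Fin 2 ⊕ m) F) (a : Matrix (Fin 2) (Fin 2) F)
      (L : Matrix m (Fin 2) F) (U : Matrix (Fin 2) m F) (e : Matrix m m F), P * Q = 1 ∧
      a.det = 1 ∧ NS a ∧ NS e ∧ P * g * Q = ldu a L U e := by
  set g₁ := g.submatrix (sig m).symm (sig m).symm with hg₁
  have hns1 : NS g₁ := by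
    intro c hc
    apply hg c
    have := congrArg (fun M => M.submatrix (sig m) (sig m)) hc
    simpa [hg₁, submatrix_smul] using this
  have hdet1 : g₁.det ≠ 0 := by rwa [hg₁, det_submatrix_equiv_self]
  obtain ⟨P₁, Q₁, c, b, e, h1, -, hb, he, h2⟩ := step (by simp; omega) g₁ hns1 hdet1
    (fun _ => 1) (by intro h; simpa using congrFun h (Sum.inl ()))
  have hdete : e.det ≠ 0 := by
    have := congrArg Matrix.det h2
    rw [det_mul, det_mul, mul_right_comm, ← det_mul, h1, det_one, one_mul, ldu_det, det_one,
      one_mul] at this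
    rwa [← this]
  have hb' : b () ≠ 0 := by
    intro h; apply hb; ext i j; exact congrFun h j
  obtain ⟨P₂, Q₂, c', b', e', h3, hu, he', h4⟩ := stepT hm e he hdete (b ()) hb'
  obtain ⟨L, U, hLU⟩ := regroup (P₂ * c) (b * Q₂) c' b' e'
  set P := fromBlocks 1 0 0 P₂ * P₁ with hP
  set Q := Q₁ * fromBlocks 1 0 0 Q₂ with hQ
  have h5 : P * g₁ * Q = ldu 1 (P₂ * c) (b * Q₂) (ldu 1 c' b' e') := by
    rw [hP, hQ, show fromBlocks 1 0 0 P₂ * P₁ * g₁ * (Q₁ * fromBlocks 1 0 0 Q₂) =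
      fromBlocks 1 0 0 P₂ * (P₁ * g₁ * Q₁) * fromBlocks 1 0 0 Q₂ by simp only [Matrix.mul_assoc],
      h2, ← h4, ldu_eq, ldu_eq]
    simp [fromBlocks_multiply, Matrix.mul_add, Matrix.add_mul, Matrix.mul_assoc]
  have h6 : P * Q = 1 := by
    rw [hP, hQ, Matrix.mul_assoc, ← Matrix.mul_assoc P₁, h1, Matrix.one_mul]
    simp [fromBlocks_multiply, h3]
  refine ⟨P.submatrix (sig m) (sig m), Q.submatrix (sig m) (sig m),
    !![1, (b * Q₂) () (Sum.inl ()); (P₂ * c) (Sum.inl ()) (),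
      1 + (P₂ * c) (Sum.inl ()) () * (b * Q₂) () (Sum.inl ())], L, U, e', ?_, ?_, ?_, he', ?_⟩
  rotate_left 3
  · have hgg : g₁.submatrix (sig m) (sig m) = g := by simp [hg₁]
    rw [← hLU, ← h5, ← submatrix_mul_equiv (P * g₁) Q _ (sig m) _,
      ← submatrix_mul_equiv P g₁ _ (sig m) _, hgg]
  · rw [submatrix_mul_equiv, h6]; simp
  · simp [det_fin_two]; ring
  · intro t ht
    have := congrFun (congrFun ht 0) 1
    simp at this
    exact hu this
end gauss


section final
variable {F : Type*} [Field F]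

/-- `x^2 - t x + 1` -/
def qp {ι : Type*} [Fintype ι] [DecidableEq ι] (t : F) (x : Matrix ι ι F) : Matrix ι ι F :=
  x * x - t • x + 1

variable {ι κ : Type*} [Fintype ι] [DecidableEq ι] [Fintype κ] [DecidableEq κ]

lemma sylvester (x : Matrix ι ι F) (R : Matrix κ κ F) (t : F) (hx : qp t x = 0)
    (hR : (qp t R).det ≠ 0) (c : Matrix κ ι F) : ∃ S : Matrix κ ι F, S * x - R * S = c := by
  let T : Matrix κ ι F →ₗ[F] Matrix κ ι F :=
    { toFun := fun S => S * x - R * S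
      map_add' := fun S S' => by simp only [Matrix.add_mul, Matrix.mul_add]; abel
      map_smul' := fun r S => by simp [smul_sub] }
  have hinj : Function.Injective T := by
    rw [injective_iff_map_eq_zero]
    intro S hS
    have h1 : S * x = R * S := sub_eq_zero.1 hS
    have h2 : qp t R * S = S * qp t x := by
      simp only [qp, Matrix.add_mul, Matrix.sub_mul, Matrix.mul_add, Matrix.mul_sub,
        Matrix.smul_mul, Matrix.mul_smul, Matrix.one_mul, Matrix.mul_one]
      rw [← Matrix.mul_assoc S, h1, Matrix.mul_assoc, Matrix.mul_assoc, h1]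
    rw [hx, Matrix.mul_zero] at h2
    have h3 : (qp t R)⁻¹ * qp t R = 1 := nonsing_inv_mul _ (isUnit_iff_ne_zero.2 hR)
    rw [← Matrix.one_mul S, ← h3, Matrix.mul_assoc, h2, Matrix.mul_zero]
  exact LinearMap.injective_iff_surjective.1 hinj c

lemma qp_transpose (t : F) (x : Matrix ι ι F) : qp t xᵀ = (qp t x)ᵀ := by
  simp [qp, transpose_mul]

lemma qp_lower (t : F) (x : Matrix ι ι F) (R : Matrix κ κ F) (c : Matrix κ ι F) :
    (qp t (fromBlocks x 0 c R)).det = (qp t x).det * (qp t R).det := by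
  have : qp t (fromBlocks x 0 c R) = fromBlocks (qp t x) 0 (c * x + R * c - t • c) (qp t R) := by
    simp [qp, fromBlocks_multiply, fromBlocks_smul, ← fromBlocks_one, sub_eq_add_neg, fromBlocks_neg,
      fromBlocks_add]
  rw [this, det_fromBlocks_zero₁₂]

lemma qp_upper (t : F) (x : Matrix ι ι F) (R : Matrix κ κ F) (c : Matrix ι κ F) :
    (qp t (fromBlocks x c 0 R)).det = (qp t x).det * (qp t R).det := by
  have : qp t (fromBlocks x c 0 R) = fromBlocks (qp t x) (x * c + c * R - t • c) 0 (qp t R) := by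
    simp [qp, fromBlocks_multiply, fromBlocks_smul, ← fromBlocks_one, sub_eq_add_neg, fromBlocks_neg,
      fromBlocks_add]
  rw [this, det_fromBlocks_zero₂₁]

lemma qp_conj (t : F) (P Q M : Matrix ι ι F) (h : P * Q = 1) :
    (qp t (P * M * Q)).det = (qp t M).det := by
  have hQP : Q * P = 1 := mul_eq_one_comm.1 h
  have : qp t (P * M * Q) = P * qp t M * Q := by
    simp only [qp, Matrix.mul_add, Matrix.mul_sub, Matrix.add_mul, Matrix.sub_mul, Matrix.mul_one, h,
      Matrix.mul_smul, Matrix.smul_mul]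
    rw [show P * M * Q * (P * M * Q) = P * M * (Q * P) * M * Q by simp only [Matrix.mul_assoc], hQP,
      Matrix.mul_one]
    simp only [Matrix.mul_assoc]
  rw [this, det_mul, det_mul, mul_right_comm, ← det_mul, h, det_one, one_mul]

variable {d : ℕ}

lemma WV.lower {w : FreeGroup (Fin d)} {x : Matrix ι ι F} {R : Matrix κ κ F} (t : F)
    (hx : qp t x = 0) (hR : (qp t R).det ≠ 0) (h1 : WV w x) (h2 : WV w R) (c : Matrix κ ι F) :
    WV w (fromBlocks x 0 c R) := by
  obtain ⟨S, hS⟩ := sylvester x R t hx hR c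
  have := (h1.block h2).conj (fromBlocks 1 0 S 1) (fromBlocks 1 0 (-S) 1)
    (by simp [fromBlocks_multiply])
  convert this using 1
  simp [fromBlocks_multiply, ← hS, sub_eq_add_neg]

lemma WV.upper {w : FreeGroup (Fin d)} {x : Matrix ι ι F} {R : Matrix κ κ F} (t : F)
    (hx : qp t x = 0) (hR : (qp t R).det ≠ 0) (h1 : WV w x) (h2 : WV w R) (c : Matrix ι κ F) :
    WV w (fromBlocks x c 0 R) := by
  obtain ⟨S, hS⟩ := sylvester xᵀ Rᵀ t (by rw [qp_transpose, hx, transpose_zero])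
    (by rwa [qp_transpose, det_transpose]) cᵀ
  have hS' : x * Sᵀ - Sᵀ * R = c := by
    have := congrArg Matrix.transpose hS
    simpa [transpose_mul] using this
  have := (h1.block h2).conj (fromBlocks 1 (-Sᵀ) 0 1) (fromBlocks 1 Sᵀ 0 1)
    (by simp [fromBlocks_multiply])
  convert this using 1
  simp [fromBlocks_multiply, ← hS', sub_eq_add_neg]

variable {d₁ d₂ d₃ : ℕ}

/-- the decomposition we look for -/
def Dec (w₁ : FreeGroup (Fin d₁)) (w₂ : FreeGroup (Fin d₂)) (w₃ : FreeGroup (Fin d₃))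
    (S : Finset F) (g : Matrix ι ι F) : Prop :=
  ∃ X Y Z : Matrix ι ι F, g = X * Y * Z ∧ WV w₁ X ∧ WV w₂ Y ∧ WV w₃ Z ∧
    ∀ t ∈ S, (qp t X).det ≠ 0 ∧ (qp t Z).det ≠ 0

variable {w₁ : FreeGroup (Fin d₁)} {w₂ : FreeGroup (Fin d₂)} {w₃ : FreeGroup (Fin d₃)}

lemma Dec.conj {S : Finset F} {g : Matrix ι ι F} (P Q : Matrix ι ι F) (h : P * Q = 1)
    (hD : Dec w₁ w₂ w₃ S (P * g * Q)) : Dec w₁ w₂ w₃ S g := by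
  have hQP : Q * P = 1 := mul_eq_one_comm.1 h
  obtain ⟨X, Y, Z, e, h1, h2, h3, h4⟩ := hD
  refine ⟨Q * X * P, Q * Y * P, Q * Z * P, ?_, h1.conj Q P hQP, h2.conj Q P hQP, h3.conj Q P hQP,
    fun t ht => ?_⟩
  · rw [show Q * X * P * (Q * Y * P) * (Q * Z * P) = Q * (X * (P * Q) * Y * (P * Q) * Z) * P by
      simp only [Matrix.mul_assoc], h, Matrix.mul_one, Matrix.mul_one, ← e,
      show Q * (P * g * Q) * P = (Q * P) * g * (Q * P) by simp only [Matrix.mul_assoc], hQP]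
    simp
  · rw [qp_conj t Q P X hQP, qp_conj t Q P Z hQP]
    exact h4 t ht

lemma qp_submatrix (t : F) (M : Matrix ι ι F) (e : κ ≃ ι) :
    qp t (M.submatrix e e) = (qp t M).submatrix e e := by
  ext i j
  simp [qp, submatrix_mul_equiv, Matrix.one_apply]

lemma Dec.reindex {S : Finset F} {g : Matrix ι ι F} (e : κ ≃ ι)
    (hD : Dec w₁ w₂ w₃ S (g.submatrix e e)) : Dec w₁ w₂ w₃ S g := by
  obtain ⟨X, Y, Z, h, h1, h2, h3, h4⟩ := hD
  refine ⟨_, _, _, ?_, h1.reindex e.symm, h2.reindex e.symm, h3.reindex e.symm, fun t ht => ?_⟩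
  · rw [submatrix_mul_equiv, submatrix_mul_equiv, ← h]
    simp
  · rw [qp_submatrix, qp_submatrix, det_submatrix_equiv_self, det_submatrix_equiv_self]
    exact h4 t ht

lemma NS.reindex {g : Matrix ι ι F} (hg : NS g) (e : κ ≃ ι) : NS (g.submatrix e e) := by
  intro c hc
  apply hg c
  have := congrArg (fun M => M.submatrix e.symm e.symm) hc
  simpa [submatrix_smul] using this

lemma Dec.combine (S : Finset F) (x y z : Matrix ι ι F) (tx tz : F) (hx : qp tx x = 0)
    (hz : qp tz z = 0) (h1 : WV w₁ x) (h2 : WV w₂ y) (h3 : WV w₃ z)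
    (hS : ∀ t ∈ S, (qp t x).det ≠ 0 ∧ (qp t z).det ≠ 0)
    (e : Matrix κ κ F) (S' : Finset F) (htx : tx ∈ S') (htz : tz ∈ S') (hSS : S ⊆ S')
    (he : Dec w₁ w₂ w₃ S' e) (L : Matrix κ ι F) (U : Matrix ι κ F) :
    Dec w₁ w₂ w₃ S (ldu (x * y * z) L U e) := by
  obtain ⟨X, Y, Z, rfl, i1, i2, i3, i4⟩ := he
  refine ⟨fromBlocks x 0 (L * x) X, fromBlocks y 0 0 Y, fromBlocks z (z * U) 0 Z, ?_,
    WV.lower tx hx (i4 _ htx).1 h1 i1 _, h2.block i2, WV.upper tz hz (i4 _ htz).2 h3 i3 _, ?_⟩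
  · simp [ldu_eq, fromBlocks_multiply, Matrix.mul_assoc]
  · intro t ht
    rw [qp_lower, qp_upper]
    exact ⟨mul_ne_zero (hS t ht).1 (i4 t (hSS ht)).1, mul_ne_zero (hS t ht).2 (i4 t (hSS ht)).2⟩

lemma qp_two (t : F) (x : Matrix (Fin 2) (Fin 2) F) (hd : x.det = 1) :
    qp t x = (x.trace - t) • x := by
  rw [det_fin_two] at hd
  ext i j
  fin_cases i <;> fin_cases j <;>
    simp [qp, Matrix.mul_apply, Fin.sum_univ_two, trace_fin_two]
  · linear_combination -hd
  · ring
  · ring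
  · linear_combination -hd

/-- the `2 × 2` data -/
lemma two_data [Infinite F] (hw₁ : w₁ ≠ 1) (hw₂ : w₂ ≠ 1) (hw₃ : w₃ ≠ 1) (S : Finset F)
    (a : Matrix (Fin 2) (Fin 2) F) (ha : a.det = 1) (hns : NS a) :
    ∃ x y z : Matrix (Fin 2) (Fin 2) F, a = x * y * z ∧ WV w₁ x ∧ WV w₂ y ∧ WV w₃ z ∧
      qp x.trace x = 0 ∧ qp z.trace z = 0 ∧ ∀ t ∈ S, (qp t x).det ≠ 0 ∧ (qp t z).det ≠ 0 := by
  classical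
  obtain ⟨f₁, h₁⟩ := wr_trace w₁ hw₁ (insert 2 (insert (-2) S))
  obtain ⟨f₂, h₂⟩ := wr_trace w₂ hw₂ (insert 2 (insert (-2) S))
  obtain ⟨f₃, h₃⟩ := wr_trace w₃ hw₃ (insert 2 (insert (-2) S))
  simp only [Finset.mem_insert, not_or] at h₁ h₂ h₃
  obtain ⟨x, y, z, dx, dy, dz, tx, ty, tz, h⟩ := sl2_three a ha hns _ _ _
  have key : ∀ x : Matrix (Fin 2) (Fin 2) F, x.det = 1 → x.trace ∉ S →
      ∀ t ∈ S, (qp t x).det ≠ 0 := by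
    intro x dx tx t ht
    rw [qp_two t x dx, det_smul, dx, mul_one]
    refine pow_ne_zero _ (sub_ne_zero.2 ?_)
    rintro rfl
    exact tx ht
  refine ⟨x, y, z, h, WV.of_trace ⟨f₁, rfl⟩ dx tx h₁.1 h₁.2.1,
    WV.of_trace ⟨f₂, rfl⟩ dy ty h₂.1 h₂.2.1, WV.of_trace ⟨f₃, rfl⟩ dz tz h₃.1 h₃.2.1, ?_, ?_, ?_⟩
  · rw [qp_two _ _ dx]; simp
  · rw [qp_two _ _ dz]; simp
  · intro t ht
    exact ⟨key x dx (tx ▸ h₁.2.2) t ht, key z dz (tz ▸ h₃.2.2) t ht⟩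

theorem dec_even [Infinite F] (hw₁ : w₁ ≠ 1) (hw₂ : w₂ ≠ 1) (hw₃ : w₃ ≠ 1) (k : ℕ) :
    ∀ (S : Finset F) (g : Matrix (Fin (2 * k + 2)) (Fin (2 * k + 2)) F), g.det = 1 → NS g →
      Dec w₁ w₂ w₃ S g := by
  classical
  induction k with
  | zero =>
    intro S g hd hns
    obtain ⟨x, y, z, h, h1, h2, h3, -, -, h4⟩ := two_data hw₁ hw₂ hw₃ S g hd hns
    exact ⟨x, y, z, h, h1, h2, h3, h4⟩
  | succ k ih =>
    intro S g hd hns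
    let σ : Fin 2 ⊕ Fin (2 * k + 2) ≃ Fin (2 * (k + 1) + 2) :=
      finSumFinEquiv.trans (finCongr (by ring))
    apply Dec.reindex σ
    obtain ⟨P, Q, a, L, U, e, hPQ, ha, hna, hne, h⟩ := two_step (by simp) (g.submatrix σ σ)
      (hns.reindex σ) (by rw [det_submatrix_equiv_self, hd]; exact one_ne_zero)
    apply Dec.conj P Q hPQ
    have hde : e.det = 1 := by
      have := congrArg Matrix.det h
      rw [det_mul, det_mul, mul_right_comm, ← det_mul, hPQ, det_one, one_mul, ldu_det, ha, one_mul,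
        det_submatrix_equiv_self, hd] at this
      exact this.symm
    rw [h]
    obtain ⟨x, y, z, rfl, h1, h2, h3, qx, qz, h4⟩ := two_data hw₁ hw₂ hw₃ S a ha hna
    exact Dec.combine S x y z _ _ qx qz h1 h2 h3 h4 e (insert x.trace (insert z.trace S))
      (by simp) (by simp) (by intro t ht; simp [ht]) (ih _ e hde hne) L U

theorem dec_odd [Infinite F] (hw₁ : w₁ ≠ 1) (hw₂ : w₂ ≠ 1) (hw₃ : w₃ ≠ 1) (k : ℕ)
    (g : Matrix (Fin (2 * k + 3)) (Fin (2 * k + 3)) F) (hd : g.det = 1) (hns : NS g) :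
      Dec w₁ w₂ w₃ ∅ g := by
  classical
  let σ : Unit ⊕ Fin (2 * k + 2) ≃ Fin (2 * k + 3) :=
    (Equiv.sumCongr finOneEquiv.symm (Equiv.refl _)).trans
      (finSumFinEquiv.trans (finCongr (by ring)))
  apply Dec.reindex σ
  obtain ⟨P, Q, c, b, e, hPQ, -, -, hne, h⟩ := step (by simp) (g.submatrix σ σ)
      (hns.reindex σ) (by rw [det_submatrix_equiv_self, hd]; exact one_ne_zero)
      (fun _ => 1) (by intro h; simpa using congrFun h (Sum.inl ()))
  apply Dec.conj P Q hPQ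
  have hde : e.det = 1 := by
    have := congrArg Matrix.det h
    rw [det_mul, det_mul, mul_right_comm, ← det_mul, hPQ, det_one, one_mul, ldu_det, det_one,
      one_mul, det_submatrix_equiv_self, hd] at this
    exact this.symm
  have q1 : qp (2 : F) (1 : Matrix Unit Unit F) = 0 := by
    ext; simp [qp]; ring
  have := Dec.combine (w₁ := w₁) (w₂ := w₂) (w₃ := w₃) ∅ (1 : Matrix Unit Unit F) 1 1 2 2 q1 q1
    (WV.one _) (WV.one _) (WV.one _) (by simp) e {2} (by simp) (by simp) (by simp)
    (dec_even hw₁ hw₂ hw₃ k _ e hde hne) c b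
  rw [h]
  simpa using this

end final

/-- If `F` is an infinite field, `n ≥ 3`, and `w₁, w₂, w₃` are nontrivial words, then
`PSL_n(F) = w₁(PSL_n(F)) · w₂(PSL_n(F)) · w₃(PSL_n(F))`. -/
theorem psl_waring_three {F : Type*} [Field F] [Infinite F]
    (n : ℕ) (hn : 3 ≤ n) {d₁ d₂ d₃ : ℕ}
    (w₁ : FreeGroup (Fin d₁)) (w₂ : FreeGroup (Fin d₂)) (w₃ : FreeGroup (Fin d₃))
    (hw₁ : w₁ ≠ 1) (hw₂ : w₂ ≠ 1) (hw₃ : w₃ ≠ 1) :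
    ∀ g : PSL n F,
      ∃ g₁ ∈ wordValues w₁ (PSL n F), ∃ g₂ ∈ wordValues w₂ (PSL n F),
        ∃ g₃ ∈ wordValues w₃ (PSL n F), g = g₁ * g₂ * g₃ := by
  intro g
  obtain ⟨G, rfl⟩ := QuotientGroup.mk'_surjective _ g
  set π := QuotientGroup.mk' (Subgroup.center (SpecialLinearGroup (Fin n) F))
  have hval : ∀ {d : ℕ} (w : FreeGroup (Fin d)) (f : Fin d → SpecialLinearGroup (Fin n) F),
      π (FreeGroup.lift f w) ∈ wordValues w (PSL n F) :=
    fun w f => ⟨fun i => π (f i), (lift_hom π w f).symm⟩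
  by_cases hG : NS (slc G)
  · have hD : Dec w₁ w₂ w₃ ∅ (slc G) := by
      have hd : (slc G).det = 1 := G.2
      generalize slc G = M at hG hd
      clear hval π
      rcases Nat.even_or_odd' n with ⟨k, rfl | rfl⟩
      · obtain ⟨k, rfl⟩ : ∃ j, k = j + 1 := ⟨k - 1, by omega⟩
        exact dec_even hw₁ hw₂ hw₃ k ∅ M hd hG
      · obtain ⟨k, rfl⟩ : ∃ j, k = j + 1 := ⟨k - 1, by omega⟩
        exact dec_odd hw₁ hw₂ hw₃ k M hd hG
    obtain ⟨X, Y, Z, h, ⟨f₁, rfl⟩, ⟨f₂, rfl⟩, ⟨f₃, rfl⟩, -⟩ := hD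
    refine ⟨_, hval w₁ f₁, _, hval w₂ f₂, _, hval w₃ f₃, ?_⟩
    rw [← map_mul, ← map_mul]
    congr 1
    rw [← map_mul, ← map_mul] at h
    exact Subtype.ext h
  · have hc : π G = 1 := by
      unfold NS at hG
      push Not at hG
      obtain ⟨r, hr⟩ := hG
      refine (QuotientGroup.eq_one_iff G).2 (Subgroup.mem_center_iff.2 fun H => Subtype.ext ?_)
      change H.1 * slc G = slc G * H.1
      rw [hr]; simp
    rw [hc]
    have h1 : ∀ {d : ℕ} (w : FreeGroup (Fin d)), (1 : PSL n F) ∈ wordValues w (PSL n F) := by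
      intro d w
      refine ⟨fun _ => 1, ?_⟩
      have : FreeGroup.lift (fun _ : Fin d => (1 : PSL n F)) = 1 := by
        ext i; simp
      change FreeGroup.lift (fun _ : Fin d => (1 : PSL n F)) w = 1
      rw [this]; rfl
    exact ⟨1, h1 w₁, 1, h1 w₂, 1, h1 w₃, by simp⟩
end

section
/- Let F be an infinite field, let k ≥ 2 be an integer, and let m, n be positive integers. Then every element g of SL_k(F) that is not in the center Z(SL_k(F)) can be written as g = x^m y^n for some x, y ∈ SL_k(F). -/
section Aux
open Matrix Polynomial
variable {F : Type*} [Field F]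

def GoodF {ι : Type} [Fintype ι] [DecidableEq ι] (A : Matrix ι ι F) (β γ : ι → F) : Prop :=
  ∃ X Y : Matrix ι ι F, A = X * Y ∧ X.charpoly = ∏ i, (Polynomial.X - C (β i)) ∧
    Y.charpoly = ∏ i, (Polynomial.X - C (γ i))

lemma good_conj {ι : Type} [Fintype ι] [DecidableEq ι] {A P Q : Matrix ι ι F} {β γ : ι → F}
    (h : Q * P = 1) (hg : GoodF (P * A * Q) β γ) : GoodF A β γ := by
  have h' : P * Q = 1 := mul_eq_one_comm.mp h
  obtain ⟨X, Y, e, hX, hY⟩ := hg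
  refine ⟨Q * X * P, Q * Y * P, ?_, ?_, ?_⟩
  · calc A = (Q * P) * A * (Q * P) := by rw [h]; simp
      _ = Q * (P * A * Q) * P := by simp only [Matrix.mul_assoc]
      _ = Q * X * 1 * Y * P := by rw [e]; simp only [Matrix.mul_assoc, Matrix.mul_one]
      _ = _ := by rw [← h']; simp only [Matrix.mul_assoc]
  · rw [Matrix.charpoly_mul_comm, ← Matrix.mul_assoc, h', Matrix.one_mul, hX]
  · rw [Matrix.charpoly_mul_comm, ← Matrix.mul_assoc, h', Matrix.one_mul, hY]

lemma good_reindex {ι κ : Type} [Fintype ι] [DecidableEq ι] [Fintype κ] [DecidableEq κ]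
    (e : ι ≃ κ) {A : Matrix ι ι F} {β γ : ι → F}
    (h : GoodF (Matrix.reindex e e A) (β ∘ e.symm) (γ ∘ e.symm)) : GoodF A β γ := by
  obtain ⟨X, Y, he, hX, hY⟩ := h
  refine ⟨Matrix.reindex e.symm e.symm X, Matrix.reindex e.symm e.symm Y, ?_, ?_, ?_⟩
  · have := congrArg (Matrix.reindex e.symm e.symm) he
    simpa [Matrix.submatrix_mul_equiv] using this
  · rw [Matrix.charpoly_reindex, hX]
    exact Equiv.prod_comp e.symm (fun i => Polynomial.X - C (β i))
  · rw [Matrix.charpoly_reindex, hY]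
    exact Equiv.prod_comp e.symm (fun i => Polynomial.X - C (γ i))

lemma good_lift {κ : Type} [Fintype κ] [DecidableEq κ] (r : Matrix Unit κ F) (c : Matrix κ Unit F)
    (D : Matrix κ κ F) (β γ : Unit ⊕ κ → F) (hβ : ∀ i, β i ≠ 0) (hγ : ∀ i, γ i ≠ 0)
    (h : GoodF (D - (β (.inl ()) * γ (.inl ()))⁻¹ • (c * r)) (β ∘ Sum.inr) (γ ∘ Sum.inr)) :
    GoodF (Matrix.fromBlocks ((β (.inl ()) * γ (.inl ())) • 1) r c D) β γ := by
  obtain ⟨X, Y, he, hX, hY⟩ := h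
  have hb := hβ (.inl ())
  have hc := hγ (.inl ())
  refine ⟨fromBlocks (β (.inl ()) • 1) 0 ((γ (.inl ()))⁻¹ • c) X,
    fromBlocks (γ (.inl ()) • 1) ((β (.inl ()))⁻¹ • r) 0 Y, ?_, ?_, ?_⟩
  · rw [fromBlocks_multiply, ← he]
    congr 1
    · simp [smul_smul, mul_comm]
    · simp [smul_smul, hb]
    · simp [smul_smul, hc]
    · simp [smul_smul, mul_comm]
  · rw [charpoly_fromBlocks_zero₁₂, hX, Fintype.prod_sum_type]
    simp [Matrix.charpoly, Matrix.charmatrix]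
  · rw [charpoly_fromBlocks_zero₂₁, hY, Fintype.prod_sum_type]
    simp [Matrix.charpoly, Matrix.charmatrix]

lemma exists_g {κ : Type} [Fintype κ] [DecidableEq κ] (a : Matrix Unit Unit F)
    (r : Matrix Unit κ F) (c : Matrix κ Unit F)
    (D : Matrix κ κ F) (hdet : (fromBlocks a r c D).det ≠ 0) (hc : c ≠ 0) (d : F) (hd : d ≠ 0) :
    ∃ g : Matrix Unit κ F, a + g * c = d • 1 ∧
      (Fintype.card κ = 1 ∨ ∀ s : F, D - d⁻¹ • (c * (r + g * D)) ≠ s • 1) := by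
  obtain ⟨i, hi⟩ : ∃ i, c i () ≠ 0 := by
    by_contra! h
    exact hc (by ext i j; exact h i)
  let g0 : Matrix Unit κ F :=
    Matrix.of fun _ j => if j = i then (d - a () ()) / c i () else 0
  have hg0 : a + g0 * c = d • 1 := by
    ext ⟨⟩ ⟨⟩
    simp [g0, Matrix.mul_apply, hi]
  by_cases h1 : Fintype.card κ = 1
  · exact ⟨g0, hg0, .inl h1⟩
  by_cases h2 : ∀ s : F, D - d⁻¹ • (c * (r + g0 * D)) ≠ s • 1
  · exact ⟨g0, hg0, .inr h2⟩
  push Not at h2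
  obtain ⟨s, hs⟩ := h2
  obtain ⟨j, hj⟩ : ∃ j, j ≠ i := by
    by_contra! h
    exact h1 (Fintype.card_eq_one_iff.mpr ⟨i, h⟩)
  let h : Matrix Unit κ F :=
    Matrix.of fun _ l => (if l = j then c i () else 0) - if l = i then c j () else 0
  have hhc : h * c = 0 := by
    ext ⟨⟩ ⟨⟩
    simp [h, Matrix.mul_apply, sub_mul, Finset.sum_sub_distrib]
    ring
  refine ⟨g0 + h, by rw [Matrix.add_mul, hhc, add_zero, hg0], .inr ?_⟩
  intro t ht
  have hw : c * (h * D) = (d * (s - t)) • (1 : Matrix κ κ F) := by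
    have : d⁻¹ • (c * (h * D)) = (s - t) • (1 : Matrix κ κ F) := by
      rw [sub_smul, ← hs, ← ht]
      simp only [Matrix.add_mul, Matrix.mul_add, smul_add]
      abel
    rw [mul_smul, ← this, smul_smul, mul_inv_cancel₀ hd, one_smul]
  have hent : ∀ p q, c p () * (h * D) () q = if p = q then d * (s - t) else 0 := by
    intro p q
    have := congrFun (congrFun hw p) q
    rw [Matrix.mul_apply] at this
    simpa [Matrix.one_apply] using this
  have hwj : (h * D) () j = 0 := by
    have := hent i j
    rw [if_neg hj.symm] at this
    exact (mul_eq_zero.mp this).resolve_left hi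
  have hst : d * (s - t) = 0 := by
    have := hent j j
    rw [hwj] at this
    simpa using this.symm
  have hz : ∀ q, (h * D) () q = 0 := by
    intro q
    have := hent i q
    rw [hst] at this
    simp only [ite_self] at this
    exact (mul_eq_zero.mp this).resolve_left hi
  have hM : fromBlocks 0 h 0 (0 : Matrix κ κ F) * fromBlocks a r c D = (0 : Matrix (Unit ⊕ κ) (Unit ⊕ κ) F) := by
    rw [fromBlocks_multiply, hhc]
    have : h * D = 0 := by ext ⟨⟩ q; exact hz q
    rw [this]; simp
  have hu : IsUnit (fromBlocks a r c D) := (Matrix.isUnit_iff_isUnit_det _).mpr hdet.isUnit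
  have h0 := (hu.mul_left_eq_zero).mp hM
  have := congrFun (congrFun h0 (.inl ())) (.inr j)
  simp [h, hj] at this
  exact hi this

lemma block_step {κ : Type} [Fintype κ] [DecidableEq κ] (a : Matrix Unit Unit F)
    (r : Matrix Unit κ F) (c : Matrix κ Unit F)
    (D : Matrix κ κ F) (hc : c ≠ 0) (β γ : Unit ⊕ κ → F) (hβ : ∀ i, β i ≠ 0) (hγ : ∀ i, γ i ≠ 0)
    (hdet : (fromBlocks a r c D).det = ∏ i, β i * γ i)
    (IH : ∀ S : Matrix κ κ F, S.det = ∏ i, β (.inr i) * γ (.inr i) →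
      (Fintype.card κ = 1 ∨ ∀ s : F, S ≠ s • 1) → GoodF S (β ∘ Sum.inr) (γ ∘ Sum.inr)) :
    GoodF (fromBlocks a r c D) β γ := by
  have hd : β (.inl ()) * γ (.inl ()) ≠ 0 := mul_ne_zero (hβ _) (hγ _)
  obtain ⟨g, hg, hS⟩ := exists_g a r c D
    (by rw [hdet]; exact Finset.prod_ne_zero_iff.mpr fun i _ => mul_ne_zero (hβ _) (hγ _)) hc _ hd
  set d := β (.inl ()) * γ (.inl ()) with hdd
  have hQP : fromBlocks (1 : Matrix Unit Unit F) (-g) 0 (1 : Matrix κ κ F) * fromBlocks (1 : Matrix Unit Unit F) g 0 (1 : Matrix κ κ F) = 1 := by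
    rw [fromBlocks_multiply]; simp
  have hPM : fromBlocks (1 : Matrix Unit Unit F) g 0 (1 : Matrix κ κ F) * fromBlocks a r c D * fromBlocks (1 : Matrix Unit Unit F) (-g) 0 (1 : Matrix κ κ F)
      = fromBlocks (d • 1) (r + g * D - d • g) c (D - c * g) := by
    rw [fromBlocks_multiply, fromBlocks_multiply]
    simp only [Matrix.one_mul, Matrix.mul_one, Matrix.zero_mul, Matrix.mul_zero, zero_add, add_zero, hg,
      Matrix.mul_neg, Matrix.smul_mul]
    congr 1 <;> abel
  have hSeq : D - c * g - d⁻¹ • (c * (r + g * D - d • g)) = D - d⁻¹ • (c * (r + g * D)) := by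
    rw [Matrix.mul_sub, smul_sub, Matrix.mul_smul, smul_smul, inv_mul_cancel₀ hd, one_smul]
    abel
  apply good_conj hQP
  rw [hPM]
  apply good_lift _ _ _ _ _ hβ hγ
  rw [← hdd, hSeq]
  refine IH _ ?_ hS
  have h1 : (fromBlocks a r c D).det = (fromBlocks (d • 1) (r + g * D - d • g) c (D - c * g)).det := by
    rw [← hPM, det_mul, det_mul]; simp
  have hfac : fromBlocks (d • 1) (r + g * D - d • g) c (D - c * g) =
      fromBlocks 1 0 (d⁻¹ • c) 1 * fromBlocks (d • 1) (r + g * D - d • g) 0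
        (D - c * g - d⁻¹ • (c * (r + g * D - d • g))) := by
    rw [fromBlocks_multiply]
    simp [smul_smul, hd]
  rw [hfac, det_mul, det_fromBlocks_zero₁₂, det_fromBlocks_zero₂₁, hdet, Fintype.prod_sum_type, hSeq] at h1
  simp at h1
  rw [← hdd] at h1
  exact ((mul_right_inj' hd).mp h1).symm

lemma main_fac (k : ℕ) : ∀ (ι : Type) [Fintype ι] [DecidableEq ι], Fintype.card ι = k + 1 →
    ∀ (A : Matrix ι ι F) (β γ : ι → F), (∀ i, β i ≠ 0) → (∀ i, γ i ≠ 0) →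
    A.det = ∏ i, β i * γ i → (Fintype.card ι = 1 ∨ ∀ s : F, A ≠ s • 1) → GoodF A β γ := by
  induction k with
  | zero =>
    intro ι _ _ hcard A β γ hβ hγ hdet _
    obtain ⟨u⟩ := Fintype.card_eq_one_iff_nonempty_unique.mp hcard
    refine ⟨diagonal β, diagonal γ, ?_, ?_, ?_⟩
    · ext i j
      obtain rfl := Subsingleton.elim i default
      obtain rfl := Subsingleton.elim j default
      simpa [Matrix.det_unique] using hdet
    · simp [Matrix.charpoly, Matrix.charmatrix]
    · simp [Matrix.charpoly, Matrix.charmatrix]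
  | succ k IH =>
    intro ι _ _ hcard A β γ hβ hγ hdet hA
    replace hA := hA.resolve_left (by omega)
    -- off-diagonal case
    have key : ∀ A : Matrix ι ι F, A.det = ∏ i, β i * γ i → ∀ i j, j ≠ i → A j i ≠ 0 →
        GoodF A β γ := by
      intro A hdet i j hji hne
      let e : ι ≃ Unit ⊕ {b // b ≠ i} :=
        ((Equiv.optionSubtypeNe i).symm.trans (Equiv.optionEquivSumPUnit _)).trans (Equiv.sumComm _ _)
      have e1 : e.symm (.inl ()) = i := by simp [e]
      have e2 : ∀ b, e.symm (.inr b) = b := by simp [e]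
      apply good_reindex e
      rw [← fromBlocks_toBlocks (Matrix.reindex e e A)]
      apply block_step
      · intro h
        have := congrFun (congrFun h ⟨j, hji⟩) ()
        apply hne
        simpa [toBlocks₂₁, e1, e2] using this
      · intro i; exact hβ _
      · intro i; exact hγ _
      · rw [fromBlocks_toBlocks, det_reindex_self, hdet]
        exact (Equiv.prod_comp e.symm (fun i => β i * γ i)).symm
      · intro S hS hS'
        refine IH _ ?_ S _ _ (fun i => hβ _) (fun i => hγ _) hS hS'
        have := Fintype.card_congr e
        simp only [Fintype.card_sum, Fintype.card_unit] at this
        omega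
    by_cases hoff : ∃ i j, j ≠ i ∧ A j i ≠ 0
    · obtain ⟨i, j, h1, h2⟩ := hoff
      exact key A hdet i j h1 h2
    push Not at hoff
    obtain ⟨i, j, hij⟩ : ∃ i j, A i i ≠ A j j := by
      by_contra! h
      have : Nonempty ι := Fintype.card_pos_iff.mp (by omega)
      obtain ⟨i0⟩ := this
      apply hA (A i0 i0)
      ext p q
      by_cases hpq : p = q
      · subst hpq; simp [h p i0]
      · simp [hpq, hoff q p hpq]
    have hne : j ≠ i := by rintro rfl; exact hij rfl
    have hQP : transvection j i (-1 : F) * transvection j i (1 : F) = 1 := by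
      rw [transvection_mul_transvection_same _ _ hne]; simp
    apply good_conj hQP
    apply key _ _ i j hne
    · simp only [transvection, add_mul, mul_add, one_mul, mul_one, Matrix.add_apply]
      simp [hoff i j hne, Matrix.mul_assoc, hoff j i hne.symm]
      intro h
      apply hij
      linear_combination h
    · rw [det_mul, det_mul, det_transvection_of_ne _ _ hne, det_transvection_of_ne _ _ hne, hdet]; simp

lemma pow_of_charpoly {ι : Type} [Fintype ι] [DecidableEq ι] (X : Matrix ι ι F) (b : ι → F) (m : ℕ)
    (hinj : Function.Injective fun i => b i ^ m) (hb : ∏ i, b i = 1)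
    (hX : X.charpoly = ∏ i, (Polynomial.X - C (b i ^ m))) :
    ∃ x : Matrix.SpecialLinearGroup ι F, ((x ^ m : Matrix.SpecialLinearGroup ι F) : Matrix ι ι F) = X := by
  have hev : ∀ i, ∃ v : ι → F, Module.End.HasEigenvector (Matrix.toLin' X) (b i ^ m) v := by
    intro i
    apply Module.End.HasEigenvalue.exists_hasEigenvector
    rw [Module.End.hasEigenvalue_iff_isRoot_charpoly, Matrix.charpoly_toLin', hX, IsRoot.def, eval_prod]
    exact Finset.prod_eq_zero (Finset.mem_univ i) (by simp)
  choose v hv using hev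
  have hli := Module.End.eigenvectors_linearIndependent' (Matrix.toLin' X) _ hinj v hv
  let P : Matrix ι ι F := (Matrix.of v)ᵀ
  have hP : IsUnit P := by
    rw [← Matrix.linearIndependent_cols_iff_isUnit]
    exact hli
  have hPd : IsUnit P.det := (Matrix.isUnit_iff_isUnit_det _).mp hP
  have hXP : X * P = P * diagonal (fun i => b i ^ m) := by
    ext p q
    have := congrFun (hv q).apply_eq_smul p
    rw [Matrix.mul_diagonal]
    simp only [toLin'_apply, Pi.smul_apply, smul_eq_mul] at this
    rw [mul_comm]
    exact this
  have hdet : (P * diagonal b * P⁻¹).det = 1 := by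
    rw [det_mul, det_mul, det_diagonal, hb, mul_one, ← det_mul, Matrix.mul_nonsing_inv _ hPd, det_one]
  refine ⟨(⟨P * diagonal b * P⁻¹, hdet⟩ : Matrix.SpecialLinearGroup ι F), ?_⟩
  have hpow : ∀ l : ℕ, (P * diagonal b * P⁻¹) ^ l = P * diagonal (fun i => b i ^ l) * P⁻¹ := by
    intro l
    induction l with
    | zero => simp [Matrix.mul_nonsing_inv _ hPd]
    | succ l ih =>
      rw [pow_succ, ih]
      calc _ = P * diagonal (fun i => b i ^ l) * (P⁻¹ * P) * diagonal b * P⁻¹ := by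
            simp only [Matrix.mul_assoc]
        _ = _ := by
          rw [Matrix.nonsing_inv_mul _ hPd, Matrix.mul_one, Matrix.mul_assoc P, diagonal_mul_diagonal]
          simp only [pow_succ]
  refine (Matrix.SpecialLinearGroup.coe_pow _ _).trans ?_
  change (P * diagonal b * P⁻¹) ^ m = X
  rw [hpow, ← hXP, Matrix.mul_assoc, Matrix.mul_nonsing_inv _ hPd, Matrix.mul_one]

lemma exists_b [Infinite F] (k m : ℕ) (hm : 0 < m) :
    ∃ b : Fin k → F, (∀ i, b i ≠ 0) ∧ ∏ i, b i = 1 ∧ Function.Injective fun i => b i ^ m := by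
  classical
  obtain ⟨t, ht⟩ := Infinite.exists_notMem_finset
    ((Polynomial.X * ∏ l ∈ Finset.range k, ((Polynomial.X : F[X]) ^ (2 * m * (l + 1)) - 1)).roots.toFinset)
  have hne : ∀ l, (Polynomial.X : F[X]) ^ (2 * m * (l + 1)) - 1 ≠ 0 := by
    intro l
    exact Polynomial.X_pow_sub_C_ne_zero (by positivity) 1
  rw [Multiset.mem_toFinset, Polynomial.mem_roots (mul_ne_zero Polynomial.X_ne_zero
    (Finset.prod_ne_zero_iff.mpr fun l _ => hne l)), IsRoot.def, eval_mul, eval_prod, mul_eq_zero, not_or,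
    Finset.prod_eq_zero_iff] at ht
  obtain ⟨ht0, ht⟩ := ht
  simp only [eval_X] at ht0
  simp only [eval_sub, eval_pow, eval_X, eval_one, Finset.mem_range, not_exists, not_and] at ht
  have hord : ∀ l, 0 < l → l ≤ k → t ^ (2 * m * l) ≠ 1 := by
    intro l h0 hl h
    obtain ⟨l, rfl⟩ := Nat.exists_eq_succ_of_ne_zero h0.ne'
    exact ht l (by omega) (by rw [← Nat.succ_eq_add_one, h, sub_self])
  refine ⟨fun i => t ^ (i : ℕ) / t ^ (i.rev : ℕ), fun i => div_ne_zero (pow_ne_zero _ ht0) (pow_ne_zero _ ht0), ?_, ?_⟩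
  · rw [Finset.prod_div_distrib]
    have := Equiv.prod_comp (Fin.revPerm (n := k)) (fun i => t ^ (i : ℕ))
    simp only [Fin.revPerm_apply] at this
    rw [this, div_self]
    exact Finset.prod_ne_zero_iff.mpr fun i _ => pow_ne_zero _ ht0
  · have aux : ∀ i j : Fin k, i < j → (t ^ (i : ℕ) / t ^ (i.rev : ℕ)) ^ m ≠ (t ^ (j : ℕ) / t ^ (j.rev : ℕ)) ^ m := by
      intro i j hij h
      rw [div_pow, div_pow, div_eq_div_iff (pow_ne_zero _ (pow_ne_zero _ ht0)) (pow_ne_zero _ (pow_ne_zero _ ht0))] at h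
      obtain ⟨l, hl⟩ := Nat.exists_eq_add_of_lt (Fin.lt_def.mp hij)
      have hr : (i.rev : ℕ) = j.rev + (l + 1) := by
        simp only [Fin.val_rev]; omega
      apply hord (l + 1) (by omega) (by omega)
      rw [hr, hl] at h
      have h0 : (t ^ (i : ℕ)) ^ m * (t ^ (j.rev : ℕ)) ^ m ≠ 0 :=
        mul_ne_zero (pow_ne_zero _ (pow_ne_zero _ ht0)) (pow_ne_zero _ (pow_ne_zero _ ht0))
      apply mul_left_cancel₀ h0
      rw [mul_one]
      refine Eq.trans ?_ h.symm
      ring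
    intro i j h
    by_contra hne
    rcases lt_or_gt_of_ne hne with h' | h'
    · exact aux i j h' h
    · exact aux j i h' h.symm

end Aux

/-- If `F` is an infinite field, `k ≥ 2`, and `m, n` are positive integers, then every noncentral
element of `SL_k(F)` is of the form `x^m * y^n`. -/
theorem sl_power_word_noncentral {F : Type*} [Field F] [Infinite F]
    (k : ℕ) (hk : 2 ≤ k) (m n : ℕ) (hm : 0 < m) (hn : 0 < n) :
    ∀ g : Matrix.SpecialLinearGroup (Fin k) F,
      g ∉ Subgroup.center (Matrix.SpecialLinearGroup (Fin k) F) →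
      ∃ x y : Matrix.SpecialLinearGroup (Fin k) F, g = x ^ m * y ^ n := by
  intro g hg
  obtain ⟨b, hb0, hb1, hbi⟩ := exists_b (F := F) k m hm
  obtain ⟨c, hc0, hc1, hci⟩ := exists_b (F := F) k n hn
  obtain ⟨X, Y, he, hX, hY⟩ := main_fac (k - 1) (Fin k) (by simp; omega) (g : Matrix (Fin k) (Fin k) F)
    (fun i => b i ^ m) (fun i => c i ^ n) (fun i => pow_ne_zero _ (hb0 i)) (fun i => pow_ne_zero _ (hc0 i))
    (by rw [Finset.prod_mul_distrib, Finset.prod_pow, Finset.prod_pow, hb1, hc1]; simp)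
    (.inr (by
      intro s hs
      apply hg
      rw [Matrix.SpecialLinearGroup.mem_center_iff]
      refine ⟨s, ?_, ?_⟩
      · have := congrArg Matrix.det hs
        simpa using this.symm
      · rw [hs, Matrix.scalar_apply, Matrix.smul_one_eq_diagonal]))
  obtain ⟨x, hx⟩ := pow_of_charpoly X b m hbi hb1 hX
  obtain ⟨y, hy⟩ := pow_of_charpoly Y c n hci hc1 hY
  refine ⟨x, y, ?_⟩
  apply Subtype.ext
  rw [Matrix.SpecialLinearGroup.coe_mul, hx, hy, he]
end

section
/- Let F be an infinite field and let k ≥ 2 be an integer. Then every element g of SL_k(F) is a product of two squares: there exist x, y ∈ SL_k(F) with g = x²y². -/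
namespace TwoSq
open Matrix

variable {F : Type*} [Field F]

def Sim {ι κ : Type*} [Fintype ι] [Fintype κ] [DecidableEq ι] [DecidableEq κ]
    (A : Matrix ι ι F) (M : Matrix κ κ F) : Prop :=
  ∃ (P : Matrix ι κ F) (Q : Matrix κ ι F), P * Q = 1 ∧ Q * P = 1 ∧ A = P * M * Q

lemma Sim.trans {ι κ μ : Type*} [Fintype ι] [Fintype κ] [DecidableEq ι] [DecidableEq κ]
    [Fintype μ] [DecidableEq μ] {A : Matrix ι ι F} {M : Matrix κ κ F} {N : Matrix μ μ F}
    (h : Sim A M) (h' : Sim M N) : Sim A N := by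
  obtain ⟨P, Q, h1, h2, rfl⟩ := h
  obtain ⟨P', Q', h3, h4, rfl⟩ := h'
  refine ⟨P * P', Q' * Q, ?_, ?_, ?_⟩
  · calc P * P' * (Q' * Q) = P * (P' * Q') * Q := by simp only [Matrix.mul_assoc]
      _ = 1 := by rw [h3, Matrix.mul_one, h1]
  · calc Q' * Q * (P * P') = Q' * (Q * P) * P' := by simp only [Matrix.mul_assoc]
      _ = 1 := by rw [h2, Matrix.mul_one, h4]
  · simp only [Matrix.mul_assoc]

lemma Sim.det_eq {ι κ : Type*} [Fintype ι] [Fintype κ] [DecidableEq ι] [DecidableEq κ]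
    {A : Matrix ι ι F} {M : Matrix κ κ F} (h : Sim A M) : A.det = M.det := by
  obtain ⟨P, Q, h1, h2, rfl⟩ := h
  exact det_conj_of_mul_eq_one h1 h2

/-- `A = X² Y²` with `det (t + X)` and `det (t + Y)` prescribed by `p`. -/
def Good {ι : Type*} [Fintype ι] [DecidableEq ι] (p : F → F) (A : Matrix ι ι F) : Prop :=
  ∃ X Y : Matrix ι ι F, A = X ^ 2 * Y ^ 2 ∧ (∀ t, (t • 1 + X).det = p t) ∧
    ∀ t, (t • 1 + Y).det = p t

def Good1 {ι : Type*} [Fintype ι] [DecidableEq ι] (A : Matrix ι ι F) : Prop :=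
  ∃ X Y : Matrix ι ι F, A = X ^ 2 * Y ^ 2 ∧ X.det = 1 ∧ Y.det = 1

lemma conj_sq {ι κ : Type*} [Fintype ι] [Fintype κ] [DecidableEq ι] [DecidableEq κ]
    {P : Matrix ι κ F} {Q : Matrix κ ι F} (h2 : Q * P = 1) (X Y : Matrix κ κ F) :
    P * (X ^ 2 * Y ^ 2) * Q = (P * X * Q) ^ 2 * (P * Y * Q) ^ 2 := by
  have key : ∀ Z W : Matrix κ κ F, (P * Z * Q) * (P * W * Q) = P * (Z * W) * Q := by
    intro Z W
    calc (P * Z * Q) * (P * W * Q) = P * Z * (Q * P) * W * Q := by simp only [Matrix.mul_assoc]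
      _ = _ := by rw [h2]; simp only [Matrix.mul_assoc, Matrix.mul_one]
  simp only [sq, key]

lemma Good.of_sim {ι κ : Type*} [Fintype ι] [Fintype κ] [DecidableEq ι] [DecidableEq κ]
    {A : Matrix ι ι F} {M : Matrix κ κ F} (h : Sim A M) {p : F → F} (g : Good p M) : Good p A := by
  obtain ⟨P, Q, h1, h2, rfl⟩ := h
  obtain ⟨X, Y, rfl, hX, hY⟩ := g
  have key : ∀ (t : F) (Z : Matrix κ κ F), (t • 1 + P * Z * Q).det = (t • 1 + Z).det := by
    intro t Z
    rw [← det_conj_of_mul_eq_one h1 h2 (N := t • 1 + Z), Matrix.mul_add, Matrix.add_mul]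
    simp [h1]
  exact ⟨P * X * Q, P * Y * Q, conj_sq h2 X Y, fun t => (key t X).trans (hX t),
    fun t => (key t Y).trans (hY t)⟩

lemma Good1.of_sim {ι κ : Type*} [Fintype ι] [Fintype κ] [DecidableEq ι] [DecidableEq κ]
    {A : Matrix ι ι F} {M : Matrix κ κ F} (h : Sim A M) (g : Good1 M) : Good1 A := by
  obtain ⟨P, Q, h1, h2, rfl⟩ := h
  obtain ⟨X, Y, rfl, hX, hY⟩ := g
  exact ⟨P * X * Q, P * Y * Q, conj_sq h2 X Y, (det_conj_of_mul_eq_one h1 h2).trans hX,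
    (det_conj_of_mul_eq_one h1 h2).trans hY⟩

lemma sim_reindex {ι κ : Type*} [Fintype ι] [Fintype κ] [DecidableEq ι] [DecidableEq κ]
    (e : ι ≃ κ) (l : F) : Sim (l • (1 : Matrix ι ι F)) (l • (1 : Matrix κ κ F)) := by
  refine ⟨(1 : Matrix κ κ F).submatrix e id, (1 : Matrix κ κ F).submatrix id e, ?_, ?_, ?_⟩
  · rw [← submatrix_mul _ _ _ _ _ Function.bijective_id]; simp
  · rw [← submatrix_mul _ _ _ _ _ e.bijective]; simp
  · rw [Matrix.mul_smul, Matrix.mul_one, Matrix.smul_mul,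
      ← submatrix_mul _ _ _ _ _ Function.bijective_id]; simp

lemma exists_col {n : ℕ} (A : Matrix (Fin (n + 1)) (Fin (n + 1)) F) (hA : ∀ t : F, A ≠ t • 1) :
    ∃ M : Matrix (Unit ⊕ Fin n) (Unit ⊕ Fin n) F, Sim A M ∧ M.toBlocks₂₁ ≠ 0 := by
  have h1 : ∃ v, LinearIndependent F ![v, toLin' A v] := by
    by_contra! h
    obtain ⟨a, ha⟩ := (toLin' A).exists_eq_smul_id_of_forall_notLinearIndependent h
    apply hA a
    apply (toLin' (R := F)).injective
    rw [ha]; ext; simp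
  obtain ⟨v, hv⟩ := h1
  rw [LinearIndependent.pair_iff] at hv
  have hv0 : v ≠ 0 := by
    rintro rfl
    have := hv 1 0 (by simp)
    simp at this
  have hli : LinearIndependent F (fun _ : Unit => v) := by
    simpa using hv0
  let b0 := Module.Basis.sumExtend hli
  have : Fintype (Unit ⊕ Module.Basis.sumExtendIndex hli) := FiniteDimensional.fintypeBasisIndex b0
  have : Fintype (Module.Basis.sumExtendIndex hli) := Fintype.ofInjective (Sum.inr (α := Unit)) Sum.inr_injective
  have hc : Fintype.card (Module.Basis.sumExtendIndex hli) = n := by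
    have h := Module.finrank_eq_card_basis b0
    rw [Module.finrank_fin_fun, ← Nat.card_eq_fintype_card, Nat.card_sum,
      Nat.card_eq_fintype_card, Nat.card_eq_fintype_card, Fintype.card_unit] at h
    omega
  let e := Fintype.equivFinOfCardEq hc
  let b := b0.reindex (Equiv.sumCongr (Equiv.refl Unit) e)
  have hb : b (Sum.inl ()) = v := by
    simp [b, b0, Module.Basis.sumExtend]
    rfl
  have hr : b.repr v = Finsupp.single (Sum.inl ()) 1 := by rw [← hb]; simp
  refine ⟨LinearMap.toMatrix b b (toLin' A), ⟨(Pi.basisFun F _).toMatrix b, b.toMatrix (Pi.basisFun F _), ?_, ?_, ?_⟩, ?_⟩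
  · simp
  · simp
  · rw [basis_toMatrix_mul_linearMap_toMatrix_mul_basis_toMatrix]
    simp [LinearMap.toMatrix_eq_toMatrix']
  · intro h0
    have : toLin' A v = (b.repr (toLin' A v) (Sum.inl ())) • v := by
      apply b.repr.injective
      ext i
      rcases i with i | i
      · simp [hr]
      · have := congrFun (congrFun h0 i) ()
        simp [toBlocks₂₁, LinearMap.toMatrix_apply, hb] at this
        simp [hr, this]
    have := hv (-(b.repr (toLin' A v) (Sum.inl ()))) 1 (by
      rw [one_smul, neg_smul, ← this, neg_add_cancel])
    simp at this


lemma sim_phi {n : ℕ} (a : Matrix Unit Unit F) (r : Matrix Unit (Fin n) F)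
    (c : Matrix (Fin n) Unit F) (A' : Matrix (Fin n) (Fin n) F) (f : Matrix Unit (Fin n) F) :
    Sim (fromBlocks a r c A') (fromBlocks (a - f * c) (r + a * f - f * (A' + c * f)) c (A' + c * f)) := by
  refine ⟨fromBlocks 1 f 0 1, fromBlocks 1 (-f) 0 1, ?_, ?_, ?_⟩
  · simp [fromBlocks_multiply]
  · simp [fromBlocks_multiply]
  · simp only [fromBlocks_multiply]
    simp only [Matrix.mul_add, Matrix.add_mul, Matrix.sub_mul, Matrix.mul_assoc,
      Matrix.one_mul, Matrix.mul_one, Matrix.zero_mul, Matrix.mul_zero, Matrix.mul_neg]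
    congr 1 <;> abel

lemma exists_fix {n : ℕ} (c : Matrix (Fin n) Unit F) (hc : c ≠ 0) (a : Matrix Unit Unit F) :
    ∃ f : Matrix Unit (Fin n) F, f * c = a := by
  have : ∃ i, c i () ≠ 0 := by
    by_contra! h
    apply hc
    ext i j
    exact h i
  obtain ⟨i, hi⟩ := this
  refine ⟨of fun _ j => if j = i then a () () / c i () else 0, ?_⟩
  ext x y
  simp [Matrix.mul_apply, hi]

lemma exists_perp {n : ℕ} (hn : 2 ≤ n) (c : Matrix (Fin n) Unit F) (hc : c ≠ 0) :
    ∃ f : Matrix Unit (Fin n) F, f * c = 0 ∧ f ≠ 0 := by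
  have : ∃ i, c i () ≠ 0 := by
    by_contra! h
    apply hc
    ext i j
    exact h i
  obtain ⟨i, hi⟩ := this
  have : Nontrivial (Fin n) := Fin.nontrivial_iff_two_le.2 hn
  obtain ⟨j, hj⟩ := exists_ne i
  refine ⟨of fun _ k => (if k = i then c j () else 0) - (if k = j then c i () else 0), ?_, ?_⟩
  · ext x y
    simp [Matrix.mul_apply, sub_mul, Finset.sum_sub_distrib]
    ring
  · intro h
    have := congrFun (congrFun h ()) j
    simp [hj] at this
    exact hi this

lemma split {n : ℕ} (A : Matrix (Fin (n + 1)) (Fin (n + 1)) F) (hA : ∀ t : F, A ≠ t • 1)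
    (a : F) (ha : a ≠ 0) (hdet : A.det ≠ 0) (hn1 : 1 ≤ n) :
    ∃ r c S, Sim A (fromBlocks (a • (1 : Matrix Unit Unit F)) r c (S + a⁻¹ • (c * r))) ∧
      (n ≤ 1 ∨ ∀ t : F, S ≠ t • (1 : Matrix (Fin n) (Fin n) F)) := by
  obtain ⟨M, hM, hc⟩ := exists_col A hA
  rw [← fromBlocks_toBlocks M] at hM
  obtain ⟨f, hf⟩ := exists_fix M.toBlocks₂₁ hc (M.toBlocks₁₁ - a • 1)
  have h2 := hM.trans (sim_phi _ _ _ _ f)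
  rw [hf, sub_sub_cancel] at h2
  generalize M.toBlocks₂₁ = c at *
  generalize (M.toBlocks₁₂ + M.toBlocks₁₁ * f - f * (M.toBlocks₂₂ + c * f)) = r at *
  generalize M.toBlocks₂₂ + c * f = A' at *
  by_cases h : n ≤ 1 ∨ ∀ t : F, A' - a⁻¹ • (c * r) ≠ t • (1 : Matrix (Fin n) (Fin n) F)
  · exact ⟨r, c, A' - a⁻¹ • (c * r), by simpa using h2, h⟩
  push Not at h
  obtain ⟨hn, s, hs⟩ := h
  obtain ⟨g, hg, hg0⟩ := exists_perp hn c hc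
  have hA' : A' = s • 1 + a⁻¹ • (c * r) := by rw [← hs]; simp
  have hs0 : s ≠ 0 := by
    rintro rfl
    apply hdet
    rw [h2.det_eq, hA']
    have : fromBlocks (a • (1 : Matrix Unit Unit F)) r c ((0 : F) • 1 + a⁻¹ • (c * r)) =
        fromBlocks 1 0 (a⁻¹ • c) (1 : Matrix (Fin n) (Fin n) F) * fromBlocks (a • 1) r 0 0 := by
      simp [fromBlocks_multiply, smul_smul, ha]
    have : Nonempty (Fin n) := ⟨⟨0, by omega⟩⟩
    rw [‹fromBlocks _ _ _ _ = _›, det_mul, det_fromBlocks_zero₂₁, det_zero]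
    simp
  have h3 := h2.trans (sim_phi _ _ _ _ g)
  rw [hg, sub_zero] at h3
  have e1 : g * (A' + c * g) = s • g := by
    rw [hA']
    simp [Matrix.mul_add, ← Matrix.mul_assoc, hg]
  rw [e1] at h3
  refine ⟨r + a • (1 : Matrix Unit Unit F) * g - s • g, c, s • 1 + (s * a⁻¹) • (c * g), ?_, Or.inr ?_⟩
  · convert h3 using 2
    rw [hA']
    simp [Matrix.mul_add, Matrix.mul_sub, smul_sub, smul_smul, ha, mul_comm]
    abel
  · intro t ht
    have h4 : (s * a⁻¹) • (c * g) = (t - s) • 1 := by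
      rw [sub_smul, ← ht]; simp
    have h5 : (c * g) * (c * g) = 0 := by
      rw [Matrix.mul_assoc, ← Matrix.mul_assoc g, hg]; simp
    have h6 : c * g = ((s * a⁻¹)⁻¹ * (t - s)) • 1 := by
      rw [mul_smul, ← h4, smul_smul, inv_mul_cancel₀ (by simp [hs0, ha]), one_smul]
    have hz : (s * a⁻¹)⁻¹ * (t - s) = 0 := by
      rw [h6] at h5
      have := congrFun (congrFun h5 ⟨0, by omega⟩) ⟨0, by omega⟩
      simpa using this
    rw [hz, zero_smul] at h6
    have h7 : ∃ i, c i () ≠ 0 := by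
      by_contra! h
      apply hc
      ext i j
      exact h i
    obtain ⟨i, hi⟩ := h7
    apply hg0
    ext x j
    have := congrFun (congrFun h6 i) j
    simpa [Matrix.mul_apply, hi] using this

lemma main : ∀ l : List F, l.Pairwise (fun a b => a + b ≠ 0) → (∀ a ∈ l, a ≠ 0) →
    ∀ A : Matrix (Fin l.length) (Fin l.length) F,
    (l.length ≤ 1 ∨ ∀ t : F, A ≠ t • 1) → A.det = l.prod ^ 4 →
    Good (fun t => (l.map (fun b => t + b)).prod) A
  | [], _, _, A, _, _ => ⟨1, 1, by ext i; exact i.elim0, by simp, by simp⟩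
  | [b], _, _, A, _, hd => by
    have h1 : A = (b ^ 4) • 1 := by
      ext i j
      have hi : i = 0 := Subsingleton.elim (α := Fin 1) _ _
      have hj : j = 0 := Subsingleton.elim (α := Fin 1) _ _
      subst hi hj
      have : A.det = A 0 0 := det_fin_one A
      rw [← this, hd]
      simp
    have key : ∀ t : F, (t • 1 + b • (1 : Matrix (Fin 1) (Fin 1) F)).det = t + b := by
      intro t
      simp [det_fin_one]
    refine ⟨b • 1, b • 1, ?_, ?_, ?_⟩
    · rw [h1, smul_pow, one_pow, smul_mul_smul_comm, ← pow_add, mul_one]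
    · intro t; simpa using key t
    · intro t; simpa using key t
  | b :: b' :: l, hp, h0, A, hA, hd => by
    have hA' : ∀ t : F, A ≠ t • 1 := hA.resolve_left (by simp)
    have hb : b ≠ 0 := h0 b (by simp)
    rw [List.pairwise_cons] at hp
    have h0' : ∀ a ∈ b' :: l, a ≠ 0 := fun a ha => h0 a (List.mem_cons_of_mem _ ha)
    have hprod : (b' :: l).prod ≠ 0 := by
      rw [Ne, List.prod_eq_zero_iff]
      intro h; exact h0' 0 h rfl
    have hdet : A.det ≠ 0 := by
      rw [hd, List.prod_cons]
      exact pow_ne_zero _ (mul_ne_zero hb hprod)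
    have ih := main (b' :: l) hp.2 h0'
    have hu : IsUnit (((b' :: l).map (fun x => b + x)).prod) := by
      rw [isUnit_iff_ne_zero, Ne, List.prod_eq_zero_iff, List.mem_map]
      rintro ⟨x, hx, hx'⟩
      exact hp.1 x hx hx'
    obtain ⟨r, c, S, hS, hn⟩ := split (n := (b' :: l).length) A hA' (b ^ 4) (by simp [hb]) hdet
      (by simp)
    have hdS : S.det = (b' :: l).prod ^ 4 := by
      have h1 := hS.det_eq
      have : fromBlocks ((b ^ 4) • (1 : Matrix Unit Unit F)) r c (S + (b ^ 4)⁻¹ • (c * r)) =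
          fromBlocks 1 0 ((b ^ 4)⁻¹ • c) 1 * fromBlocks ((b ^ 4) • 1) r 0 S := by
        simp [fromBlocks_multiply, smul_smul, hb, add_comm]
      rw [this, det_mul, det_fromBlocks_zero₂₁, det_fromBlocks_zero₁₂, hd, List.prod_cons] at h1
      simp at h1
      rw [mul_pow] at h1
      have := mul_left_cancel₀ (pow_ne_zero 4 hb) (by simpa using h1)
      rw [← this]; simp
    obtain ⟨X, Y, rfl, hX, hY⟩ := ih S hn hdS
    have uX : IsUnit (b • 1 + X).det := by rw [hX]; exact hu
    have uY : IsUnit (b • 1 + Y).det := by rw [hY]; exact hu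
    refine Good.of_sim hS ⟨fromBlocks (b • (1 : Matrix Unit Unit F)) 0 ((b • 1 + X)⁻¹ * ((b ^ 2)⁻¹ • c)) X,
      fromBlocks (b • (1 : Matrix Unit Unit F)) (((b ^ 2)⁻¹ • r) * (b • 1 + Y)⁻¹) 0 Y, ?_, ?_, ?_⟩
    · have e1 : ((b • 1 + X)⁻¹ * ((b ^ 2)⁻¹ • c)) * (b • (1 : Matrix Unit Unit F)) + X * ((b • 1 + X)⁻¹ * ((b ^ 2)⁻¹ • c))
          = (b ^ 2)⁻¹ • c := by
        conv_rhs => rw [← Matrix.mul_nonsing_inv_cancel_left (b • 1 + X) ((b ^ 2)⁻¹ • c) uX]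
        rw [Matrix.add_mul]
        simp [smul_smul, mul_comm]
      have e2 : (b • (1 : Matrix Unit Unit F)) * (((b ^ 2)⁻¹ • r) * (b • 1 + Y)⁻¹) + (((b ^ 2)⁻¹ • r) * (b • 1 + Y)⁻¹) * Y
          = (b ^ 2)⁻¹ • r := by
        conv_rhs => rw [← Matrix.nonsing_inv_mul_cancel_right (b • 1 + Y) ((b ^ 2)⁻¹ • r) uY]
        rw [Matrix.mul_add]
        simp [smul_smul, mul_comm]
      rw [sq (fromBlocks _ _ _ _), sq (fromBlocks _ _ _ _), fromBlocks_multiply,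
        fromBlocks_multiply, e1, e2, fromBlocks_multiply]
      simp only [Matrix.zero_mul, Matrix.mul_zero, add_zero, zero_add, Matrix.smul_mul,
        Matrix.mul_smul, Matrix.one_mul, Matrix.mul_one, smul_smul, smul_zero, add_zero, zero_add, sq X, sq Y]
      congr 1
      · congr 1; ring
      · rw [show (b ^ 2)⁻¹ * (b * b) = 1 by field_simp, one_smul]
      · rw [show b * b * (b ^ 2)⁻¹ = 1 by field_simp, one_smul]
      · rw [add_comm]; congr 2; field_simp
    · intro t
      rw [← fromBlocks_one, fromBlocks_smul, fromBlocks_add]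
      simp only [smul_zero, zero_add, add_zero]
      rw [det_fromBlocks_zero₁₂, hX]
      simp
    · intro t
      rw [← fromBlocks_one, fromBlocks_smul, fromBlocks_add]
      simp only [smul_zero, zero_add, add_zero]
      rw [det_fromBlocks_zero₂₁, hY]
      simp

lemma exists_list [Infinite F] (m : ℕ) : ∃ l : List F, l.length = m ∧
    l.Pairwise (fun a b => a + b ≠ 0) ∧ ∀ a ∈ l, a ≠ 0 := by
  classical
  induction m with
  | zero => exact ⟨[], by simp⟩
  | succ m ih =>
    obtain ⟨l, h1, h2, h3⟩ := ih
    obtain ⟨t, ht⟩ := Infinite.exists_notMem_finset (insert 0 (l.map (fun a => -a)).toFinset)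
    simp at ht
    refine ⟨t :: l, by simp [h1], List.pairwise_cons.2 ⟨?_, h2⟩, ?_⟩
    · intro a ha h
      exact ht.2 (by rwa [← eq_neg_of_add_eq_zero_right h])
    · simp only [List.mem_cons]
      rintro a (rfl | ha)
      · exact ht.1
      · exact h3 a ha

lemma exists_list' [Infinite F] (k : ℕ) (hk : 2 ≤ k) : ∃ l : List F, l.length = k ∧
    l.Pairwise (fun a b => a + b ≠ 0) ∧ (∀ a ∈ l, a ≠ 0) ∧ l.prod = 1 := by
  classical
  obtain ⟨m, rfl⟩ := Nat.exists_eq_add_of_le' hk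
  obtain ⟨l, h1, h2, h3⟩ := exists_list (F := F) m
  have hq : l.prod ≠ 0 := by
    rw [Ne, List.prod_eq_zero_iff]
    intro h; exact h3 0 h rfl
  generalize hqq : l.prod = q at hq
  obtain ⟨t, ht⟩ := Infinite.exists_notMem_finset (insert 0 ((l.map (fun a => -a)).toFinset ∪
    (l.map (fun a => -(q * a)⁻¹)).toFinset ∪
    (Polynomial.C q * Polynomial.X ^ 2 + Polynomial.C 1).roots.toFinset))
  have hpoly : (Polynomial.C q * Polynomial.X ^ 2 + Polynomial.C 1 : Polynomial F) ≠ 0 := by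
    intro h
    have := congrArg (Polynomial.eval 0) h
    simp at this
  simp only [Finset.mem_insert, Finset.mem_union, List.mem_toFinset, List.mem_map,
    Multiset.mem_toFinset, Polynomial.mem_roots hpoly, not_or, not_exists, not_and,
    Polynomial.IsRoot.def] at ht
  obtain ⟨t0, ⟨t1, t2⟩, t3⟩ := ht
  simp at t3
  refine ⟨t :: (q * t)⁻¹ :: l, by simp [h1], ?_, ?_, ?_⟩
  · rw [List.pairwise_cons, List.pairwise_cons]
    refine ⟨?_, ?_, h2⟩
    · simp only [List.mem_cons]
      rintro a (rfl | ha) h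
      · apply t3
        field_simp at h
        linear_combination h
      · exact t1 a ha (by linear_combination -h)
    · intro a ha h
      have ha0 := h3 a ha
      apply t2 a ha
      field_simp at h ⊢
      linear_combination -h
  · simp only [List.mem_cons]
    rintro a (rfl | rfl | ha)
    · exact t0
    · simp [hq, t0]
    · exact h3 a ha
  · simp [hqq]
    field_simp

lemma nonscalar [Infinite F] (k : ℕ) (hk : 2 ≤ k) (A : Matrix (Fin k) (Fin k) F)
    (hA : ∀ t : F, A ≠ t • 1) (hd : A.det = 1) : Good1 A := by
  obtain ⟨l, rfl, h2, h3, h4⟩ := exists_list' (F := F) k hk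
  obtain ⟨X, Y, h, hX, hY⟩ := main l h2 h3 A (Or.inr hA) (by rw [hd, h4]; simp)
  refine ⟨X, Y, h, ?_, ?_⟩
  · simpa [h4] using hX 0
  · simpa [h4] using hY 0

lemma scalar_sq (k : ℕ) (u : F) (hu : u ^ k = 1) :
    Good1 ((u ^ 2) • (1 : Matrix (Fin k) (Fin k) F)) :=
  ⟨1, u • 1, by simp [smul_pow], by simp, by simp [det_smul, hu]⟩

lemma scalar_blocks (m : ℕ) (u : F) (x y : Fin m → Matrix (Fin 2) (Fin 2) F)
    (h : ∀ i, x i ^ 2 * y i ^ 2 = u • 1) (hx : ∏ i, (x i).det = 1) (hy : ∏ i, (y i).det = 1) :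
    Good1 (u • (1 : Matrix (Fin 2 × Fin m) (Fin 2 × Fin m) F)) := by
  refine ⟨blockDiagonal x, blockDiagonal y, ?_, ?_, ?_⟩
  · rw [← blockDiagonal_pow, ← blockDiagonal_pow, ← blockDiagonal_mul, ← blockDiagonal_one,
      ← blockDiagonal_smul]
    congr 1
    funext i
    simp [h]
  · rw [det_blockDiagonal, hx]
  · rw [det_blockDiagonal, hy]

lemma scalar (k : ℕ) (u : F) (hu : u ^ k = 1) :
    Good1 (u • (1 : Matrix (Fin k) (Fin k) F)) := by
  rcases Nat.even_or_odd' k with ⟨m, rfl | rfl⟩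
  · have hm : (u ^ m) ^ 2 = 1 := by rw [← pow_mul, mul_comm, hu]
    have h1 : ((-u) ^ m) ^ 2 = 1 := by rw [← pow_mul, mul_comm, Even.neg_pow (by simp), hu]
    by_cases h : (-u) ^ m = 1
    · refine Good1.of_sim (sim_reindex finProdFinEquiv.symm u)
        (scalar_blocks m u (fun _ => 1) (fun _ => !![0, u; 1, 0]) ?_ (by simp) ?_)
      · intro i
        ext a b
        fin_cases a <;> fin_cases b <;> simp [sq]
      · simp [h]
    have h' : (-u) ^ m = -1 := (sq_eq_sq_iff_eq_or_eq_neg.1 (h1.trans (one_pow 2).symm)).resolve_left h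
    rcases Nat.even_or_odd' m with ⟨j, rfl | rfl⟩
    · obtain ⟨i, rfl⟩ : ∃ i, j = i + 1 := by
        cases j with
        | zero => simp at h
        | succ i => exact ⟨i, rfl⟩
      obtain ⟨c, hc⟩ : ∃ c, c = u ^ (i + 1) := ⟨_, rfl⟩
      have hc2 : c * c = -1 := by
        rw [← h', Even.neg_pow (by simp), hc]; ring
      refine Good1.of_sim (sim_reindex finProdFinEquiv.symm u)
        (scalar_blocks (2 * i + 1 + 1) u (Fin.cons !![c, 0; 0, c] (Fin.cons !![1, 0; 0, -1] fun _ => 1))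
          (Fin.cons !![0, -u; 1, 0] fun _ => !![0, u; 1, 0]) ?_ ?_ ?_)
      · intro a
        refine Fin.cases ?_ (fun a => ?_) a
        · ext a b
          fin_cases a <;> fin_cases b <;> simp [sq, hc2]
        · refine Fin.cases ?_ (fun a => ?_) a
          · ext a b
            fin_cases a <;> fin_cases b <;> simp [sq]
          · ext a b
            fin_cases a <;> fin_cases b <;> simp [sq]
      · simp [Fin.prod_univ_succ, det_fin_two, hc2]
      · rw [Fin.prod_univ_succ]
        simp only [Fin.cons_zero, Fin.cons_succ, Finset.prod_const, det_fin_two, Finset.card_univ,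
          Fintype.card_fin]
        simp
        have h2 : (-u) ^ (2 * i + 1 + 1) = -1 := h'
        rw [pow_succ] at h2
        linear_combination -h2
    · have hu1 : u ^ (2 * j + 1) = 1 := by
        rw [Odd.neg_pow (by simp)] at h'
        exact neg_injective h'
      have := scalar_sq (2 * (2 * j + 1)) (u ^ (j + 1))
        (by rw [← pow_mul, mul_comm, pow_mul, hu, one_pow])
      rwa [← pow_mul, show (j + 1) * 2 = (2 * j + 1) + 1 by ring, pow_succ, hu1, one_mul] at this
  · have := scalar_sq (2 * m + 1) (u ^ (m + 1)) (by rw [← pow_mul, mul_comm, pow_mul, hu, one_pow])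
    rwa [← pow_mul, show (m + 1) * 2 = (2 * m + 1) + 1 by ring, pow_succ, hu, one_mul] at this

end TwoSq

/-- If `F` is an infinite field and `k ≥ 2`, then every element of `SL_k(F)` is a product of
two squares. -/
theorem sl_product_of_two_squares {F : Type*} [Field F] [Infinite F] (k : ℕ) (hk : 2 ≤ k) :
    ∀ g : Matrix.SpecialLinearGroup (Fin k) F,
      ∃ x y : Matrix.SpecialLinearGroup (Fin k) F, g = x ^ 2 * y ^ 2 := by
  intro g
  have key : TwoSq.Good1 (g : Matrix (Fin k) (Fin k) F) := by
    by_cases h : ∀ t : F, (g : Matrix (Fin k) (Fin k) F) ≠ t • 1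
    · exact TwoSq.nonscalar k hk _ h g.det_coe
    · push Not at h
      obtain ⟨t, ht⟩ := h
      have hd := g.det_coe
      rw [ht] at hd ⊢
      exact TwoSq.scalar k t (by simpa using hd)
  obtain ⟨X, Y, h, hX, hY⟩ := key
  obtain ⟨x, rfl⟩ : ∃ x : Matrix.SpecialLinearGroup (Fin k) F, (x : Matrix _ _ F) = X :=
    ⟨⟨X, hX⟩, rfl⟩
  obtain ⟨y, rfl⟩ : ∃ y : Matrix.SpecialLinearGroup (Fin k) F, (y : Matrix _ _ F) = Y :=
    ⟨⟨Y, hY⟩, rfl⟩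
  refine ⟨x, y, ?_⟩
  apply Subtype.ext
  rw [h]
  simp
end

section
/- Let F be a field, let n ≥ 1 be an integer, and let r ∈ F satisfy r^{2n} = 1. Then the scalar matrix r·I_{2n} lies in SL_{2n}(F) and is a product of two squares: there exist x, y ∈ SL_{2n}(F) with r·I_{2n} = x²y². Moreover, if (−r)^n = 1, then r·I_{2n} = x² for a single element x ∈ SL_{2n}(F). -/
noncomputable def blk {F : Type*} [Field F] (n : ℕ) (A : Fin n → Matrix (Fin 2) (Fin 2) F) :
    Matrix (Fin (2 * n)) (Fin (2 * n)) F :=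
  Matrix.reindexAlgEquiv F F finProdFinEquiv (Matrix.blockDiagonal A)

lemma blk_det {F : Type*} [Field F] (n : ℕ) (A : Fin n → Matrix (Fin 2) (Fin 2) F) :
    (blk n A).det = ∏ i, (A i).det := by
  simp [blk, Matrix.det_blockDiagonal]

lemma blk_sl {F : Type*} [Field F] (n : ℕ) (A : Fin n → Matrix (Fin 2) (Fin 2) F)
    (h : ∏ i, (A i).det = 1) : ∃ x : Matrix.SpecialLinearGroup (Fin (2 * n)) F,
      (x : Matrix (Fin (2 * n)) (Fin (2 * n)) F) = blk n A :=
  ⟨⟨blk n A, (blk_det n A).trans h⟩, rfl⟩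

lemma blk_mul {F : Type*} [Field F] (n : ℕ) (A B : Fin n → Matrix (Fin 2) (Fin 2) F) :
    blk n A * blk n B = blk n (fun i => A i * B i) := by
  unfold blk
  rw [← map_mul, Matrix.blockDiagonal_mul]

lemma blk_smul {F : Type*} [Field F] (n : ℕ) (r : F) :
    blk n (fun _ => r • (1 : Matrix (Fin 2) (Fin 2) F)) = r • 1 := by
  have : (fun _ : Fin n => r • (1 : Matrix (Fin 2) (Fin 2) F)) = r • 1 := rfl
  unfold blk
  rw [this, Matrix.blockDiagonal_smul, Matrix.blockDiagonal_one, map_smul, map_one]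

/-- Let `F` be a field, `n ≥ 1`, and `r ∈ F` with `r^(2n) = 1`. Then the scalar matrix `r·I_{2n}`
lies in `SL_{2n}(F)` and is a product of two squares there; moreover if `(-r)^n = 1` then it is a
single square. -/
theorem scalar_matrix_product_of_two_squares {F : Type*} [Field F] (n : ℕ) (hn : 1 ≤ n)
    (r : F) (hr : r ^ (2 * n) = 1) :
    (∃ x y : Matrix.SpecialLinearGroup (Fin (2 * n)) F,
      ((x ^ 2 * y ^ 2 : Matrix.SpecialLinearGroup (Fin (2 * n)) F) :
          Matrix (Fin (2 * n)) (Fin (2 * n)) F) =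
        r • (1 : Matrix (Fin (2 * n)) (Fin (2 * n)) F)) ∧
    ((-r) ^ n = 1 → ∃ x : Matrix.SpecialLinearGroup (Fin (2 * n)) F,
      ((x ^ 2 : Matrix.SpecialLinearGroup (Fin (2 * n)) F) :
          Matrix (Fin (2 * n)) (Fin (2 * n)) F) =
        r • (1 : Matrix (Fin (2 * n)) (Fin (2 * n)) F)) := by
  have key : (-r) ^ n = 1 → ∃ x : Matrix.SpecialLinearGroup (Fin (2 * n)) F,
      ((x ^ 2 : Matrix.SpecialLinearGroup (Fin (2 * n)) F) :
          Matrix (Fin (2 * n)) (Fin (2 * n)) F) =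
        r • (1 : Matrix (Fin (2 * n)) (Fin (2 * n)) F) := by
    intro h
    obtain ⟨x, hx⟩ := blk_sl n (fun _ => !![0, r; 1, 0])
      (by simpa [Matrix.det_fin_two] using h)
    refine ⟨x, ?_⟩
    · rw [Matrix.SpecialLinearGroup.coe_pow, pow_two, ← blk_smul, hx, blk_mul]
      congr 1
      funext i
      ext a b
      fin_cases a <;> fin_cases b <;> simp [Matrix.mul_apply, Fin.sum_univ_two]
  refine ⟨?_, key⟩
  have hs : ((-r) ^ n) ^ 2 = 1 := by
    rw [← pow_mul, mul_comm n 2, pow_mul, neg_sq, ← pow_mul, hr]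
  rcases (sq_eq_sq_iff_eq_or_eq_neg.mp (hs.trans (one_pow 2).symm)) with h | h
  · obtain ⟨x, hx⟩ := key h
    exact ⟨x, 1, by simpa using hx⟩
  · obtain ⟨m, rfl⟩ : ∃ m, n = m + 1 := ⟨n - 1, by omega⟩
    obtain ⟨x, hx⟩ := blk_sl (m + 1) (Fin.cons !![0, -1; 1, 0] (fun _ => (1 : Matrix (Fin 2) (Fin 2) F)))
      (by rw [Fin.prod_univ_succ]; simp [Matrix.det_fin_two])
    obtain ⟨y, hy⟩ := blk_sl (m + 1) (Fin.cons !![0, -r; 1, 0] (fun _ => !![0, r; 1, 0])) (by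
      rw [Fin.prod_univ_succ]
      simp [Matrix.det_fin_two]
      rw [pow_succ] at h
      linear_combination -h)
    refine ⟨x, y, ?_⟩
    · rw [Matrix.SpecialLinearGroup.coe_mul, Matrix.SpecialLinearGroup.coe_pow,
        Matrix.SpecialLinearGroup.coe_pow, pow_two, pow_two, ← blk_smul, hx, hy,
        blk_mul, blk_mul, blk_mul]
      congr 1
      funext i
      refine Fin.cases ?_ (fun j => ?_) i <;> ext a b <;>
      fin_cases a <;> fin_cases b <;> simp [Matrix.mul_apply, Fin.sum_univ_two]
end
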